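/- arXiv:math/0502118 — 8 statements merged into one kernel-verified Lean document; each statement's English description precedes it below -/
import Mathlib

section
/- Let k be a field of characteristic 0, n ≥ 2, M a finite-dimensional k-vector space and π : S_n → GL_k(M) a group homomorphism, where S_n = Equiv.Perm (Fin n). For s ∈ S_n and x ∈ End_k(M) write s·x = π(s) ∘ x ∘ π(s)⁻¹. Then the assignment t ↦ t 0 1 is a bijection between: (1) the set of families t assigning to each ordered pair (i, j) of distinct elements of Fin n an endomorphism t i j ∈ End_k(M), satisfying t i j = t j i, the equivariance s·(t i j) = t (s i) (s j) for all s ∈ S_n, and the infinitesimal braid relations [t i j, t i k + t k j] = 0 for pairwise distinct i, j, k and [t i j, t k l] = 0 for pairwise distinct i, j, k, l (brackets are commutators of endomorphisms); and (2) the set of endomorphisms τ ∈ End_k(M) such that s·τ = τ for every s ∈ S_n with s({0,1}) = {0,1}, and, when n ≥ 3, [τ, (swap 0 2)·τ + (swap 1 2)·τ] = 0, and, when n ≥ 4, [τ, (swap 0 2 · swap 1 3)·τ] = 0. -/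
/-- Conjugation of an endomorphism by the image of a group element under a
representation by linear automorphisms: `s · x = π(s) ∘ x ∘ π(s)⁻¹`. -/
def conjAct {k M G : Type*} [CommSemiring k] [AddCommMonoid M] [Module k M] [Group G]
    (π : G →* (Module.End k M)ˣ) (s : G) (x : Module.End k M) : Module.End k M :=
  ((π s : (Module.End k M)ˣ) : Module.End k M) * x *
    (((π s)⁻¹ : (Module.End k M)ˣ) : Module.End k M)

/-!
The symmetric group acts transitively on `m`-tuples of distinct points for every `m`. For `m = 2`,
an equivariant symmetric family `t` is therefore determined by `t a b`, and every `τ` fixed by the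
setwise stabilizer of `{a, b}` arises in this way. For `m = 3` and `m = 4`, each braid relation
holds for all tuples of distinct indices as soon as it holds for a single one, and at that tuple it
is a condition on `τ`.
-/

open Equiv (Perm swap)
open Function (extend FactorsThrough)

section Tuples

variable {α : Type*}

theorem exists_perm_map_eq_of_nodup {l l' : List α} (hl : l.Nodup) (hl' : l'.Nodup)
    (hlen : l.length = l'.length) : ∃ s : Perm α, l.map s = l' := by
  obtain ⟨s, hs⟩ := Equiv.Perm.exists_extending_pair l.get (l'.get ∘ Fin.cast hlen)
    (List.nodup_iff_injective_get.1 hl)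
    ((List.nodup_iff_injective_get.1 hl').comp (Fin.cast_injective hlen))
  refine ⟨s, List.ext_get (by simpa using hlen) fun m h _ => ?_⟩
  simpa using hs ⟨m, by simpa using h⟩

theorem exists_perm_apply_eq_pair {a b i j : α} (hab : a ≠ b) (hij : i ≠ j) :
    ∃ s : Perm α, s a = i ∧ s b = j := by
  simpa using exists_perm_map_eq_of_nodup (l := [a, b]) (l' := [i, j])
    (by simp [hab]) (by simp [hij]) rfl

end Tuples

section Families

variable {α A : Type*}

/-- Invariance of `τ` under the setwise stabilizer of the pair `{a, b}`. -/
def IsPairInvariant [SMul (Perm α) A] (a b : α) (τ : A) : Prop :=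
  ∀ s : Perm α, s '' ({a, b} : Set α) = {a, b} → s • τ = τ

theorem IsPairInvariant.factorsThrough [MulAction (Perm α) A] {a b : α} {τ : A}
    (hτ : IsPairInvariant a b τ) :
    FactorsThrough (fun s : Perm α => s • τ) (fun s : Perm α => (s a, s b)) := by
  intro s u hsu
  obtain ⟨ha, hb⟩ : s a = u a ∧ s b = u b := by simpa using hsu
  have hfix : (u⁻¹ * s) • τ = τ := hτ _ (by simp [Set.image_pair, ha, hb])
  rwa [mul_smul, inv_smul_eq_iff] at hfix

variable [Zero A]

/-- A family of elements of `A` indexed by unordered pairs of distinct points of `α`, equivariant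
under permutations. It is encoded as a symmetric function of ordered pairs with value `0` on the
diagonal. -/
structure IsEquivariantFamily [SMul (Perm α) A] (t : α → α → A) : Prop where
  diag (i : α) : t i i = 0
  symm (i j : α) : i ≠ j → t i j = t j i
  smul_apply (s : Perm α) (i j : α) : i ≠ j → s • t i j = t (s i) (s j)

/-- The equivariant family generated by `τ` placed at the pair `(a, b)`: its value at `(s a, s b)`
is `s • τ`. It is meant for `a ≠ b` and `IsPairInvariant a b τ`; for other `τ` the value at `(i, j)`
depends on a choice of `s`. Pairs not of the form `(s a, s b)` are sent to `0`. -/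
noncomputable def spread [SMul (Perm α) A] (a b : α) (τ : A) (i j : α) : A :=
  extend (fun s : Perm α => (s a, s b)) (fun s => s • τ) 0 (i, j)

variable [MulAction (Perm α) A] {a b : α} {τ : A} {t t' : α → α → A}

namespace IsPairInvariant

theorem spread_apply (hτ : IsPairInvariant a b τ) (s : Perm α) :
    spread a b τ (s a) (s b) = s • τ :=
  hτ.factorsThrough.extend_apply 0 s

theorem spread_apply_swap (hτ : IsPairInvariant a b τ) (s : Perm α) :
    spread a b τ (s b) (s a) = s • τ := by
  classical
  have hswap : swap a b • τ = τ := hτ _ (by simp [Set.image_pair, Set.pair_comm])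
  simpa [mul_smul, hswap] using hτ.spread_apply (s * swap a b)

theorem isEquivariantFamily_spread (hτ : IsPairInvariant a b τ) (hab : a ≠ b) :
    IsEquivariantFamily (spread a b τ) where
  diag i := by
    refine Function.extend_apply' _ _ _ ?_
    rintro ⟨s, hs⟩
    obtain ⟨ha, hb⟩ := Prod.mk.inj hs
    exact hab (s.injective (ha.trans hb.symm))
  symm i j hij := by
    obtain ⟨s, rfl, rfl⟩ := exists_perm_apply_eq_pair hab hij
    rw [hτ.spread_apply, hτ.spread_apply_swap]
  smul_apply s i j hij := by
    obtain ⟨u, rfl, rfl⟩ := exists_perm_apply_eq_pair hab hij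
    rw [hτ.spread_apply, ← mul_smul, ← hτ.spread_apply, Perm.mul_apply, Perm.mul_apply]

end IsPairInvariant

namespace IsEquivariantFamily

theorem isPairInvariant (ht : IsEquivariantFamily t) (hab : a ≠ b) :
    IsPairInvariant a b (t a b) := by
  intro s hs
  rw [ht.smul_apply s a b hab]
  rw [Set.image_pair, Set.pair_eq_pair_iff] at hs
  obtain ⟨ha, hb⟩ | ⟨ha, hb⟩ := hs
  · rw [ha, hb]
  · rw [ha, hb, ht.symm b a hab.symm]

theorem eq_of_apply_eq (ht : IsEquivariantFamily t) (ht' : IsEquivariantFamily t') (hab : a ≠ b)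
    (h : t a b = t' a b) : t = t' := by
  funext i j
  obtain rfl | hij := eq_or_ne i j
  · rw [ht.diag, ht'.diag]
  · obtain ⟨s, rfl, rfl⟩ := exists_perm_apply_eq_pair hab hij
    rw [← ht.smul_apply s a b hab, ← ht'.smul_apply s a b hab, h]

end IsEquivariantFamily

theorem bijOn_apply_isEquivariantFamily (hab : a ≠ b) :
    Set.BijOn (fun t : α → α → A => t a b) {t | IsEquivariantFamily t}
      {τ | IsPairInvariant a b τ} := by
  refine ⟨fun t ht => ht.isPairInvariant hab, fun t ht t' ht' => ht.eq_of_apply_eq ht' hab,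
    fun τ hτ => ⟨spread a b τ, hτ.isEquivariantFamily_spread hab, ?_⟩⟩
  simpa using hτ.spread_apply 1

end Families

section BraidRelations

variable {L : Type*} [AddCommMonoid L] [Bracket L L]

namespace IsEquivariantFamily

variable {α : Type*} [DistribMulAction (Perm α) L] {a b c d : α} {t : α → α → L}

theorem forall_lie_add_eq_zero_iff [DecidableEq α] (ht : IsEquivariantFamily t)
    (hlie : ∀ (s : Perm α) (x y : L), s • ⁅x, y⁆ = ⁅s • x, s • y⁆)
    (hab : a ≠ b) (hac : a ≠ c) (hbc : b ≠ c) :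
    (∀ i j l : α, i ≠ j → i ≠ l → j ≠ l → ⁅t i j, t i l + t l j⁆ = 0) ↔
      ⁅t a b, swap a c • t a b + swap b c • t a b⁆ = 0 := by
  have hsmul_cb : swap a c • t a b = t c b := by
    rw [ht.smul_apply _ a b hab, Equiv.swap_apply_left,
      Equiv.swap_apply_of_ne_of_ne hab.symm hbc]
  have hsmul_ac : swap b c • t a b = t a c := by
    rw [ht.smul_apply _ a b hab, Equiv.swap_apply_left, Equiv.swap_apply_of_ne_of_ne hab hac]
  rw [hsmul_cb, hsmul_ac, add_comm]
  refine ⟨fun h => h a b c hab hac hbc, fun h i j l hij hil hjl => ?_⟩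
  obtain ⟨s, rfl, rfl, rfl⟩ : ∃ s : Perm α, s a = i ∧ s b = j ∧ s c = l := by
    simpa using exists_perm_map_eq_of_nodup (l := [a, b, c]) (l' := [i, j, l])
      (by simp [*]) (by simp [*]) rfl
  rw [← ht.smul_apply s a b hab, ← ht.smul_apply s a c hac, ← ht.smul_apply s c b hbc.symm,
    ← smul_add, ← hlie, h, smul_zero]

theorem forall_lie_eq_zero_iff [DecidableEq α] (ht : IsEquivariantFamily t)
    (hlie : ∀ (s : Perm α) (x y : L), s • ⁅x, y⁆ = ⁅s • x, s • y⁆)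
    (hab : a ≠ b) (hac : a ≠ c) (had : a ≠ d) (hbc : b ≠ c) (hbd : b ≠ d) (hcd : c ≠ d) :
    (∀ i j l r : α, i ≠ j → i ≠ l → i ≠ r → j ≠ l → j ≠ r → l ≠ r → ⁅t i j, t l r⁆ = 0) ↔
      ⁅t a b, (swap a c * swap b d) • t a b⁆ = 0 := by
  have hsmul_cd : (swap a c * swap b d) • t a b = t c d := by
    rw [ht.smul_apply _ a b hab, Perm.mul_apply, Perm.mul_apply, Equiv.swap_apply_left,
      Equiv.swap_apply_of_ne_of_ne hab had, Equiv.swap_apply_left,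
      Equiv.swap_apply_of_ne_of_ne had.symm hcd.symm]
  rw [hsmul_cd]
  refine ⟨fun h => h a b c d hab hac had hbc hbd hcd, fun h i j l r hij hil hir hjl hjr hlr => ?_⟩
  obtain ⟨s, rfl, rfl, rfl, rfl⟩ : ∃ s : Perm α, s a = i ∧ s b = j ∧ s c = l ∧ s d = r := by
    simpa using exists_perm_map_eq_of_nodup (l := [a, b, c, d]) (l' := [i, j, l, r])
      (by simp [*]) (by simp [*]) rfl
  rw [← ht.smul_apply s a b hab, ← ht.smul_apply s c d hcd, ← hlie, h, smul_zero]

variable {n : ℕ} [DistribMulAction (Perm (Fin n)) L] {t : Fin n → Fin n → L}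

theorem forall_lie_add_eq_zero_iff_fin (hn : 1 < n) (ht : IsEquivariantFamily t)
    (hlie : ∀ (s : Perm (Fin n)) (x y : L), s • ⁅x, y⁆ = ⁅s • x, s • y⁆) :
    (∀ i j l : Fin n, i ≠ j → i ≠ l → j ≠ l → ⁅t i j, t i l + t l j⁆ = 0) ↔
      ∀ h2 : 2 < n,
        ⁅t ⟨0, by omega⟩ ⟨1, hn⟩,
          swap (⟨0, by omega⟩ : Fin n) ⟨2, h2⟩ • t ⟨0, by omega⟩ ⟨1, hn⟩
            + swap (⟨1, hn⟩ : Fin n) ⟨2, h2⟩ • t ⟨0, by omega⟩ ⟨1, hn⟩⁆ = 0 := by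
  have hiff (h2 : 2 < n) := ht.forall_lie_add_eq_zero_iff hlie
    (a := ⟨0, by omega⟩) (b := ⟨1, hn⟩) (c := ⟨2, h2⟩)
    (Fin.ne_of_val_ne (by simp)) (Fin.ne_of_val_ne (by simp)) (Fin.ne_of_val_ne (by simp))
  exact ⟨fun h h2 => (hiff h2).1 h,
    fun h i j l hij hil hjl => (hiff (by omega)).2 (h (by omega)) i j l hij hil hjl⟩

theorem forall_lie_eq_zero_iff_fin (hn : 1 < n) (ht : IsEquivariantFamily t)
    (hlie : ∀ (s : Perm (Fin n)) (x y : L), s • ⁅x, y⁆ = ⁅s • x, s • y⁆) :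
    (∀ i j l r : Fin n, i ≠ j → i ≠ l → i ≠ r → j ≠ l → j ≠ r → l ≠ r → ⁅t i j, t l r⁆ = 0) ↔
      ∀ h3 : 3 < n,
        ⁅t ⟨0, by omega⟩ ⟨1, hn⟩,
          (swap (⟨0, by omega⟩ : Fin n) ⟨2, by omega⟩ * swap ⟨1, hn⟩ ⟨3, h3⟩) •
            t ⟨0, by omega⟩ ⟨1, hn⟩⁆ = 0 := by
  have hiff (h3 : 3 < n) := ht.forall_lie_eq_zero_iff hlie
    (a := ⟨0, by omega⟩) (b := ⟨1, hn⟩) (c := ⟨2, by omega⟩) (d := ⟨3, h3⟩)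
    (Fin.ne_of_val_ne (by simp)) (Fin.ne_of_val_ne (by simp)) (Fin.ne_of_val_ne (by simp))
    (Fin.ne_of_val_ne (by simp)) (Fin.ne_of_val_ne (by simp)) (Fin.ne_of_val_ne (by simp))
  exact ⟨fun h h3 => (hiff h3).1 h, fun h i j l r hij hil hir hjl hjr hlr =>
    (hiff (by omega)).2 (h (by omega)) i j l r hij hil hir hjl hjr hlr⟩

end IsEquivariantFamily

theorem variety_of_braided_extensions_bijection_general {n : ℕ} (hn : 1 < n)
    [DistribMulAction (Perm (Fin n)) L]
    (hlie : ∀ (s : Perm (Fin n)) (x y : L), s • ⁅x, y⁆ = ⁅s • x, s • y⁆) :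
    Set.BijOn
      (fun t : Fin n → Fin n → L => t ⟨0, by omega⟩ ⟨1, hn⟩)
      {t : Fin n → Fin n → L |
        (∀ i : Fin n, t i i = 0) ∧
        (∀ i j : Fin n, i ≠ j → t i j = t j i) ∧
        (∀ (s : Perm (Fin n)) (i j : Fin n), i ≠ j → s • t i j = t (s i) (s j)) ∧
        (∀ i j l : Fin n, i ≠ j → i ≠ l → j ≠ l → ⁅t i j, t i l + t l j⁆ = 0) ∧
        (∀ i j l r : Fin n, i ≠ j → i ≠ l → i ≠ r → j ≠ l → j ≠ r → l ≠ r →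
          ⁅t i j, t l r⁆ = 0)}
      {τ : L |
        (∀ s : Perm (Fin n),
          (⇑s '' ({⟨0, by omega⟩, ⟨1, hn⟩} : Set (Fin n))
              = ({⟨0, by omega⟩, ⟨1, hn⟩} : Set (Fin n))) →
          s • τ = τ) ∧
        (∀ h2 : 2 < n,
          ⁅τ, swap (⟨0, by omega⟩ : Fin n) ⟨2, h2⟩ • τ
            + swap (⟨1, hn⟩ : Fin n) ⟨2, h2⟩ • τ⁆ = 0) ∧
        (∀ h3 : 3 < n,
          ⁅τ, (swap (⟨0, by omega⟩ : Fin n) ⟨2, by omega⟩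
            * swap ⟨1, hn⟩ ⟨3, h3⟩) • τ⁆ = 0)} := by
  have h01 : (⟨0, by omega⟩ : Fin n) ≠ ⟨1, hn⟩ := by simp
  have hbij := bijOn_apply_isEquivariantFamily (A := L) h01
  refine ⟨?_, hbij.injOn.mono ?_, ?_⟩
  · rintro t ⟨hdiag, hsymm, hsmul, hthree, hfour⟩
    have ht : IsEquivariantFamily t := ⟨hdiag, hsymm, hsmul⟩
    exact ⟨hbij.mapsTo ht, (ht.forall_lie_add_eq_zero_iff_fin hn hlie).1 hthree,
      (ht.forall_lie_eq_zero_iff_fin hn hlie).1 hfour⟩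
  · rintro t ⟨hdiag, hsymm, hsmul, -⟩
    exact ⟨hdiag, hsymm, hsmul⟩
  · rintro τ ⟨hinv, hthree, hfour⟩
    obtain ⟨t, ht, rfl⟩ := hbij.surjOn hinv
    exact ⟨t, ⟨ht.diag, ht.symm, ht.smul_apply,
      (ht.forall_lie_add_eq_zero_iff_fin hn hlie).2 hthree,
      (ht.forall_lie_eq_zero_iff_fin hn hlie).2 hfour⟩, rfl⟩

end BraidRelations

theorem smul_lie_of_mulSemiringAction {G A : Type*} [Monoid G] [Ring A] [MulSemiringAction G A]
    (g : G) (x y : A) : g • ⁅x, y⁆ = ⁅g • x, g • y⁆ := by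
  simp only [Ring.lie_def, smul_sub, smul_mul']

/-- The conjugation action `conjAct π` of `G` on `Module.End k M`, by ring automorphisms. -/
abbrev conjMulSemiringAction {k M G : Type*} [CommSemiring k] [AddCommMonoid M] [Module k M]
    [Group G] (π : G →* (Module.End k M)ˣ) : MulSemiringAction G (Module.End k M) :=
  MulSemiringAction.compHom _ (ConjAct.toConjAct.toMonoidHom.comp π)

/-- The variety of braided extensions: the map `t ↦ t₀₁` is a bijection between
representations of the infinitesimal braid algebra `𝔅ₙ` restricting to the
`S_n`-module `M` (families `t i j` of endomorphisms, symmetric, `S_n`-equivariant,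
vanishing on the diagonal, satisfying the infinitesimal braid relations) and
endomorphisms `τ` invariant under `S_{2,n-2}` with `C₁(τ) = C₂(τ) = 0`. -/
theorem variety_of_braided_extensions_bijection
    (k : Type*) [Field k] [CharZero k]
    (n : ℕ) (hn : 2 ≤ n)
    (M : Type*) [AddCommGroup M] [Module k M] [FiniteDimensional k M]
    (π : Equiv.Perm (Fin n) →* (Module.End k M)ˣ) :
    Set.BijOn
      (fun t : Fin n → Fin n → Module.End k M => t ⟨0, by omega⟩ ⟨1, by omega⟩)
      {t : Fin n → Fin n → Module.End k M |
        (∀ i : Fin n, t i i = 0) ∧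
        (∀ i j : Fin n, i ≠ j → t i j = t j i) ∧
        (∀ (s : Equiv.Perm (Fin n)) (i j : Fin n), i ≠ j →
          conjAct π s (t i j) = t (s i) (s j)) ∧
        (∀ i j l : Fin n, i ≠ j → i ≠ l → j ≠ l → ⁅t i j, t i l + t l j⁆ = 0) ∧
        (∀ i j l r : Fin n, i ≠ j → i ≠ l → i ≠ r → j ≠ l → j ≠ r → l ≠ r →
          ⁅t i j, t l r⁆ = 0)}
      {τ : Module.End k M |
        (∀ s : Equiv.Perm (Fin n),
          (⇑s '' ({⟨0, by omega⟩, ⟨1, by omega⟩} : Set (Fin n))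
              = ({⟨0, by omega⟩, ⟨1, by omega⟩} : Set (Fin n))) →
          conjAct π s τ = τ) ∧
        (∀ h3 : 3 ≤ n,
          ⁅τ, conjAct π (Equiv.swap ⟨0, by omega⟩ ⟨2, by omega⟩) τ
            + conjAct π (Equiv.swap ⟨1, by omega⟩ ⟨2, by omega⟩) τ⁆ = 0) ∧
        (∀ h4 : 4 ≤ n,
          ⁅τ, conjAct π (Equiv.swap ⟨0, by omega⟩ ⟨2, by omega⟩
            * Equiv.swap ⟨1, by omega⟩ ⟨3, by omega⟩) τ⁆ = 0)} := by
  let _ := conjMulSemiringAction π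
  exact variety_of_braided_extensions_bijection_general hn smul_lie_of_mulSemiringAction
end

section
/- Let n ≥ 2 and let B_n be the braid group on n strands, the group presented by generators σ_1, …, σ_{n−1} subject to the relations σ_i σ_{i+1} σ_i = σ_{i+1} σ_i σ_{i+1} for 1 ≤ i ≤ n−2 and σ_i σ_j = σ_j σ_i for |i−j| ≥ 2 (realized as a PresentedGroup). Let k be a field of characteristic 0 and let B and C be nonzero finite-dimensional k-linear representations of B_n on which every σ_i² acts as the identity (so that B and C factor through the symmetric group S_n). Assume that every k-linear map f : C → B which commutes with the actions of σ_1 and of σ_3, σ_4, …, σ_{n−1} is zero (i.e. Hom over the Young subgroup S_2 × S_{n−2} from C to B vanishes). Then every extension of B_n-representations of C by B splits: for every finite-dimensional k-linear representation E of B_n and every B_n-invariant subspace W of E such that W is B_n-equivariantly isomorphic to B and the quotient representation E/W is B_n-equivariantly isomorphic to C, there exists a B_n-invariant complement of W in E. (Ext_{B_n}(C, B) = 0.) -/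
/-- The braid relations on `m` generators `σ_1, …, σ_m` (indexed by `Fin m`):
`σ_i σ_{i+1} σ_i = σ_{i+1} σ_i σ_{i+1}` and `σ_i σ_j = σ_j σ_i` for `|i - j| ≥ 2`. -/
def braidRels (m : ℕ) : Set (FreeGroup (Fin m)) :=
  {r | (∃ i j : Fin m, (i : ℕ) + 1 = (j : ℕ) ∧
          r = FreeGroup.of i * FreeGroup.of j * FreeGroup.of i *
              (FreeGroup.of j * FreeGroup.of i * FreeGroup.of j)⁻¹) ∨
       (∃ i j : Fin m, (i : ℕ) + 2 ≤ (j : ℕ) ∧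
          r = FreeGroup.of i * FreeGroup.of j * (FreeGroup.of j * FreeGroup.of i)⁻¹)}

/-- The braid group on `n` strands, presented by `σ_1, …, σ_{n-1}` and the braid
and locality relations. -/
abbrev BraidGroup (n : ℕ) := PresentedGroup (braidRels (n - 1))

/-!
Since `σ_1²` acts trivially on `B` and on `C`, the operator `σ_1² - 1` on `E` kills `W` and maps
into `W`, so it factors through a linear map `C → B`. As `σ_1²` commutes with `σ_1, σ_3, …,
σ_{n-1}`, this map is equivariant for them and therefore vanishes: `σ_1²` acts trivially on `E`,
and so do its conjugates `σ_i²`. The action on `E` then has finite image, of order invertible in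
`k`, and Maschke's theorem supplies the complement.

The image is built up one generator at a time. If `H` is generated by the first `m` involutions
`s_0, …, s_{m-1}` of a sequence satisfying the braid relations, then `s_0, …, s_m` permute the
`m + 2` cosets `s_j s_{j+1} ⋯ s_m H`, `0 ≤ j ≤ m + 1`, through adjacent transpositions, so the next
group contains `H` with index at most `m + 2`. Hence the order of the image is a product of
integers `≤ n`, which is nonzero in `k` as soon as `n!` is.

The generator `σ_i` is `PresentedGroup.of` of the index `i - 1`.
-/

open scoped Nat

section Extensions

variable {R B C E : Type*} [Ring R] [AddCommGroup B] [Module R B] [AddCommGroup C] [Module R C]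
  [AddCommGroup E] [Module R E] {i : B →ₗ[R] E} {p : E →ₗ[R] C}

theorem exists_comp_comp_eq_of_exact (hi : Function.Injective i) (hp : Function.Surjective p)
    (hip : Function.Exact i p) {N : Module.End R E} (hNi : N ∘ₗ i = 0) (hpN : p ∘ₗ N = 0) :
    ∃ f : C →ₗ[R] B, i ∘ₗ f ∘ₗ p = N := by
  have hrange (x : E) : N x ∈ LinearMap.range i := (hip (N x)).1 (LinearMap.congr_fun hpN x)
  have hker : LinearMap.ker p ≤ LinearMap.ker N := by
    rw [LinearMap.exact_iff.1 hip, LinearMap.range_le_ker_iff, hNi]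
  let toB : E →ₗ[R] B := (LinearEquiv.ofInjective i hi).symm ∘ₗ N.codRestrict _ hrange
  have hi_toB (x : E) : i (toB x) = N x :=
    LinearEquiv.ofInjective_symm_apply (f := i) (h := hi) ⟨N x, hrange x⟩
  have hker_toB : LinearMap.ker p ≤ LinearMap.ker toB := fun x hx ↦
    hi <| by rw [hi_toB, hker hx, map_zero]
  refine ⟨(LinearMap.ker p).liftQ toB hker_toB ∘ₗ (p.quotKerEquivOfSurjective hp).symm, ?_⟩
  ext x
  have hx : (p.quotKerEquivOfSurjective hp).symm (p x) = Submodule.Quotient.mk x :=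
    (LinearEquiv.symm_apply_eq _).2 rfl
  simp [hx, hi_toB]

theorem apply_eq_one_of_exact_of_commute {G : Type*} [Monoid G] {ρB : Representation R G B}
    {ρC : Representation R G C} {ρE : Representation R G E} (hi : Function.Injective i)
    (hp : Function.Surjective p) (hip : Function.Exact i p)
    (hρi : ∀ g, ρE g ∘ₗ i = i ∘ₗ ρB g) (hρp : ∀ g, p ∘ₗ ρE g = ρC g ∘ₗ p)
    {S : Set G} {z : G} (hz : ∀ g ∈ S, Commute g z) (hBz : ρB z = 1) (hCz : ρC z = 1)
    (hhom : ∀ f : C →ₗ[R] B, (∀ g ∈ S, ρB g ∘ₗ f = f ∘ₗ ρC g) → f = 0) :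
    ρE z = 1 := by
  obtain ⟨f, hf⟩ := exists_comp_comp_eq_of_exact hi hp hip (N := ρE z - 1)
    (by rw [LinearMap.sub_comp, hρi, hBz]; exact sub_self i)
    (by rw [LinearMap.comp_sub, hρp, hCz]; exact sub_self p)
  have hf_zero : f = 0 := hhom f fun g hg ↦ by
    rw [← LinearMap.cancel_left hi, ← LinearMap.cancel_right hp]
    calc (i ∘ₗ ρB g ∘ₗ f) ∘ₗ p = ρE g * (i ∘ₗ f ∘ₗ p) := by
          rw [← LinearMap.comp_assoc, ← hρi]; rfl
      _ = (i ∘ₗ f ∘ₗ p) * ρE g := by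
          rw [hf, mul_sub, sub_mul, mul_one, one_mul, ← map_mul, ← map_mul, (hz g hg).eq]
      _ = (i ∘ₗ f ∘ₗ ρC g) ∘ₗ p := by
          simp only [Module.End.mul_eq_comp, LinearMap.comp_assoc, hρp]
  rw [← sub_eq_zero, ← hf, hf_zero, LinearMap.zero_comp, LinearMap.comp_zero]

theorem apply_eq_one_of_quotient_of_commute {G : Type*} [Monoid G] {ρB : Representation R G B}
    {ρC : Representation R G C} {ρE : Representation R G E} {W : Submodule R E}
    (hW : ∀ g, ∀ x ∈ W, ρE g x ∈ W) (eB : W ≃ₗ[R] B) (eC : (E ⧸ W) ≃ₗ[R] C)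
    (heB : ∀ g, ∀ x : W, eB ⟨ρE g x, hW g x x.2⟩ = ρB g (eB x))
    (heC : ∀ g x, eC (Submodule.Quotient.mk (ρE g x)) = ρC g (eC (Submodule.Quotient.mk x)))
    {S : Set G} {z : G} (hz : ∀ g ∈ S, Commute g z) (hBz : ρB z = 1) (hCz : ρC z = 1)
    (hhom : ∀ f : C →ₗ[R] B, (∀ g ∈ S, ρB g ∘ₗ f = f ∘ₗ ρC g) → f = 0) :
    ρE z = 1 := by
  refine apply_eq_one_of_exact_of_commute (i := W.subtype ∘ₗ eB.symm) (p := eC ∘ₗ W.mkQ)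
    (W.subtype_injective.comp eB.symm.injective) (eC.surjective.comp W.mkQ_surjective)
    (fun x ↦ ?_) (fun g ↦ ?_) (fun g ↦ ?_) hz hBz hCz hhom
  · simp
  · ext b
    obtain ⟨x, rfl⟩ := eB.surjective b
    simp [← heB]
  · ext x
    exact heC g x

end Extensions

theorem exists_isCompl_of_card_range_ne_zero {k E G : Type*} [Field k] [AddCommGroup E] [Module k E]
    [Group G] (f : G →* (E →ₗ[k] E)ˣ) (hf : (Nat.card f.range : k) ≠ 0) (W : Submodule k E)
    (hW : ∀ g, ∀ x ∈ W, (f g : E →ₗ[k] E) x ∈ W) :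
    ∃ W' : Submodule k E, IsCompl W W' ∧ ∀ g, ∀ x ∈ W', (f g : E →ₗ[k] E) x ∈ W' := by
  have : NeZero (Nat.card f.range : k) := ⟨hf⟩
  have : Finite f.range := Nat.finite_of_card_ne_zero fun h ↦ hf (by rw [h, Nat.cast_zero])
  let ρ : Representation k f.range E := (Units.coeHom (E →ₗ[k] E)).comp f.range.subtype
  let w : Subrepresentation ρ := ⟨W, by rintro ⟨_, g, rfl⟩ x hx; exact hW g x hx⟩
  obtain ⟨w', hw'⟩ := exists_isCompl w
  refine ⟨w'.toSubmodule, ?_, fun g _ hx ↦ w'.apply_mem_toSubmodule ⟨f g, g, rfl⟩ hx⟩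
  exact .of_eq (congrArg Subrepresentation.toSubmodule hw'.inf_eq_bot)
    (congrArg Subrepresentation.toSubmodule hw'.sup_eq_top)

open scoped Pointwise in
theorem relIndex_stabilizer_closure_dvd_factorial {G α : Type*} [Group G] [MulAction G α]
    {S : Set G} {X : Set α} (hX : X.Finite) (hS : ∀ g ∈ S, ∀ x ∈ X, g • x ∈ X) {a : α}
    (ha : a ∈ X) :
    (MulAction.stabilizer G a).relIndex (Subgroup.closure S) ∣ X.ncard ! := by
  have hclosure : Subgroup.closure S ≤ MulAction.stabilizer G X := by
    rw [Subgroup.closure_le]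
    intro g hg
    rw [SetLike.mem_coe, MulAction.mem_stabilizer_set_iff_smul_set_subset hX]
    exact Set.image_subset_iff.2 (hS g hg)
  have horbit : MulAction.orbit (Subgroup.closure S) a ⊆ X := by
    rintro _ ⟨⟨g, hg⟩, rfl⟩
    exact (MulAction.mem_stabilizer_set.1 (hclosure hg) a).2 ha
  have hrelIndex : (MulAction.stabilizer G a).relIndex (Subgroup.closure S) =
      (MulAction.orbit (Subgroup.closure S) a).ncard := MulAction.index_stabilizer ..
  rw [hrelIndex]
  exact Nat.dvd_factorial ((Set.ncard_pos (hX.subset horbit)).2 (MulAction.nonempty_orbit a))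
    (Set.ncard_le_ncard horbit hX)

theorem cast_superFactorial_ne_zero {R : Type*} [Semiring R] [NoZeroDivisors R] [Nontrivial R]
    {n : ℕ} (hn : (n ! : R) ≠ 0) : ((Nat.superFactorial n : ℕ) : R) ≠ 0 := by
  induction n with
  | zero => simp
  | succ n ih =>
    rw [Nat.superFactorial_succ, Nat.cast_mul]
    refine mul_ne_zero hn (ih fun h ↦ hn ?_)
    rw [Nat.factorial_succ, Nat.cast_mul, h, mul_zero]

/-- The first `m` terms of `s` satisfy the Coxeter relations of type `A_m`, i.e. those of the
adjacent transpositions in the symmetric group on `m + 1` letters. Indexing by `ℕ` rather than by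
`Fin m` allows induction on `m`; the terms from `s m` on are unconstrained. -/
structure IsCoxeterSeqA {G : Type*} [Group G] (s : ℕ → G) (m : ℕ) : Prop where
  sq : ∀ i < m, s i ^ 2 = 1
  braid : ∀ i, i + 1 < m → s i * s (i + 1) * s i = s (i + 1) * s i * s (i + 1)
  commute : ∀ i j, i + 2 ≤ j → j < m → Commute (s i) (s j)

namespace IsCoxeterSeqA

variable {G α : Type*} [Group G] [MulAction G α] {s : ℕ → G} {m : ℕ} {y : ℕ → α}

theorem of_succ (hs : IsCoxeterSeqA s (m + 1)) : IsCoxeterSeqA s m where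
  sq i hi := hs.sq i (by lia)
  braid i hi := hs.braid i (by lia)
  commute i j hij hj := hs.commute i j hij (by lia)

theorem smul_eq_self_of_lt (hs : IsCoxeterSeqA s (m + 1)) (hy : ∀ j ≤ m, y j = s j • y (j + 1))
    (hfix : ∀ i < m, s i • y (m + 1) = y (m + 1)) {i j : ℕ} (hij : i + 1 < j) (hj : j ≤ m + 1) :
    s i • y j = y j := by
  induction hj using Nat.decreasingInduction with
  | self => exact hfix i (by lia)
  | of_succ j hj ih =>
    rw [hy j (by lia), smul_smul, (hs.commute i j hij hj).eq, ← smul_smul, ih (by lia)]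

theorem succ_smul_eq_self_of_le (hs : IsCoxeterSeqA s (m + 1)) (hy : ∀ j ≤ m, y j = s j • y (j + 1))
    (hfix : ∀ i < m, s i • y (m + 1) = y (m + 1)) {i j : ℕ} (hji : j ≤ i) (hi : i < m) :
    s (i + 1) • y j = y j := by
  induction hji using Nat.decreasingInduction with
  | self =>
    calc s (i + 1) • y i = (s (i + 1) * s i * s (i + 1)) • y (i + 2) := by
          rw [hy i (by lia), hy (i + 1) hi, smul_smul, smul_smul, mul_assoc]
      _ = s i • s (i + 1) • s i • y (i + 2) := by
          rw [← hs.braid i (by lia), mul_smul, mul_smul]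
      _ = y i := by
          rw [hs.smul_eq_self_of_lt hy hfix (by lia) (by lia), ← hy (i + 1) hi, ← hy i (by lia)]
  | of_succ j _ ih =>
    rw [hy j (by lia), smul_smul, ← (hs.commute j (i + 1) (by lia) (by lia)).eq, ← smul_smul, ih]

theorem smul_eq_swap (hs : IsCoxeterSeqA s (m + 1)) (hy : ∀ j ≤ m, y j = s j • y (j + 1))
    (hfix : ∀ i < m, s i • y (m + 1) = y (m + 1)) {i j : ℕ} (hi : i ≤ m) (hj : j ≤ m + 1) :
    s i • y j = y (Equiv.swap i (i + 1) j) := by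
  obtain ⟨i, rfl, hji⟩ | rfl | rfl | hij :
      (∃ i', i = i' + 1 ∧ j ≤ i') ∨ j = i ∨ j = i + 1 ∨ i + 1 < j := by
    cases i with
    | zero => lia
    | succ i => simp only [Nat.add_right_cancel_iff, exists_eq_left']; lia
  · rw [Equiv.swap_apply_of_ne_of_ne (by lia) (by lia), hs.succ_smul_eq_self_of_le hy hfix hji hi]
  · rw [Equiv.swap_apply_left, hy j hi, smul_smul, ← pow_two, hs.sq j (by lia), one_smul]
  · rw [Equiv.swap_apply_right, hy i hi]
  · rw [Equiv.swap_apply_of_ne_of_ne (by lia) (by lia), hs.smul_eq_self_of_lt hy hfix hij hj]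

theorem relIndex_stabilizer_dvd_factorial (hs : IsCoxeterSeqA s (m + 1)) {a : α}
    (ha : ∀ i < m, s i • a = a) :
    (MulAction.stabilizer G a).relIndex (Subgroup.closure (s '' Set.Iio (m + 1))) ∣ (m + 2)! := by
  let y (j : ℕ) : α := ((List.Ico j (m + 1)).map s).prod • a
  have hy_last : y (m + 1) = a := by simp [y]
  have hy (j : ℕ) (hj : j ≤ m) : y j = s j • y (j + 1) := by
    simp only [y, List.Ico.eq_cons (Nat.lt_succ_of_le hj), List.map_cons, List.prod_cons, mul_smul]
  have hmaps : ∀ g ∈ s '' Set.Iio (m + 1), ∀ x ∈ y '' Set.Iic (m + 1),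
      g • x ∈ y '' Set.Iic (m + 1) := by
    rintro _ ⟨i, hi, rfl⟩ _ ⟨j, hj, rfl⟩
    rw [Set.mem_Iio] at hi
    rw [Set.mem_Iic] at hj
    rw [hs.smul_eq_swap hy (by rwa [hy_last]) (Nat.le_of_lt_succ hi) hj]
    refine Set.mem_image_of_mem y (Set.mem_Iic.2 ?_)
    rw [Equiv.swap_apply_def]
    split_ifs <;> lia
  have hncard : (y '' Set.Iic (m + 1)).ncard ≤ m + 2 :=
    (Set.ncard_image_le (Set.finite_Iic _)).trans_eq (by simp [Set.ncard_eq_toFinset_card'])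
  exact (relIndex_stabilizer_closure_dvd_factorial ((Set.finite_Iic _).image y) hmaps
    ⟨m + 1, Set.self_mem_Iic, hy_last⟩).trans (Nat.factorial_dvd_factorial hncard)

theorem card_closure_dvd_superFactorial (hs : IsCoxeterSeqA s m) :
    Nat.card (Subgroup.closure (s '' Set.Iio m)) ∣ Nat.superFactorial (m + 1) := by
  induction m with
  | zero => simp
  | succ m ih =>
    set H := Subgroup.closure (s '' Set.Iio m)
    have hle : H ≤ Subgroup.closure (s '' Set.Iio (m + 1)) :=
      Subgroup.closure_mono (Set.image_mono (Set.Iio_subset_Iio m.le_succ))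
    have hfix (i : ℕ) (hi : i < m) : s i • ((1 : G) : G ⧸ H) = (1 : G) := by
      rw [← MulAction.mem_stabilizer_iff, MulAction.stabilizer_quotient]
      exact Subgroup.subset_closure ⟨i, hi, rfl⟩
    have hindex := hs.relIndex_stabilizer_dvd_factorial hfix
    rw [MulAction.stabilizer_quotient] at hindex
    rw [← Subgroup.relIndex_bot_left, ← Subgroup.relIndex_mul_relIndex ⊥ H _ bot_le hle,
      Subgroup.relIndex_bot_left, Nat.superFactorial_succ, mul_comm]
    exact mul_dvd_mul hindex (ih hs.of_succ)

end IsCoxeterSeqA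

namespace BraidGroup

variable {n : ℕ}

theorem of_mul_of_mul_of {i j : Fin (n - 1)} (h : (i : ℕ) + 1 = j) :
    (.of i * .of j * .of i : BraidGroup n) = .of j * .of i * .of j :=
  PresentedGroup.mk_eq_mk_of_mul_inv_mem (rels := braidRels (n - 1)) (.inl ⟨i, j, h, rfl⟩)

theorem commute_of_of {i j : Fin (n - 1)} (h : (i : ℕ) + 2 ≤ j) :
    Commute (.of i : BraidGroup n) (.of j) :=
  PresentedGroup.mk_eq_mk_of_mul_inv_mem (rels := braidRels (n - 1)) (.inr ⟨i, j, h, rfl⟩)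

theorem commute_of_of_zero {i : Fin (n - 1)} (hi : (i : ℕ) ≠ 1) (h : 0 < n - 1) :
    Commute (.of i : BraidGroup n) (.of ⟨0, h⟩) := by
  obtain h0 | h2 : (i : ℕ) = 0 ∨ 2 ≤ (i : ℕ) := by lia
  · obtain rfl : i = ⟨0, h⟩ := Fin.ext h0
    exact .refl _
  · exact (commute_of_of (by simpa using h2)).symm

theorem isConj_of_zero_of (i : ℕ) (hi : i < n - 1) :
    IsConj (.of ⟨0, by lia⟩ : BraidGroup n) (.of ⟨i, hi⟩) := by
  induction i with
  | zero => exact .refl _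
  | succ i ih =>
    refine (ih (by lia)).trans (isConj_iff.2 ⟨.of ⟨i, by lia⟩ * .of ⟨i + 1, hi⟩, ?_⟩)
    rw [mul_inv_eq_iff_eq_mul, of_mul_of_mul_of rfl, mul_assoc]

theorem map_of_pow_eq_one {M : Type*} [Monoid M] (f : BraidGroup n →* M) {d : ℕ}
    {i j : Fin (n - 1)} (hi : f (.of i) ^ d = 1) : f (.of j) ^ d = 1 := by
  have hconj : IsConj (.of i : BraidGroup n) (.of j) :=
    (isConj_of_zero_of i i.2).symm.trans (isConj_of_zero_of j j.2)
  exact isConj_one_right.1 (hi ▸ (f.map_isConj hconj).pow d)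

theorem card_range_dvd_superFactorial {G : Type*} [Group G] (f : BraidGroup n →* G)
    (hf : ∀ i : Fin (n - 1), f (.of i) ^ 2 = 1) :
    Nat.card f.range ∣ Nat.superFactorial n := by
  let s : ℕ → G := Function.extend Fin.val (fun i : Fin (n - 1) ↦ f (.of i)) 1
  have hs_apply (i : Fin (n - 1)) : s i = f (.of i) := Fin.val_injective.extend_apply ..
  have hs : IsCoxeterSeqA s (n - 1) :=
    { sq i hi := by simpa only [hs_apply ⟨i, hi⟩] using hf ⟨i, hi⟩
      braid i hi := by
        rw [hs_apply ⟨i, by lia⟩, hs_apply ⟨i + 1, hi⟩]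
        simp only [← map_mul, of_mul_of_mul_of (i := ⟨i, _⟩) (j := ⟨i + 1, hi⟩) rfl]
      commute i j hij hj := by
        rw [hs_apply ⟨i, by lia⟩, hs_apply ⟨j, hj⟩]
        exact (commute_of_of hij).map f }
  have hrange : f.range ≤ Subgroup.closure (s '' Set.Iio (n - 1)) := by
    rintro _ ⟨g, rfl⟩
    exact PresentedGroup.generated_by _ ((Subgroup.closure (s '' Set.Iio (n - 1))).comap f)
      (fun j ↦ Subgroup.subset_closure ⟨j, j.2, hs_apply j⟩) g
  have hcard := (Subgroup.card_dvd_of_le hrange).trans hs.card_closure_dvd_superFactorial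
  cases n with
  | zero => simpa using hcard
  | succ n => exact hcard

end BraidGroup

theorem ext_vanishing_of_hom_young_vanishing_general
    (n : ℕ)
    (k : Type*) [Field k] (hk : (n ! : k) ≠ 0)
    (B : Type*) [AddCommGroup B] [Module k B]
    (C : Type*) [AddCommGroup C] [Module k C]
    (ρB : BraidGroup n →* (B →ₗ[k] B)ˣ)
    (ρC : BraidGroup n →* (C →ₗ[k] C)ˣ)
    (hB2 : ∀ i : Fin (n - 1), (ρB (PresentedGroup.of i)) ^ 2 = 1)
    (hC2 : ∀ i : Fin (n - 1), (ρC (PresentedGroup.of i)) ^ 2 = 1)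
    (hhom : ∀ f : C →ₗ[k] B,
      (∀ i : Fin (n - 1), (i : ℕ) ≠ 1 →
        ((ρB (PresentedGroup.of i) : (B →ₗ[k] B)ˣ) : B →ₗ[k] B) ∘ₗ f
          = f ∘ₗ ((ρC (PresentedGroup.of i) : (C →ₗ[k] C)ˣ) : C →ₗ[k] C)) →
      f = 0)
    (E : Type*) [AddCommGroup E] [Module k E]
    (ρE : BraidGroup n →* (E →ₗ[k] E)ˣ)
    (W : Submodule k E)
    (hW : ∀ g : BraidGroup n, ∀ x ∈ W, ((ρE g : (E →ₗ[k] E)ˣ) : E →ₗ[k] E) x ∈ W)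
    (hWB : ∃ e : W ≃ₗ[k] B, ∀ g : BraidGroup n, ∀ x : W,
      e ⟨((ρE g : (E →ₗ[k] E)ˣ) : E →ₗ[k] E) x, hW g x x.2⟩
        = ((ρB g : (B →ₗ[k] B)ˣ) : B →ₗ[k] B) (e x))
    (hQC : ∃ e : (E ⧸ W) ≃ₗ[k] C, ∀ g : BraidGroup n, ∀ x : E,
      e (Submodule.Quotient.mk (((ρE g : (E →ₗ[k] E)ˣ) : E →ₗ[k] E) x))
        = ((ρC g : (C →ₗ[k] C)ˣ) : C →ₗ[k] C) (e (Submodule.Quotient.mk x))) :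
    ∃ W' : Submodule k E, IsCompl W W' ∧
      ∀ g : BraidGroup n, ∀ x ∈ W', ((ρE g : (E →ₗ[k] E)ˣ) : E →ₗ[k] E) x ∈ W' := by
  obtain ⟨eB, heB⟩ := hWB
  obtain ⟨eC, heC⟩ := hQC
  have hsq (i : Fin (n - 1)) : ρE (.of i) ^ 2 = 1 := by
    have h0 : 0 < n - 1 := i.pos
    refine BraidGroup.map_of_pow_eq_one ρE (i := ⟨0, h0⟩) ?_
    rw [← map_pow, ← Units.val_eq_one]
    refine apply_eq_one_of_quotient_of_commute (ρB := (Units.coeHom _).comp ρB)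
      (ρC := (Units.coeHom _).comp ρC) (ρE := (Units.coeHom _).comp ρE)
      (S := PresentedGroup.of '' {j | (j : ℕ) ≠ 1}) hW eB eC heB heC ?_ (by simp [hB2])
      (by simp [hC2]) fun f hf ↦ hhom f fun j hj ↦ hf _ ⟨j, hj, rfl⟩
    rintro _ ⟨j, hj, rfl⟩
    exact (BraidGroup.commute_of_of_zero hj h0).pow_right 2
  have hcard : (Nat.card ρE.range : k) ≠ 0 := ne_zero_of_dvd_ne_zero
    (cast_superFactorial_ne_zero hk)
    (Nat.cast_dvd_cast (BraidGroup.card_range_dvd_superFactorial ρE hsq))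
  exact exists_isCompl_of_card_range_ne_zero ρE hcard W hW

/-- Proposition "vsvide" (Ext part): if `B` and `C` are nonzero representations of
`B_n` factoring through `S_n` (every `σ_i²` acts trivially) and there is no nonzero
linear map `C → B` commuting with the actions of `σ_1` and `σ_3, …, σ_{n-1}`
(i.e. `Hom_{S_{2,n-2}}(C,B) = 0`), then every extension of `C` by `B` as
`B_n`-representations splits: `Ext_{B_n}(C,B) = 0`. -/
theorem ext_vanishing_of_hom_young_vanishing
    (n : ℕ) (hn : 2 ≤ n)
    (k : Type*) [Field k] [CharZero k]
    (B : Type*) [AddCommGroup B] [Module k B] [FiniteDimensional k B] [Nontrivial B]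
    (C : Type*) [AddCommGroup C] [Module k C] [FiniteDimensional k C] [Nontrivial C]
    (ρB : BraidGroup n →* (B →ₗ[k] B)ˣ)
    (ρC : BraidGroup n →* (C →ₗ[k] C)ˣ)
    (hB2 : ∀ i : Fin (n - 1), (ρB (PresentedGroup.of i)) ^ 2 = 1)
    (hC2 : ∀ i : Fin (n - 1), (ρC (PresentedGroup.of i)) ^ 2 = 1)
    (hhom : ∀ f : C →ₗ[k] B,
      (∀ i : Fin (n - 1), (i : ℕ) ≠ 1 →
        ((ρB (PresentedGroup.of i) : (B →ₗ[k] B)ˣ) : B →ₗ[k] B) ∘ₗ f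
          = f ∘ₗ ((ρC (PresentedGroup.of i) : (C →ₗ[k] C)ˣ) : C →ₗ[k] C)) →
      f = 0)
    (E : Type*) [AddCommGroup E] [Module k E] [FiniteDimensional k E]
    (ρE : BraidGroup n →* (E →ₗ[k] E)ˣ)
    (W : Submodule k E)
    (hW : ∀ g : BraidGroup n, ∀ x ∈ W, ((ρE g : (E →ₗ[k] E)ˣ) : E →ₗ[k] E) x ∈ W)
    (hWB : ∃ e : W ≃ₗ[k] B, ∀ g : BraidGroup n, ∀ x : W,
      e ⟨((ρE g : (E →ₗ[k] E)ˣ) : E →ₗ[k] E) x, hW g x x.2⟩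
        = ((ρB g : (B →ₗ[k] B)ˣ) : B →ₗ[k] B) (e x))
    (hQC : ∃ e : (E ⧸ W) ≃ₗ[k] C, ∀ g : BraidGroup n, ∀ x : E,
      e (Submodule.Quotient.mk (((ρE g : (E →ₗ[k] E)ˣ) : E →ₗ[k] E) x))
        = ((ρC g : (C →ₗ[k] C)ˣ) : C →ₗ[k] C) (e (Submodule.Quotient.mk x))) :
    ∃ W' : Submodule k E, IsCompl W W' ∧
      ∀ g : BraidGroup n, ∀ x ∈ W', ((ρE g : (E →ₗ[k] E)ˣ) : E →ₗ[k] E) x ∈ W' :=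
  ext_vanishing_of_hom_young_vanishing_general n k (mod_cast n.factorial_ne_zero) B C ρB ρC hB2 hC2
    hhom E ρE W hW hWB hQC
end

section
/- Let k be a field of characteristic 0, n ≥ 3, M a k-vector space, π : S_n → GL_k(M) a group homomorphism (S_n = Equiv.Perm (Fin n)), and t a family assigning to each pair (i, j) of distinct elements of Fin n an endomorphism t i j ∈ End_k(M) with t i j = t j i, satisfying the equivariance π(s) ∘ (t i j) ∘ π(s)⁻¹ = t (s i) (s j) for all s ∈ S_n, and the infinitesimal braid relations [t i j, t i k + t k j] = 0 for pairwise distinct i, j, k and [t i j, t k l] = 0 for pairwise distinct i, j, k, l. Assume: (a) Σ_{i<j} t i j ≠ 0; (b) the endomorphisms u_i := Σ_{j ≠ i} t i j (for i ∈ Fin n) are not all equal; (c) [t 0 1, t 1 2] ≠ 0. Then the family (t i j)_{i<j} of n(n−1)/2 endomorphisms of M is linearly independent over k. -/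
open Finset Equiv

section SwapRelations

variable {k L X : Type*} [Ring k] [AddCommGroup L] [Module k L]

theorem sum_sub_symm_smul_eq_zero {S : Finset X} {a : X → k} {v : X → L} (f : L →ₗ[k] L)
    (σ : Perm X) (hS : ∀ x, x ∈ S ↔ σ x ∈ S) (hf : ∀ x ∈ S, f (v x) = v (σ x))
    (hrel : ∑ x ∈ S, a x • v x = 0) : ∑ x ∈ S, (a x - a (σ.symm x)) • v x = 0 := by
  have himage : ∑ x ∈ S, a (σ.symm x) • v x = f (∑ x ∈ S, a x • v x) := by
    rw [map_sum]
    refine (sum_equiv σ hS fun x hx => ?_).symm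
    rw [map_smul, hf x hx, symm_apply_apply]
  simp only [sub_smul, sum_sub_distrib, himage, hrel, map_zero, sub_zero]

theorem sub_smul_sub_eq_zero_of_swap [DecidableEq X] {S : Finset X} {a : X → k} {v : X → L}
    {l r : X} (hl : l ∈ S) (hr : r ∈ S) (f : L →ₗ[k] L)
    (hf : ∀ x ∈ S, f (v x) = v (swap l r x)) (hrel : ∑ x ∈ S, a x • v x = 0) :
    (a l - a r) • (v l - v r) = 0 := by
  obtain rfl | hlr := eq_or_ne l r
  · rw [sub_self, zero_smul]
  have hS : ∀ x, x ∈ S ↔ swap l r x ∈ S := by grind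
  have hfixed : ∀ x ∈ S, x ∉ ({l, r} : Finset X) → (a x - a (swap l r x)) • v x = 0 := by
    intro x _ hx
    rw [swap_apply_of_ne_of_ne (by grind) (by grind), sub_self, zero_smul]
  have hdiff := sum_sub_symm_smul_eq_zero f (swap l r) hS hf hrel
  rw [symm_swap, ← sum_subset (by grind) hfixed, sum_pair hlr, swap_apply_left,
    swap_apply_right] at hdiff
  rw [← hdiff]
  simp only [smul_sub, sub_smul]
  abel

end SwapRelations

section SymmetricFamilies

theorem sum_offDiag_eq_two_nsmul_sum_lt {ι L : Type*} [LinearOrder ι] [Fintype ι]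
    [AddCommMonoid L] {F : ι → ι → L} (hF : ∀ i j, i ≠ j → F i j = F j i) :
    ∑ x ∈ univ.offDiag, F x.1 x.2 = 2 • ∑ x : ι × ι with x.1 < x.2, F x.1 x.2 := by
  have hlt : {x ∈ (univ : Finset ι).offDiag | x.1 < x.2} = ({x | x.1 < x.2} : Finset (ι × ι)) := by
    grind
  have hgt : ∑ x ∈ (univ : Finset ι).offDiag with ¬ x.1 < x.2, F x.1 x.2 =
      ∑ x : ι × ι with x.1 < x.2, F x.1 x.2 :=
    sum_equiv (Equiv.prodComm ι ι) (by grind) (by grind)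
  rw [← sum_filter_add_sum_filter_not _ (fun x : ι × ι => x.1 < x.2), hlt, hgt, two_nsmul]

variable {ι L : Type*} [DecidableEq ι] [Fintype ι] [AddCommGroup L] {t : ι → ι → L} {i j : ι}

theorem sum_offDiag_eq_two_nsmul_sum_cut {S : Finset ι} (ht : ∀ p q, p ≠ q → t p q = t q p)
    (hS : ∀ p q, p ≠ q → (p ∈ S ↔ q ∈ S) → t p q = 0) :
    ∑ x ∈ univ.offDiag, t x.1 x.2 = 2 • ∑ q ∈ Sᶜ, ∑ p ∈ S, t p q := by
  have hsub : S ×ˢ Sᶜ ∪ Sᶜ ×ˢ S ⊆ univ.offDiag := by grind [mem_compl]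
  have hdisj : Disjoint (S ×ˢ Sᶜ) (Sᶜ ×ˢ S) := by grind [disjoint_left, mem_compl]
  have hswap : ∑ x ∈ Sᶜ ×ˢ S, t x.1 x.2 = ∑ x ∈ S ×ˢ Sᶜ, t x.1 x.2 :=
    sum_equiv (Equiv.prodComm ι ι) (by grind) (by grind [mem_compl])
  rw [← sum_subset hsub (by grind [mem_compl]), sum_union hdisj, hswap, sum_product_right,
    two_nsmul]

theorem sum_erase_sub_sum_erase (hij : i ≠ j) (ht : t i j = t j i) :
    ∑ l ∈ univ.erase i, t i l - ∑ l ∈ univ.erase j, t j l =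
      ∑ l ∈ ({i, j} : Finset ι)ᶜ, (t i l - t j l) := by
  have hi : univ.erase i = insert j ({i, j} : Finset ι)ᶜ := by grind [mem_compl]
  have hj : univ.erase j = insert i ({i, j} : Finset ι)ᶜ := by grind [mem_compl]
  rw [hi, hj, sum_insert (by simp), sum_insert (by simp), ht, add_sub_add_left_eq_sub,
    sum_sub_distrib]

theorem sum_erase_eq_sum_erase_of_equivariant (φ : Perm ι → L →+ L)
    (hφ : ∀ s p q, p ≠ q → φ s (t p q) = t (s p) (s q)) (hij : i ≠ j)
    (h : ∑ l ∈ univ.erase i, t i l = ∑ l ∈ univ.erase j, t j l) (p q : ι) :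
    ∑ l ∈ univ.erase p, t p l = ∑ l ∈ univ.erase q, t q l := by
  have hmap (s : Perm ι) (m : ι) :
      φ s (∑ l ∈ univ.erase m, t m l) = ∑ l ∈ univ.erase (s m), t (s m) l := by
    rw [map_sum]
    exact sum_equiv s (by simp) fun l hl => hφ s m l (ne_of_mem_erase hl).symm
  have hfix (m : ι) : ∑ l ∈ univ.erase i, t i l = ∑ l ∈ univ.erase m, t m l := by
    obtain rfl | him := eq_or_ne i m
    · rfl
    · have himage := congrArg (φ (swap j m)) h
      rwa [hmap, hmap, swap_apply_of_ne_of_ne hij him, swap_apply_left] at himage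
  rw [← hfix p, hfix q]

end SymmetricFamilies

theorem eq_of_symmetric_of_rows_eq {ι α : Type*} {c : ι → ι → α} (hc : ∀ p q, c p q = c q p)
    (hrow : ∀ i j l, i ≠ j → i ≠ l → j ≠ l → c i l = c j l) {i j p q : ι} (hij : i ≠ j)
    (hpq : p ≠ q) : c i j = c p q := by
  have hcol : ∀ a b l, a ≠ l → b ≠ l → c a l = c b l := by grind
  obtain rfl | hiq := eq_or_ne i q
  · rw [hc i j, hcol j p i hij.symm hpq]
  · rw [hc i j, hcol j q i hij.symm hiq.symm, hc q i, hcol i p q hiq hpq]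

section EquivariantRelations

variable {k L ι : Type*} [Ring k] [IsDomain k] [NeZero (2 : k)] [AddCommGroup L] [Module k L]
  [Module.IsTorsionFree k L] [DecidableEq ι] [Fintype ι] {t : ι → ι → L} {c : ι → ι → k} {i j : ι}

theorem sum_sub_smul_sub_eq_zero_of_swap (ht : ∀ p q, p ≠ q → t p q = t q p)
    (hc : ∀ p q, c p q = c q p) (hij : i ≠ j) (f : L →ₗ[k] L)
    (hf : ∀ p q, p ≠ q → f (t p q) = t (swap i j p) (swap i j q))
    (hrel : ∑ x ∈ univ.offDiag, c x.1 x.2 • t x.1 x.2 = 0) :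
    ∑ q ∈ ({i, j} : Finset ι)ᶜ, (c i q - c j q) • (t i q - t j q) = 0 := by
  have hdiff := sum_sub_symm_smul_eq_zero (v := fun x : ι × ι => t x.1 x.2) f
    ((swap i j).prodCongr (swap i j)) (by simp) (by simpa using hf) hrel
  have hsymm : ∀ p q, p ≠ q → (c p q - c (swap i j p) (swap i j q)) • t p q =
      (c q p - c (swap i j q) (swap i j p)) • t q p := fun p q hpq => by
    rw [hc p q, hc (swap i j p), ht p q hpq]
  have hfixed : ∀ p q, p ≠ q → (p ∈ ({i, j} : Finset ι) ↔ q ∈ ({i, j} : Finset ι)) →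
      (c p q - c (swap i j p) (swap i j q)) • t p q = 0 := fun p q hpq hmem => by
    suffices c p q = c (swap i j p) (swap i j q) by rw [this, sub_self, zero_smul]
    grind
  have hcross : ∀ q ∈ ({i, j} : Finset ι)ᶜ,
      ∑ p ∈ {i, j}, (c p q - c (swap i j p) (swap i j q)) • t p q =
        (c i q - c j q) • (t i q - t j q) := fun q hq => by
    obtain ⟨hqi, hqj⟩ : q ≠ i ∧ q ≠ j := by simpa using hq
    rw [sum_pair hij, swap_apply_left, swap_apply_right, swap_apply_of_ne_of_ne hqi hqj]
    simp only [smul_sub, sub_smul]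
    abel
  have htwo := sum_offDiag_eq_two_nsmul_sum_cut hsymm hfixed
  rw [sum_congr rfl hcross, ← ofNat_smul_eq_nsmul k] at htwo
  exact (smul_eq_zero.mp (htwo.symm.trans hdiff)).resolve_left two_ne_zero

theorem coeff_eq_of_sum_offDiag_eq_zero (ht : ∀ p q, p ≠ q → t p q = t q p)
    (hc : ∀ p q, c p q = c q p) (φ : Perm ι → L →ₗ[k] L)
    (hφ : ∀ s p q, p ≠ q → φ s (t p q) = t (s p) (s q))
    (hrel : ∑ x ∈ univ.offDiag, c x.1 x.2 • t x.1 x.2 = 0) {l : ι} (hij : i ≠ j) (hil : i ≠ l)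
    (hjl : j ≠ l) (hu : ∑ q ∈ univ.erase i, t i q ≠ ∑ q ∈ univ.erase j, t j q)
    (hd : ∀ r, i ≠ r → j ≠ r → l ≠ r → t i l - t j l ≠ t i r - t j r) : c i l = c j l := by
  have hstar := sum_sub_smul_sub_eq_zero_of_swap ht hc hij (φ (swap i j)) (hφ _) hrel
  have hconst : ∀ r ∈ ({i, j} : Finset ι)ᶜ, c i r - c j r = c i l - c j l := by
    intro r hr
    obtain rfl | hlr := eq_or_ne l r
    · rfl
    obtain ⟨hir, hjr⟩ : i ≠ r ∧ j ≠ r := by grind [mem_compl]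
    have hfix : ∀ q ∈ ({i, j} : Finset ι)ᶜ,
        φ (swap l r) (t i q - t j q) = t i (swap l r q) - t j (swap l r q) := fun q hq => by
      rw [map_sub, hφ _ _ _ (by grind [mem_compl]), hφ _ _ _ (by grind [mem_compl]),
        swap_apply_of_ne_of_ne hil hir, swap_apply_of_ne_of_ne hjl hjr]
    have hsmul := sub_smul_sub_eq_zero_of_swap (by grind [mem_compl]) hr (φ (swap l r)) hfix hstar
    exact (sub_eq_zero.mp ((smul_eq_zero.mp hsmul).resolve_right
      (sub_ne_zero.mpr (hd r hir hjr hlr)))).symm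
  rw [sum_congr rfl fun r hr => by rw [hconst r hr], ← smul_sum,
    ← sum_erase_sub_sum_erase hij (ht i j hij)] at hstar
  exact sub_eq_zero.mp ((smul_eq_zero.mp hstar).resolve_right (sub_ne_zero.mpr hu))

theorem linearIndependent_of_equivariant {ι : Type*} [LinearOrder ι] [Fintype ι] {t : ι → ι → L}
    (ht : ∀ p q, p ≠ q → t p q = t q p) (φ : Perm ι → L →ₗ[k] L)
    (hφ : ∀ s p q, p ≠ q → φ s (t p q) = t (s p) (s q))
    (hsum : ∑ p : ι × ι with p.1 < p.2, t p.1 p.2 ≠ 0)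
    (hu : ∀ i j, i ≠ j → ∑ q ∈ univ.erase i, t i q ≠ ∑ q ∈ univ.erase j, t j q)
    (hd : ∀ i j l r, i ≠ j → i ≠ l → j ≠ l → i ≠ r → j ≠ r → l ≠ r →
      t i l - t j l ≠ t i r - t j r) :
    LinearIndependent k (fun p : {p : ι × ι // p.1 < p.2} => t p.1.1 p.1.2) := by
  change LinearIndepOn k (fun p : ι × ι => t p.1 p.2) {p | p.1 < p.2}
  rw [← coe_filter_univ, linearIndepOn_finset_iff]
  intro a hrel
  let c : ι → ι → k := fun p q => a (min p q, max p q)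
  have hcsymm : ∀ p q, c p q = c q p := fun p q => by simp only [c, min_comm, max_comm]
  have hca : ∀ x ∈ ({p | p.1 < p.2} : Finset (ι × ι)), c x.1 x.2 = a x := fun x hx => by
    have hle : x.1 ≤ x.2 := (mem_filter_univ _ |>.mp hx).le
    simp only [c, min_eq_left hle, max_eq_right hle]
  have hrelc : ∑ x ∈ univ.offDiag, c x.1 x.2 • t x.1 x.2 = 0 := by
    rw [sum_offDiag_eq_two_nsmul_sum_lt (F := fun p q => c p q • t p q) fun p q hpq => by
      rw [hcsymm, ht p q hpq], sum_congr rfl fun x hx => by rw [hca x hx], hrel, smul_zero]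
  have hrow : ∀ i j l, i ≠ j → i ≠ l → j ≠ l → c i l = c j l := fun i j l hij hil hjl =>
    coeff_eq_of_sum_offDiag_eq_zero ht hcsymm φ hφ hrelc hij hil hjl (hu i j hij)
      fun r => hd i j l r hij hil hjl
  have hconst : ∀ p ∈ ({p | p.1 < p.2} : Finset (ι × ι)),
      ∀ x ∈ ({p | p.1 < p.2} : Finset (ι × ι)), a x = a p := fun p hp x hx => by
    rw [← hca x hx, ← hca p hp]
    exact eq_of_symmetric_of_rows_eq hcsymm hrow (mem_filter_univ _ |>.mp hx).ne
      (mem_filter_univ _ |>.mp hp).ne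
  intro p hp
  rw [sum_congr rfl fun x hx => by rw [hconst p hp x hx], ← smul_sum] at hrel
  exact (smul_eq_zero.mp hrel).resolve_right hsum

end EquivariantRelations

/-- The defining relations of the infinitesimal pure braid Lie algebra on the strands `ι`, for a
family in a Lie ring. The diagonal entries `t i i` are junk: no condition is put on them. -/
structure IsInfinitesimalBraidFamily {ι L : Type*} [LieRing L] (t : ι → ι → L) : Prop where
  symm : ∀ i j, i ≠ j → t i j = t j i
  lie_add_eq_zero : ∀ i j l, i ≠ j → i ≠ l → j ≠ l → ⁅t i j, t i l + t l j⁆ = 0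
  lie_eq_zero : ∀ i j l r, i ≠ j → i ≠ l → i ≠ r → j ≠ l → j ≠ r → l ≠ r → ⁅t i j, t l r⁆ = 0

namespace IsInfinitesimalBraidFamily

variable {k ι L : Type*} [LieRing L] {t : ι → ι → L} {i j l r : ι}

theorem lie_eq_lie_of_adjacent (ht : IsInfinitesimalBraidFamily t) (hij : i ≠ j) (hil : i ≠ l)
    (hjl : j ≠ l) : ⁅t i j, t j l⁆ = ⁅t i l, t i j⁆ := by
  have h := ht.lie_add_eq_zero i j l hij hil hjl
  rw [lie_add, ht.symm l j hjl.symm] at h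
  rw [← lie_skew (t i l), eq_neg_of_add_eq_zero_right h]

theorem lie_eq_zero_of_sub_eq_sub [Ring k] [IsDomain k] [NeZero (2 : k)] [Module k L]
    [Module.IsTorsionFree k L] (ht : IsInfinitesimalBraidFamily t) (hij : i ≠ j) (hil : i ≠ l)
    (hir : i ≠ r) (hjl : j ≠ l) (hjr : j ≠ r) (hlr : l ≠ r)
    (h : t i l - t j l = t i r - t j r) : ⁅t i j, t j l⁆ = 0 := by
  have hbracket_ij : ⁅t i j, t i l⁆ + ⁅t i j, t i l⁆ = ⁅t i j, t i r⁆ + ⁅t i j, t i r⁆ := by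
    have hb := congrArg (⁅t i j, ·⁆) h
    rwa [lie_sub, lie_sub, ht.lie_eq_lie_of_adjacent hij hil hjl,
      ht.lie_eq_lie_of_adjacent hij hir hjr, ← lie_skew (t i l), ← lie_skew (t i r),
      sub_neg_eq_add, sub_neg_eq_add] at hb
  have hbracket_il : ⁅t i l, t i r⁆ = -⁅t i j, t i l⁆ := by
    have hb := congrArg (⁅t i l, ·⁆) h
    rw [lie_sub, lie_sub, lie_self, ht.lie_eq_zero i l j r hil hij hir hjl.symm hlr hjr,
      ht.symm j l hjl, ht.lie_eq_lie_of_adjacent hil hij hjl.symm, zero_sub, sub_zero] at hb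
    exact hb.symm
  have hbracket_ir : ⁅t i l, t i r⁆ = ⁅t i j, t i r⁆ := by
    have hb := congrArg (⁅t i r, ·⁆) h
    rw [lie_sub, lie_sub, lie_self, ht.lie_eq_zero i r j l hir hij hil hjr.symm hlr.symm hjl,
      ht.symm j r hjr, ht.lie_eq_lie_of_adjacent hir hij hjr.symm, sub_zero, zero_sub,
      ← lie_skew, neg_inj] at hb
    exact hb
  rw [← hbracket_ir, hbracket_il] at hbracket_ij
  have hfour : (2 : k) • (2 : k) • ⁅t i j, t i l⁆ = 0 := by
    simp only [two_smul]
    nth_rewrite 1 [hbracket_ij]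
    abel
  have hzero : ⁅t i j, t i l⁆ = 0 := by simpa [two_ne_zero] using hfour
  rw [ht.lie_eq_lie_of_adjacent hij hil hjl, ← lie_skew, hzero, neg_zero]

end IsInfinitesimalBraidFamily

theorem lie_ne_zero_of_equivariant {k ι L : Type*} [CommRing k] [LieRing L] [LieAlgebra k L]
    {t : ι → ι → L} (φ : Perm ι → L →ₗ⁅k⁆ L)
    (hφ : ∀ s p q, p ≠ q → φ s (t p q) = t (s p) (s q))
    (hne : ∃ i j l, i ≠ j ∧ i ≠ l ∧ j ≠ l ∧ ⁅t i j, t j l⁆ ≠ 0) {i j l : ι} (hij : i ≠ j)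
    (hil : i ≠ l) (hjl : j ≠ l) : ⁅t i j, t j l⁆ ≠ 0 := by
  intro h
  obtain ⟨i', j', l', hij', hil', hjl', hne⟩ := hne
  obtain ⟨s, hs⟩ := Perm.exists_extending_pair ![i, j, l] ![i', j', l']
    (by simp [Function.Injective, Fin.forall_fin_succ, hij, hil, hjl, hij.symm, hil.symm,
      hjl.symm])
    (by simp [Function.Injective, Fin.forall_fin_succ, hij', hil', hjl', hij'.symm, hil'.symm,
      hjl'.symm])
  obtain ⟨hsi, hsj, hsl⟩ : s i = i' ∧ s j = j' ∧ s l = l' := ⟨hs 0, hs 1, hs 2⟩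
  apply hne
  rw [← hsi, ← hsj, ← hsl, ← hφ s i j hij, ← hφ s j l hjl, ← LieHom.map_lie, h, map_zero]

theorem infinitesimal_generators_linearIndependent_general {k ι L : Type*} [CommRing k]
    [IsDomain k] [NeZero (2 : k)] [LinearOrder ι] [Fintype ι] [LieRing L] [LieAlgebra k L]
    [Module.IsTorsionFree k L] {t : ι → ι → L} (ht : IsInfinitesimalBraidFamily t)
    (φ : Perm ι → L →ₗ⁅k⁆ L) (hφ : ∀ s i j, i ≠ j → φ s (t i j) = t (s i) (s j))
    (ha : ∑ p : ι × ι with p.1 < p.2, t p.1 p.2 ≠ 0)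
    (hb : ¬ ∀ i j, ∑ l ∈ univ.erase i, t i l = ∑ l ∈ univ.erase j, t j l)
    (hc : ∃ i j l, i ≠ j ∧ i ≠ l ∧ j ≠ l ∧ ⁅t i j, t j l⁆ ≠ 0) :
    LinearIndependent k (fun p : {p : ι × ι // p.1 < p.2} => t p.1.1 p.1.2) := by
  have hu : ∀ i j, i ≠ j → ∑ q ∈ univ.erase i, t i q ≠ ∑ q ∈ univ.erase j, t j q :=
    fun i j hij h => hb (sum_erase_eq_sum_erase_of_equivariant (fun s => (φ s : L →+ L)) hφ hij h)
  have hd : ∀ i j l r, i ≠ j → i ≠ l → j ≠ l → i ≠ r → j ≠ r → l ≠ r →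
      t i l - t j l ≠ t i r - t j r := fun i j l r hij hil hjl hir hjr hlr h =>
    lie_ne_zero_of_equivariant φ hφ hc hij hil hjl
      (ht.lie_eq_zero_of_sub_eq_sub (k := k) hij hil hir hjl hjr hlr h)
  exact linearIndependent_of_equivariant ht.symm (fun s => (φ s : L →ₗ[k] L)) hφ ha hu hd

theorem conjAct_eq_lieConj {k M G : Type*} [CommRing k] [AddCommGroup M] [Module k M] [Group G]
    (π : G →* (Module.End k M)ˣ) (s : G) (x : Module.End k M) :
    conjAct π s x = (LinearMap.GeneralLinearGroup.generalLinearEquiv k M (π s)).lieConj x :=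
  rfl

/-- If a representation of the infinitesimal braid algebra `𝔅ₙ` does not factor
through `B_n/Z(B_n)` (i.e. `Σ t_{ij} ≠ 0`), nor through Hurwitz's group (the `u_i`'s
are not all equal), nor through the enhanced symmetric group (`[t₀₁, t₁₂] ≠ 0`),
then the `t_{ij}` (for `i < j`) are linearly independent. -/
theorem infinitesimal_generators_linearIndependent
    (k : Type*) [Field k] [CharZero k]
    (n : ℕ) (hn : 3 ≤ n)
    (M : Type*) [AddCommGroup M] [Module k M]
    (π : Equiv.Perm (Fin n) →* (Module.End k M)ˣ)
    (t : Fin n → Fin n → Module.End k M)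
    (hsymm : ∀ i j : Fin n, i ≠ j → t i j = t j i)
    (hequiv : ∀ (s : Equiv.Perm (Fin n)) (i j : Fin n), i ≠ j →
      conjAct π s (t i j) = t (s i) (s j))
    (hrel1 : ∀ i j l : Fin n, i ≠ j → i ≠ l → j ≠ l → ⁅t i j, t i l + t l j⁆ = 0)
    (hrel2 : ∀ i j l r : Fin n, i ≠ j → i ≠ l → i ≠ r → j ≠ l → j ≠ r → l ≠ r →
      ⁅t i j, t l r⁆ = 0)
    (ha : ∑ p ∈ Finset.univ.filter (fun p : Fin n × Fin n => p.1 < p.2), t p.1 p.2 ≠ 0)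
    (hb : ¬ ∀ i j : Fin n,
      (∑ l ∈ Finset.univ.erase i, t i l) = ∑ l ∈ Finset.univ.erase j, t j l)
    (hc : ⁅t ⟨0, by omega⟩ ⟨1, by omega⟩, t ⟨1, by omega⟩ ⟨2, by omega⟩⁆ ≠ 0) :
    LinearIndependent k
      (fun p : {p : Fin n × Fin n // p.1 < p.2} => t p.1.1 p.1.2) := by
  let : LieRing (Module.End k M) := LieRing.ofAssociativeRing
  let φ (s : Perm (Fin n)) : Module.End k M →ₗ⁅k⁆ Module.End k M :=
    (LinearMap.GeneralLinearGroup.generalLinearEquiv k M (π s)).lieConj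
  have hφ : ∀ s i j, i ≠ j → φ s (t i j) = t (s i) (s j) := fun s i j hij =>
    (conjAct_eq_lieConj π s (t i j)).symm.trans (hequiv s i j hij)
  exact infinitesimal_generators_linearIndependent_general ⟨hsymm, hrel1, hrel2⟩ φ hφ ha hb
    ⟨⟨0, by omega⟩, ⟨1, by omega⟩, ⟨2, by omega⟩, by simp, by simp, by simp, hc⟩
end

section
/- Let k be a field of characteristic 0, 𝔤 a Lie algebra over k, and M a finite-dimensional k-vector space equipped with a Lie module structure over 𝔤. Let G be a finite group, σ : G → Aut(𝔤) an action of G on 𝔤 by Lie algebra automorphisms, and π : G → GL_k(M) a group homomorphism satisfying π(g)(x • m) = (σ(g) x) • (π(g) m) for all g ∈ G, x ∈ 𝔤, m ∈ M (so that M is a module over the semidirect product kG ⋉ U𝔤). Then M is a semisimple 𝔤-module — every Lie submodule of M admits a complementary Lie submodule — if and only if every Lie submodule N of M with π(g)(N) = N for all g ∈ G admits a complementary Lie submodule N' with π(g)(N') = N' for all g ∈ G (i.e. M is semisimple as a kG ⋉ U𝔤-module). -/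
/-!
If `M` is semisimple over `𝔤`, a `𝔤`-equivariant projection onto a `G`-stable submodule stays one
after averaging over `G`, and the kernel of the average is a `G`-stable complement.

The converse only concerns the lattice of submodules with its action of `G` by automorphisms. If the
socle were not everything, some compact element would not lie below it; neither would the join `b`
of its translates, which is `G`-fixed and, `G` being finite, compact. Take a maximal element `n < b`
lying above `b ⊓ socle`. The meet `i` of the translates of `n` is `G`-fixed, so it has a complement
`j`. The interval `[i, b]` is isomorphic to `[⊥, b ⊓ j]`, and its bottom is a finite meet of
coatoms, so `b ⊓ j` contains an atom; this atom lies in `b ⊓ socle ≤ i` and in `j`, which is absurd.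
-/

section Lattice

variable {L G : Type*}

theorem exists_le_isAtom_of_inf_finset_inf_eq_bot [Lattice L] [BoundedOrder L]
    [IsLowerModularLattice L] {ι : Type*} {n : ι → L} {b d : L} (hdb : d ≤ b) (hd : d ≠ ⊥)
    (s : Finset ι) (hn : ∀ i ∈ s, n i ⋖ b) (h : d ⊓ s.inf n = ⊥) : ∃ e ≤ d, IsAtom e := by
  classical
  induction s using Finset.induction_on with
  | empty => exact absurd (by simpa using h) hd
  | insert i s _ ih =>
    by_cases hbot : d ⊓ s.inf n = ⊥
    · exact ih (fun j hj => hn j (Finset.mem_insert_of_mem hj)) hbot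
    have hcov : n i ⋖ b := hn i (Finset.mem_insert_self i s)
    have hinf : n i ⊓ (d ⊓ s.inf n) = ⊥ := by rwa [inf_left_comm, ← Finset.inf_insert]
    have hsup : n i ⊔ d ⊓ s.inf n = b := by
      refine (hcov.eq_or_eq le_sup_left (sup_le hcov.le (inf_le_left.trans hdb))).resolve_left ?_
      intro heq
      exact hbot (by rwa [inf_eq_right.2 (sup_eq_left.1 heq)] at hinf)
    refine ⟨d ⊓ s.inf n, inf_le_left, bot_covBy_iff.1 ?_⟩
    rw [← hinf]
    exact inf_covBy_of_covBy_sup_left (hsup.symm ▸ hcov)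

theorem isCompactElement_orderIso_apply {L' : Type*} [PartialOrder L] [PartialOrder L']
    (e : L ≃o L') {c : L} (hc : IsCompactElement c) : IsCompactElement (e c) := by
  intro s u hs hdir hu hcu
  obtain ⟨x, ⟨y, hy, rfl⟩, hcx⟩ := hc (e.symm '' s) (e.symm u) (hs.image _)
    (hdir.mono_comp e.symm.monotone) (e.symm.isLUB_image'.2 hu) (e.le_symm_apply.2 hcu)
  exact ⟨y, hy, e.le_symm_apply.1 hcx⟩

theorem isCompactElement_iSup [CompleteLattice L] {ι : Type*} [Finite ι] {f : ι → L}
    (hf : ∀ i, IsCompactElement (f i)) : IsCompactElement (⨆ i, f i) := by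
  have := Fintype.ofFinite ι
  rw [← Finset.sup_univ_eq_iSup]
  exact CompleteLattice.isCompactElement_finsetSup _ fun i _ => hf i

theorem exists_le_covBy_of_isCompactElement [CompleteLattice L] {a b : L} (hb : IsCompactElement b)
    (hab : a < b) : ∃ n, a ≤ n ∧ n ⋖ b := by
  have := CompleteLattice.Iic_coatomic_of_compact_element hb
  obtain htop | ⟨n, hn, han⟩ := eq_top_or_exists_le_coatom (⟨a, hab.le⟩ : Set.Iic b)
  · exact absurd (congrArg Subtype.val htop) hab.ne
  · exact ⟨n, han, Set.Iic.isCoatom_iff.1 hn⟩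

theorem orderIso_apply_sSup_isAtom [CompleteLattice L] (e : L ≃o L) :
    e (sSup {a | IsAtom a}) = sSup {a | IsAtom a} := by
  rw [e.map_sSup_eq_sSup_symm_preimage]
  congr 1
  ext a
  exact e.symm.isAtom_iff a

variable [CompleteLattice L] [Group G] (Φ : G →* (L ≃o L))

theorem apply_iSup_orbit (g : G) (a : L) : Φ g (⨆ h, Φ h a) = ⨆ h, Φ h a := by
  simp_rw [OrderIso.map_iSup, ← RelIso.mul_apply, ← map_mul]
  exact (Equiv.mulLeft g).iSup_comp (g := fun h => Φ h a)

theorem apply_iInf_orbit (g : G) (a : L) : Φ g (⨅ h, Φ h a) = ⨅ h, Φ h a := by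
  simp_rw [OrderIso.map_iInf, ← RelIso.mul_apply, ← map_mul]
  exact (Equiv.mulLeft g).iInf_comp (g := fun h => Φ h a)

variable [Finite G] [IsModularLattice L] {Φ}
  (hΦ : ∀ a, (∀ g, Φ g a = a) → IsComplemented a)
include hΦ

theorem exists_isAtom_le_not_le_of_fixed {a b : L} (ha : ∀ g, Φ g a = a) (hb : ∀ g, Φ g b = b)
    (hbc : IsCompactElement b) (hab : a < b) : ∃ e ≤ b, IsAtom e ∧ ¬ e ≤ a := by
  have := Fintype.ofFinite G
  obtain ⟨n, han, hnb⟩ := exists_le_covBy_of_isCompactElement hbc hab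
  have hcov (g : G) : Φ g n ⋖ b := hb g ▸ (apply_covBy_apply_iff (Φ g)).2 hnb
  obtain ⟨j, hj⟩ := hΦ (⨅ g, Φ g n) (apply_iInf_orbit Φ · n)
  have hn : ⨅ g, Φ g n ≤ n := (iInf_le _ 1).trans_eq (by rw [map_one, RelIso.one_apply])
  have ha_le : a ≤ ⨅ g, Φ g n := le_iInf fun g => (ha g).ge.trans ((Φ g).monotone han)
  have hne : j ⊓ b ≠ ⊥ := by
    intro hbot
    have hmod := sup_inf_assoc_of_le j (hn.trans hnb.le)
    rw [hj.sup_eq_top, top_inf_eq, hbot, sup_bot_eq] at hmod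
    exact hnb.lt.not_ge (hmod.le.trans hn)
  obtain ⟨e, he, hatom⟩ := exists_le_isAtom_of_inf_finset_inf_eq_bot inf_le_right hne Finset.univ
    (fun g _ => hcov g) <| by
      rw [Finset.inf_univ_eq_iInf, inf_right_comm, hj.symm.inf_eq_bot, bot_inf_eq]
  exact ⟨e, he.trans inf_le_right, hatom, fun hea =>
    hatom.1 (le_bot_iff.1 (hj.disjoint (hea.trans ha_le) (he.trans inf_le_left)))⟩

theorem complementedLattice_of_forall_fixed_isComplemented [IsCompactlyGenerated L] :
    ComplementedLattice L := by
  refine complementedLattice_of_sSup_atoms_eq_top (top_le_iff.1 ?_)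
  set S : L := sSup {a | IsAtom a}
  refine le_iff_compact_le_imp.2 fun c hc _ => by_contra fun hcS => ?_
  set b : L := ⨆ g, Φ g c
  have hcb : c ≤ b := le_iSup_of_le 1 (by rw [map_one, RelIso.one_apply])
  have hb (g : G) : Φ g b = b := apply_iSup_orbit Φ g c
  have hbS (g : G) : Φ g (b ⊓ S) = b ⊓ S := by
    rw [OrderIso.map_inf, hb, orderIso_apply_sSup_isAtom]
  have hbc : IsCompactElement b :=
    isCompactElement_iSup fun g => isCompactElement_orderIso_apply (Φ g) hc
  obtain ⟨e, heb, he, hne⟩ := exists_isAtom_le_not_le_of_fixed hΦ hbS hb hbc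
    (inf_lt_left.2 fun hle => hcS (hcb.trans hle))
  exact hne (le_inf heb (le_sSup he))

end Lattice

section Average

open Representation

variable {k G M : Type*} [CommRing k] [Group G] [AddCommGroup M] [Module k M]
  (ρ : Representation k G M) [Fintype G] [Invertible (Fintype.card G : k)]

theorem averageMap_linHom_apply (f : M →ₗ[k] M) (m : M) :
    (linHom ρ ρ).averageMap f m = ⅟(Fintype.card G : k) • ∑ g, ρ g (f (ρ g⁻¹ m)) := by
  simp [GroupAlgebra.average, LinearMap.sum_apply]

theorem isIntertwiningMap_averageMap_linHom (f : M →ₗ[k] M) :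
    ρ.IsIntertwiningMap ρ ((linHom ρ ρ).averageMap f) :=
  (mem_linHom_invariants_iff_isIntertwining _).1 (averageMap_invariant (linHom ρ ρ) f)

variable {ρ}

theorem isProj_averageMap_linHom {N : Submodule k M} (hN : ∀ g, ∀ m ∈ N, ρ g m ∈ N)
    {f : M →ₗ[k] M} (hf : LinearMap.IsProj N f) :
    LinearMap.IsProj N ((linHom ρ ρ).averageMap f) where
  map_mem m := by
    rw [averageMap_linHom_apply]
    exact N.smul_mem _ (N.sum_mem fun g _ => hN g _ (hf.map_mem _))
  map_id m hm := by
    have hconj (g : G) : ρ g (f (ρ g⁻¹ m)) = m := by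
      rw [hf.map_id _ (hN _ _ hm), ρ.self_inv_apply]
    simp_rw [averageMap_linHom_apply, hconj, Finset.sum_const, Finset.card_univ,
      ← Nat.cast_smul_eq_nsmul k, invOf_smul_smul]

end Average

section LieSubmodule

variable {k 𝔤 M G : Type*} [CommRing k] [LieRing 𝔤] [AddCommGroup M] [Module k M]
  [LieRingModule 𝔤 M]

theorem exists_lieModuleHom_isProj_of_isCompl {N N' : LieSubmodule k 𝔤 M} (h : IsCompl N N') :
    ∃ p : M →ₗ⁅k,𝔤⁆ M, LinearMap.IsProj N.toSubmodule (p : M →ₗ[k] M) := by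
  have hc : IsCompl N.toSubmodule N'.toSubmodule := LieSubmodule.isCompl_toSubmodule.2 h
  let p : M →ₗ[k] M := Submodule.projection _ _ hc
  have hN {m : M} (hm : m ∈ N) : p m = m := Submodule.projection_apply_left hc ⟨m, hm⟩
  have hN' {m : M} (hm : m ∈ N') : p m = 0 := (Submodule.projection_apply_eq_zero_iff hc).2 hm
  refine ⟨{ p with map_lie' := fun {x m} => ?_ }, Submodule.projection_apply_mem hc, fun m => hN⟩
  change p ⁅x, m⁆ = ⁅x, p m⁆
  obtain ⟨a, ha, b, hb, rfl⟩ := Submodule.mem_sup.1 (hc.sup_eq_top ▸ Submodule.mem_top (x := m))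
  rw [lie_add, map_add, map_add, hN ha, hN' hb, hN (N.lie_mem ha), hN' (N'.lie_mem hb),
    add_zero, add_zero]

variable [Group G] {ρ : Representation k G M} {σ : G → 𝔤 → 𝔤}
  (hρ : ∀ g x m, ρ g ⁅x, m⁆ = ⁅σ g x, ρ g m⁆)

/-- The translate `ρ(g) N` of a Lie submodule `N`, encoded as the preimage of `N` under `ρ(g⁻¹)`
so that membership unfolds definitionally. -/
def lieTranslate (g : G) (N : LieSubmodule k 𝔤 M) : LieSubmodule k 𝔤 M where
  toSubmodule := N.toSubmodule.comap (ρ g⁻¹)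
  lie_mem {x m} hm := by
    change ρ g⁻¹ ⁅x, m⁆ ∈ N
    rw [hρ]
    exact N.lie_mem hm

theorem mem_lieTranslate {g : G} {N : LieSubmodule k 𝔤 M} {m : M} :
    m ∈ lieTranslate hρ g N ↔ ρ g⁻¹ m ∈ N :=
  Iff.rfl

theorem lieTranslate_mono (g : G) : Monotone (lieTranslate hρ g) :=
  fun _ _ hle _ hm => hle hm

theorem lieTranslate_one (N : LieSubmodule k 𝔤 M) : lieTranslate hρ 1 N = N := by
  ext m
  simp [mem_lieTranslate]

theorem lieTranslate_mul (g h : G) (N : LieSubmodule k 𝔤 M) :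
    lieTranslate hρ (g * h) N = lieTranslate hρ g (lieTranslate hρ h N) := by
  ext m
  simp [mem_lieTranslate]

/-- The action of `G` on the lattice of Lie submodules by translation. -/
def lieTranslateHom : G →* (LieSubmodule k 𝔤 M ≃o LieSubmodule k 𝔤 M) where
  toFun g := Equiv.toOrderIso
    { toFun := lieTranslate hρ g
      invFun := lieTranslate hρ g⁻¹
      left_inv := fun N => by rw [← lieTranslate_mul, inv_mul_cancel, lieTranslate_one]
      right_inv := fun N => by rw [← lieTranslate_mul, mul_inv_cancel, lieTranslate_one] }
    (lieTranslate_mono hρ g) (lieTranslate_mono hρ g⁻¹)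
  map_one' := RelIso.ext (lieTranslate_one hρ)
  map_mul' g h := RelIso.ext (lieTranslate_mul hρ g h)

theorem apply_mem_of_lieTranslate_eq {N : LieSubmodule k 𝔤 M} (hN : ∀ g, lieTranslate hρ g N = N)
    (g : G) {m : M} (hm : m ∈ N) : ρ g m ∈ N := by
  rwa [← hN g, mem_lieTranslate, ρ.inv_self_apply]

variable [LieAlgebra k 𝔤] [LieModule k 𝔤 M]
include hρ

theorem averageMap_linHom_lie [Fintype G] [Invertible (Fintype.card G : k)] (f : M →ₗ⁅k,𝔤⁆ M)
    (x : 𝔤) (m : M) :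
    (ρ.linHom ρ).averageMap f ⁅x, m⁆ = ⁅x, (ρ.linHom ρ).averageMap f m⁆ := by
  have apply_lie_inv (g : G) (m : M) : ρ g ⁅σ g⁻¹ x, m⁆ = ⁅x, ρ g m⁆ := by
    rw [← ρ.self_inv_apply g ⁅x, ρ g m⁆, hρ g⁻¹, ρ.inv_self_apply]
  simp_rw [averageMap_linHom_apply, lie_smul, lie_sum, hρ _ x, LieModuleHom.coe_toLinearMap,
    LieModuleHom.map_lie, apply_lie_inv]

theorem exists_stable_isCompl [Finite G] (hG : IsUnit (Nat.card G : k)) {N N' : LieSubmodule k 𝔤 M}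
    (h : IsCompl N N') (hN : ∀ g, ∀ m ∈ N, ρ g m ∈ N) :
    ∃ K : LieSubmodule k 𝔤 M, (∀ g, ∀ m ∈ K, ρ g m ∈ K) ∧ IsCompl N K := by
  have := Fintype.ofFinite G
  have : Invertible (Fintype.card G : k) := (Nat.card_eq_fintype_card (α := G) ▸ hG).invertible
  obtain ⟨f, hf⟩ := exists_lieModuleHom_isProj_of_isCompl h
  let P : M →ₗ⁅k,𝔤⁆ M :=
    { (ρ.linHom ρ).averageMap f with map_lie' := averageMap_linHom_lie hρ f _ _ }
  refine ⟨P.ker, fun g m hm => ?_, ?_⟩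
  · have hcomm : P (ρ g m) = ρ g (P m) :=
      (isIntertwiningMap_averageMap_linHom ρ (f : M →ₗ[k] M)).isIntertwining g m
    rw [LieModuleHom.mem_ker, hcomm, LieModuleHom.mem_ker.1 hm, map_zero]
  · exact LieSubmodule.isCompl_toSubmodule.1 (isProj_averageMap_linHom hN hf).isCompl

theorem semisimple_restriction_iff_general [Finite G] (hG : IsUnit (Nat.card G : k)) :
    (∀ N : LieSubmodule k 𝔤 M, ∃ N' : LieSubmodule k 𝔤 M, IsCompl N N') ↔
    (∀ N : LieSubmodule k 𝔤 M, (∀ g, ∀ m ∈ N, ρ g m ∈ N) →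
      ∃ N' : LieSubmodule k 𝔤 M, (∀ g, ∀ m ∈ N', ρ g m ∈ N') ∧ IsCompl N N') := by
  constructor
  · intro hM N hN
    obtain ⟨N', hN'⟩ := hM N
    exact exists_stable_isCompl hρ hG hN' hN
  · intro hM
    have hfixed (N : LieSubmodule k 𝔤 M) (hN : ∀ g, lieTranslateHom hρ g N = N) :
        IsComplemented N := by
      obtain ⟨N', -, hN'⟩ := hM N fun g _ => apply_mem_of_lieTranslate_eq hρ hN g
      exact ⟨N', hN'⟩
    exact (complementedLattice_of_forall_fixed_isComplemented hfixed).exists_isCompl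

end LieSubmodule

/-- Lemma "restrss": let a finite group `G` act on a Lie algebra `𝔤` by automorphisms
and let `M` be a module over the semidirect product `kG ⋉ U𝔤`, i.e. a Lie module over
`𝔤` with a compatible linear `G`-action. Then `M` is semisimple as a `𝔤`-module
(every Lie submodule has a complement) if and only if it is semisimple as a
`kG ⋉ U𝔤`-module (every `G`-stable Lie submodule has a `G`-stable complement). -/
theorem semisimple_restriction_iff
    (k : Type*) [Field k] [CharZero k]
    (𝔤 : Type*) [LieRing 𝔤] [LieAlgebra k 𝔤]
    (M : Type*) [AddCommGroup M] [Module k M] [LieRingModule 𝔤 M] [LieModule k 𝔤 M]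
    [FiniteDimensional k M]
    (G : Type*) [Group G] [Finite G]
    (σ : G →* (𝔤 →ₗ[k] 𝔤)ˣ)
    (hσ : ∀ (g : G) (x y : 𝔤),
      ((σ g : (𝔤 →ₗ[k] 𝔤)ˣ) : 𝔤 →ₗ[k] 𝔤) ⁅x, y⁆
        = ⁅((σ g : (𝔤 →ₗ[k] 𝔤)ˣ) : 𝔤 →ₗ[k] 𝔤) x,
           ((σ g : (𝔤 →ₗ[k] 𝔤)ˣ) : 𝔤 →ₗ[k] 𝔤) y⁆)
    (π : G →* (M →ₗ[k] M)ˣ)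
    (hcompat : ∀ (g : G) (x : 𝔤) (m : M),
      ((π g : (M →ₗ[k] M)ˣ) : M →ₗ[k] M) ⁅x, m⁆
        = ⁅((σ g : (𝔤 →ₗ[k] 𝔤)ˣ) : 𝔤 →ₗ[k] 𝔤) x,
           ((π g : (M →ₗ[k] M)ˣ) : M →ₗ[k] M) m⁆) :
    (∀ N : LieSubmodule k 𝔤 M, ∃ N' : LieSubmodule k 𝔤 M, IsCompl N N') ↔
    (∀ N : LieSubmodule k 𝔤 M,
      (∀ g : G, ∀ m ∈ N, ((π g : (M →ₗ[k] M)ˣ) : M →ₗ[k] M) m ∈ N) →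
      ∃ N' : LieSubmodule k 𝔤 M,
        (∀ g : G, ∀ m ∈ N', ((π g : (M →ₗ[k] M)ˣ) : M →ₗ[k] M) m ∈ N') ∧
        IsCompl N N') :=
  semisimple_restriction_iff_general (ρ := (Units.coeHom _).comp π) hcompat
    (Nat.cast_ne_zero.2 Nat.card_pos.ne').isUnit
end

section
/- Let k be a field of characteristic 0 and V a finite-dimensional k-vector space. Let s, t ∈ End_k(V) satisfy: s ∘ s = id; s ∘ t = t ∘ s; V admits a basis of eigenvectors of t, and the finite set of eigenvalues of t, regarded inside k viewed as a ℚ-vector space, is affinely independent over ℚ (the eigenvalues form a simplex); and s belongs to the k-subalgebra of End_k(V) generated by t. Then for all natural numbers p and q, on the space W = (⊗^p V) ⊗ (⊗^q V*) — the p-th tensor power of V tensored with the q-th tensor power of the dual space V*, all over k — the endomorphism S = (s^{⊗p}) ⊗ ((s*)^{⊗q}), where s* : V* → V* is the dual (transpose) map of s and s^{⊗p} acts by s on every tensor factor, belongs to the k-subalgebra of End_k(W) generated by the single endomorphism T = (Σ_{i=1}^{p} t_{(i)}) ⊗ id + id ⊗ (Σ_{j=1}^{q} (−t*)_{(j)}),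 where t_{(i)} denotes t acting on the i-th factor of ⊗^p V and the identity on all other factors, and (−t*)_{(j)} denotes −t* acting on the j-th factor of ⊗^q V* and the identity on all other factors. (Every derived representation ρ^{⊗p} ⊗ (ρ^∨)^{⊗q} of a simplicial, essentially pure representation of 𝔅₂ is again essentially pure.) -/
open scoped TensorProduct

/-!
Write `s = P(t)`. On a tensor product of eigenvectors `x i` of `t` and `y j` of its transpose, with
eigenvalues `μ (x i)` and `μ (y j)`, the operator `T` acts by `∑ μ (x i) - ∑ μ (y j)`, while `S`
acts by `∏ P(μ (x i)) / ∏ P(μ (y j))`, since `s` is its own inverse. By affine independence over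
`ℚ`, the sum determines the formal difference of the multisets of eigenvalues, hence the quotient of
products, so some polynomial interpolates the eigenvalues of `S` at those of `T`. If `t` has
infinitely many eigenvalues, then `P` is invertible as a polynomial, and `s` is a scalar.
-/

open Module Polynomial

section AffineIndependence

variable {R M E ι κ : Type*} [Ring R] [CharZero R] [AddCommGroup M] [Module R M]
  {v : E → M} [Fintype ι] [Fintype κ]

lemma multiset_eq_of_affineIndependent (hv : AffineIndependent R v) {A B : Multiset E}
    (hcard : A.card = B.card) (hsum : (A.map v).sum = (B.map v).sum) : A = B := by
  classical
  have sum_count {C : Multiset E} (hC : C ⊆ A + B) :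
      ∑ e ∈ (A + B).toFinset, (C.count e : R) = C.card := by
    rw [← Nat.cast_sum, Multiset.sum_count_eq_card fun e he ↦ Multiset.mem_toFinset.2 (hC he)]
  have sum_count_smul {C : Multiset E} (hC : C ⊆ A + B) :
      ∑ e ∈ (A + B).toFinset, (C.count e : R) • v e = (C.map v).sum := by
    simp only [Nat.cast_smul_eq_nsmul]
    rw [Finset.sum_multiset_map_count]
    refine (Finset.sum_subset (Multiset.toFinset_subset.2 hC) fun e _ he ↦ ?_).symm
    rw [Multiset.count_eq_zero_of_notMem (by simpa using he), zero_smul]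
  have hA : A ⊆ A + B := Multiset.subset_of_le (Multiset.le_add_right A B)
  have hB : B ⊆ A + B := Multiset.subset_of_le (Multiset.le_add_left B A)
  have count_eq : ∀ e ∈ (A + B).toFinset, (A.count e : R) = B.count e :=
    hv.eq_of_sum_eq_sum (by rw [sum_count hA, sum_count hB, hcard])
      (by rw [sum_count_smul hA, sum_count_smul hB, hsum])
  ext e
  by_cases he : e ∈ (A + B).toFinset
  · exact Nat.cast_injective (count_eq e he)
  · simp only [Multiset.toFinset_add, Finset.mem_union, Multiset.mem_toFinset, not_or] at he
    rw [Multiset.count_eq_zero_of_notMem he.1, Multiset.count_eq_zero_of_notMem he.2]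

lemma prod_div_prod_eq_of_sum_sub_sum_eq {G : Type*} [CommGroup G] (hv : AffineIndependent R v)
    (f : E → G) {x x' : ι → E} {y y' : κ → E}
    (h : ∑ i, v (x i) - ∑ j, v (y j) = ∑ i, v (x' i) - ∑ j, v (y' j)) :
    (∏ i, f (x i)) / ∏ j, f (y j) = (∏ i, f (x' i)) / ∏ j, f (y' j) := by
  have hmultiset : Finset.univ.val.map x + Finset.univ.val.map y' =
      Finset.univ.val.map x' + Finset.univ.val.map y := by
    refine multiset_eq_of_affineIndependent hv ?_ ?_
    · simp only [Multiset.card_add, Multiset.card_map]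
    · simpa only [Multiset.map_add, Multiset.sum_add, Multiset.map_map] using!
        sub_eq_sub_iff_add_eq_add.1 h
  have hprod := congrArg (fun A ↦ (A.map f).prod) hmultiset
  simp only [Multiset.map_add, Multiset.prod_add, Multiset.map_map] at hprod
  exact div_eq_div_iff_mul_eq_mul.2 hprod

end AffineIndependence

section Eigenspaces

universe uE uV

variable {E : Type uE} {k : Type*} {V : Type uV} [Field k] [AddCommGroup V] [Module k V]

lemma aeval_dualMap {R M : Type*} [CommSemiring R] [AddCommMonoid M] [Module R M] (f : End R M)
    (P : R[X]) : aeval (f.dualMap : End R (Dual R M)) P = (aeval f P : End R M).dualMap := by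
  induction P using Polynomial.induction_on' with
  | add P Q hP hQ => rw [map_add, map_add, hP, hQ]; exact (map_add Dual.transpose _ _).symm
  | monomial n a =>
    have hpow : (f.dualMap : End R (Dual R M)) ^ n = (f ^ n : End R M).dualMap := by
      induction n with
      | zero => rfl
      | succ n ih => rw [pow_succ, ih, pow_succ']; rfl
    ext φ x
    simp [aeval_monomial, hpow]

lemma ker_aeval_nodal (f : End k V) {v : E → k} {s : Finset E} (hv : Set.InjOn v s) :
    LinearMap.ker (aeval f (Lagrange.nodal s v)) = ⨆ e ∈ s, f.eigenspace (v e) := by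
  classical
  induction s using Finset.induction_on with
  | empty => simp [End.one_eq_id]
  | insert e s he ih =>
    have hcoprime : IsCoprime (X - C (v e)) (Lagrange.nodal s v) :=
      IsCoprime.prod_right fun d hd ↦ isCoprime_X_sub_C_of_isUnit_sub
        (sub_ne_zero.2 fun h ↦ ne_of_mem_of_not_mem hd he
          (hv (Finset.mem_insert_of_mem hd) (Finset.mem_insert_self e s) h.symm)).isUnit
    rw [Lagrange.nodal_insert_eq_nodal he, ← sup_ker_aeval_eq_ker_aeval_mul_of_coprime f hcoprime,
      ih (hv.mono (by simp)), Finset.iSup_insert, End.eigenspace_def, map_sub, aeval_X, aeval_C,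
      Algebra.algebraMap_eq_smul_one]

lemma iSup_eigenspace_eq_top_iff_aeval_nodal [Fintype E] (f : End k V) {v : E → k}
    (hv : Function.Injective v) :
    ⨆ e, f.eigenspace (v e) = ⊤ ↔ aeval f (Lagrange.nodal Finset.univ v) = 0 := by
  rw [← LinearMap.ker_eq_top, ker_aeval_nodal f hv.injOn]
  simp only [Finset.mem_univ, iSup_pos]

lemma iSup_eigenspace_dualMap_eq_top [Finite E] {f : End k V} {v : E → k}
    (hv : Function.Injective v) (hf : ⨆ e, f.eigenspace (v e) = ⊤) :
    ⨆ e, End.eigenspace (f.dualMap : End k (Dual k V)) (v e) = ⊤ := by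
  have := Fintype.ofFinite E
  rw [iSup_eigenspace_eq_top_iff_aeval_nodal _ hv] at hf ⊢
  rw [aeval_dualMap, hf]
  exact map_zero Dual.transpose

lemma exists_eigenbasis {f : End k V} {v : E → k} (hv : Function.Injective v)
    (hf : ⨆ e, f.eigenspace (v e) = ⊤) :
    ∃ (I : Type (max uE uV)) (b : Basis I k V) (e : I → E), ∀ i, f (b i) = v (e i) • b i := by
  classical
  have hint := DirectSum.isInternal_submodule_of_iSupIndep_of_iSup_eq_top
    (f.eigenspaces_iSupIndep.comp hv) hf
  exact ⟨_, hint.collectedBasis fun e ↦ Basis.ofVectorSpace k (f.eigenspace (v e)), Sigma.fst,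
    fun i ↦ End.mem_eigenspace_iff.1 (hint.collectedBasis_mem _ i)⟩

lemma eval_eq_of_aeval_eq_of_hasEigenvalue {R M : Type*} [CommRing R] [IsDomain R]
    [AddCommGroup M] [Module R M] [IsTorsionFree R M] {f : End R M} {P Q : R[X]} {μ : R}
    (hPQ : aeval f P = aeval f Q) (hμ : f.HasEigenvalue μ) : P.eval μ = Q.eval μ := by
  obtain ⟨x, hx⟩ := hμ.exists_hasEigenvector
  refine smul_left_injective R hx.2 ?_
  simp only [← End.aeval_apply_of_hasEigenvector hx, hPQ]

end Eigenspaces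

section Polynomials

lemma exists_eval_sum_sub_sum_eq {k E ι κ : Type*} [Field k] [CharZero k] [Finite E] [Fintype ι]
    [Fintype κ] {v : E → k} (hv : AffineIndependent ℚ v) {P Q : k[X]}
    (hPQ : ∀ e, P.eval (v e) * Q.eval (v e) = 1) :
    ∃ F : k[X], ∀ (x : ι → E) (y : κ → E), F.eval (∑ i, v (x i) - ∑ j, v (y j)) =
      (∏ i, P.eval (v (x i))) * ∏ j, Q.eval (v (y j)) := by
  let w (e : E) : kˣ := Units.mkOfMulEqOne _ _ (hPQ e)
  have hw (x : ι → E) (y : κ → E) : (((∏ i, w (x i)) / ∏ j, w (y j) : kˣ) : k) =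
      (∏ i, P.eval (v (x i))) * ∏ j, Q.eval (v (y j)) := by
    rw [div_eq_mul_inv, ← Finset.prod_inv_distrib, Units.val_mul, Units.coe_prod, Units.coe_prod]
    rfl
  obtain ⟨F, hF⟩ := (exists_eval_eq_iff
      (fun z : (ι → E) × (κ → E) ↦ ∑ i, v (z.1 i) - ∑ j, v (z.2 j))
      (fun z ↦ (((∏ i, w (z.1 i)) / ∏ j, w (z.2 j) : kˣ) : k))).2
    fun _ _ h ↦ congrArg Units.val (prod_div_prod_eq_of_sum_sub_sum_eq hv w h)
  exact ⟨F, fun x y ↦ (hF (x, y)).trans (hw x y)⟩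

lemma exists_eq_C_of_infinite_eval_mul_eq_one {R : Type*} [CommRing R] [IsDomain R] {P Q : R[X]}
    (h : Set.Infinite {μ | P.eval μ * Q.eval μ = 1}) : ∃ a c : R, P = C a ∧ Q = C c := by
  have hPQ : P * Q = 1 := eq_of_infinite_eval_eq _ _ <| by
    simpa only [eval_mul, eval_one] using h
  obtain ⟨a, -, ha⟩ := isUnit_iff.1 (IsUnit.of_mul_eq_one Q hPQ)
  obtain ⟨c, -, hc⟩ := isUnit_iff.1 (IsUnit.of_mul_eq_one_right P hPQ)
  exact ⟨a, c, ha.symm, hc.symm⟩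

end Polynomials

section TensorPowers

variable {R M : Type*} [CommSemiring R] [AddCommMonoid M] [Module R M]

/-- The extension `∑ i, f₍ᵢ₎` of an endomorphism `f` of `M` to the tensor power `⨂[R] _ : ι, M` by
the Leibniz rule, where `f₍ᵢ₎` applies `f` in slot `i` and the identity elsewhere. -/
noncomputable def slotSum (ι : Type*) [Fintype ι] [DecidableEq ι] (f : End R M) :
    End R (⨂[R] _ : ι, M) :=
  ∑ i, PiTensorProduct.map (Function.update (fun _ ↦ (LinearMap.id : M →ₗ[R] M)) i f)

/-- The Leibniz extension of a pair of endomorphisms to a product of two tensor powers; the operator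
`T` of the representation `ρ^{⊗p} ⊗ (ρ^∨)^{⊗q}` is the case `f = t`, `g = -t*`. -/
noncomputable def mixedSlotSum {N : Type*} [AddCommMonoid N] [Module R N] (ι κ : Type*) [Fintype ι]
    [DecidableEq ι] [Fintype κ] [DecidableEq κ] (f : End R M) (g : End R N) :
    End R ((⨂[R] _ : ι, M) ⊗[R] (⨂[R] _ : κ, N)) :=
  TensorProduct.map (slotSum ι f) LinearMap.id + TensorProduct.map LinearMap.id (slotSum κ g)

variable {ι : Type*} [Fintype ι] {f : End R M} {x : ι → M} {a : ι → R}

lemma slotSum_tprod_of_apply_eq_smul [DecidableEq ι] (h : ∀ i, f (x i) = a i • x i) :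
    slotSum ι f (PiTensorProduct.tprod R x) = (∑ i, a i) • PiTensorProduct.tprod R x := by
  rw [slotSum, LinearMap.sum_apply, Finset.sum_smul]
  refine Finset.sum_congr rfl fun i _ ↦ ?_
  have happly : (fun j ↦ Function.update (fun _ ↦ (LinearMap.id : M →ₗ[R] M)) i f j (x j)) =
      Function.update x i (a i • x i) := by
    ext j
    obtain rfl | hj := eq_or_ne j i
    · simp [h]
    · simp [hj]
  rw [PiTensorProduct.map_tprod, happly, MultilinearMap.map_update_smul, Function.update_eq_self]

lemma mixedSlotSum_tmul_of_apply_eq_smul [DecidableEq ι] {N κ : Type*} [AddCommMonoid N]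
    [Module R N] [Fintype κ] [DecidableEq κ] {g : End R N} {y : κ → N} {b : κ → R}
    (hf : ∀ i, f (x i) = a i • x i) (hg : ∀ j, g (y j) = b j • y j) :
    mixedSlotSum ι κ f g (PiTensorProduct.tprod R x ⊗ₜ[R] PiTensorProduct.tprod R y) =
      (∑ i, a i + ∑ j, b j) • (PiTensorProduct.tprod R x ⊗ₜ[R] PiTensorProduct.tprod R y) := by
  rw [mixedSlotSum, LinearMap.add_apply, TensorProduct.map_tmul, TensorProduct.map_tmul,
    slotSum_tprod_of_apply_eq_smul hf, slotSum_tprod_of_apply_eq_smul hg, LinearMap.id_apply,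
    LinearMap.id_apply, ← TensorProduct.smul_tmul', TensorProduct.tmul_smul, add_smul]

lemma map_tprod_of_apply_eq_smul (h : ∀ i, f (x i) = a i • x i) :
    PiTensorProduct.map (fun _ ↦ f) (PiTensorProduct.tprod R x) =
      (∏ i, a i) • PiTensorProduct.tprod R x := by
  simp only [PiTensorProduct.map_tprod, h, MultilinearMap.map_smul_univ]

lemma piTensorProduct_map_algebraMap (ι : Type*) [Fintype ι] (c : R) :
    PiTensorProduct.map (fun _ : ι ↦ (algebraMap R (End R M) c : M →ₗ[R] M)) =
      c ^ Fintype.card ι • LinearMap.id := by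
  ext x
  simp [map_tprod_of_apply_eq_smul (a := fun _ ↦ c) (x := x) (f := algebraMap R (End R M) c)
    fun _ ↦ rfl]

end TensorPowers

section EssentialPurity

variable {k V U : Type*} [Field k] [AddCommGroup V] [Module k V] [AddCommGroup U] [Module k U]
  {ι κ : Type*} [Fintype ι] [DecidableEq ι] [Fintype κ] [DecidableEq κ]

lemma map_aeval_tmul_aeval_mem_adjoin [CharZero k] {E : Type*} [Finite E] {v : E → k}
    (hv : AffineIndependent ℚ v) {t : End k V} (ht : ⨆ e, t.eigenspace (v e) = ⊤)
    {u : End k U} (hu : ⨆ e, u.eigenspace (v e) = ⊤) {P Q : k[X]}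
    (hPQ : ∀ e, P.eval (v e) * Q.eval (v e) = 1) :
    TensorProduct.map (PiTensorProduct.map fun _ : ι ↦ aeval t P)
        (PiTensorProduct.map fun _ : κ ↦ aeval u Q) ∈
      Algebra.adjoin k {mixedSlotSum ι κ t (-u)} := by
  obtain ⟨I, b, e, hb⟩ := exists_eigenbasis hv.injective ht
  obtain ⟨J, c, d, hc⟩ := exists_eigenbasis hv.injective hu
  obtain ⟨F, hF⟩ := exists_eval_sum_sub_sum_eq (ι := ι) (κ := κ) hv hPQ
  suffices hF_aeval : TensorProduct.map (PiTensorProduct.map fun _ : ι ↦ aeval t P)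
      (PiTensorProduct.map fun _ : κ ↦ aeval u Q) = aeval _ F from
    hF_aeval ▸ aeval_mem_adjoin_singleton k _
  refine ((Basis.piTensorProduct fun _ ↦ b).tensorProduct
    (Basis.piTensorProduct fun _ ↦ c)).ext fun ⟨x, y⟩ ↦ ?_
  have hc_neg (j : κ) : (-u) (c (y j)) = (-v (d (y j))) • c (y j) := by
    rw [LinearMap.neg_apply, hc, neg_smul]
  have hT := mixedSlotSum_tmul_of_apply_eq_smul (fun i ↦ hb (x i)) hc_neg
  rw [Finset.sum_neg_distrib, ← sub_eq_add_neg] at hT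
  simp only [Basis.tensorProduct_apply, Basis.piTensorProduct_apply]
  rw [End.aeval_apply_of_mem_apply_eq_smul hT, hF (fun i ↦ e (x i)) fun j ↦ d (y j),
    TensorProduct.map_tmul,
    map_tprod_of_apply_eq_smul fun i ↦ End.aeval_apply_of_mem_apply_eq_smul (hb (x i)),
    map_tprod_of_apply_eq_smul fun j ↦ End.aeval_apply_of_mem_apply_eq_smul (hc (y j)),
    TensorProduct.smul_tmul_smul]

theorem derived_representation_essentially_pure_general [CharZero k] {s r t : End k V}
    (hs : s ∈ Algebra.adjoin k {t}) (hr : r ∈ Algebra.adjoin k {t}) (hsr : s * r = 1)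
    (hdiag : ⨆ μ : k, t.eigenspace μ = ⊤)
    (haff : AffineIndependent ℚ (fun μ : {μ : k // t.HasEigenvalue μ} ↦ (μ : k))) :
    TensorProduct.map (PiTensorProduct.map fun _ : ι ↦ s)
        (PiTensorProduct.map fun _ : κ ↦ r.dualMap) ∈
      Algebra.adjoin k {mixedSlotSum ι κ t (-t.dualMap)} := by
  obtain ⟨P, rfl⟩ := Algebra.adjoin_mem_exists_aeval k _ hs
  obtain ⟨Q, rfl⟩ := Algebra.adjoin_mem_exists_aeval k _ hr
  have hPQ {μ : k} (hμ : t.HasEigenvalue μ) : P.eval μ * Q.eval μ = 1 := by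
    rw [← eval_mul, ← eval_one (x := μ)]
    exact eval_eq_of_aeval_eq_of_hasEigenvalue (by rw [map_mul, map_one, hsr]) hμ
  rw [← aeval_dualMap]
  obtain hfin | hinf := Set.finite_or_infinite {μ | t.HasEigenvalue μ}
  · have : Finite {μ // t.HasEigenvalue μ} := hfin
    have hspan : ⨆ μ : {μ // t.HasEigenvalue μ}, t.eigenspace (μ : k) = ⊤ :=
      (iSup_ne_bot_subtype _).trans hdiag
    exact map_aeval_tmul_aeval_mem_adjoin haff hspan
      (iSup_eigenspace_dualMap_eq_top Subtype.val_injective hspan) fun μ ↦ hPQ μ.2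
  · obtain ⟨a, c, rfl, rfl⟩ := exists_eq_C_of_infinite_eval_mul_eq_one (hinf.mono fun _ ↦ hPQ)
    rw [aeval_C, aeval_C, piTensorProduct_map_algebraMap, piTensorProduct_map_algebraMap,
      TensorProduct.map_smul_left, TensorProduct.map_smul_right, TensorProduct.map_id]
    exact Subalgebra.smul_mem _ (Subalgebra.smul_mem _ (one_mem _) _) _

end EssentialPurity

/-- Proposition "simplpure": let `(s, t)` be a simplicial and essentially pure
representation of `𝔅₂` on a finite-dimensional space `V`: `s² = 1`, `st = ts`,
`t` is diagonalizable with eigenvalues forming a simplex over `ℚ` (affinely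
independent), and `s` is a polynomial in `t`. Then every derived representation
`ρ^{⊗p} ⊗ (ρ^∨)^{⊗q}` is essentially pure: the operator
`S = s^{⊗p} ⊗ (s*)^{⊗q}` is a polynomial in the operator
`T = (Σᵢ t₍ᵢ₎) ⊗ 1 + 1 ⊗ (Σⱼ (−t*)₍ⱼ₎)`. -/
theorem derived_representation_essentially_pure
    (k : Type*) [Field k] [CharZero k]
    (V : Type*) [AddCommGroup V] [Module k V] [FiniteDimensional k V]
    (s t : Module.End k V)
    (hs : s * s = 1)
    (hst : s * t = t * s)
    (hdiag : (⨆ μ : k, Module.End.eigenspace t μ) = ⊤)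
    (haff : AffineIndependent ℚ
      (fun μ : {μ : k // Module.End.HasEigenvalue t μ} => (μ : k)))
    (hpure : s ∈ Algebra.adjoin k ({t} : Set (Module.End k V)))
    (p q : ℕ) :
    TensorProduct.map
        (PiTensorProduct.map fun _ : Fin p => (s : V →ₗ[k] V))
        (PiTensorProduct.map fun _ : Fin q => (s : V →ₗ[k] V).dualMap)
      ∈ Algebra.adjoin k
        ({ TensorProduct.map
            (∑ i : Fin p, PiTensorProduct.map
              (Function.update (fun _ : Fin p => (LinearMap.id : V →ₗ[k] V)) i t))
            LinearMap.id
          + TensorProduct.map LinearMap.id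
            (∑ j : Fin q, PiTensorProduct.map
              (Function.update
                (fun _ : Fin q =>
                  (LinearMap.id : Module.Dual k V →ₗ[k] Module.Dual k V))
                j (-(t : V →ₗ[k] V).dualMap))) } :
          Set (Module.End k
            ((⨂[k] _ : Fin p, V) ⊗[k] (⨂[k] _ : Fin q, Module.Dual k V)))) :=
  derived_representation_essentially_pure_general hpure hpure hs hdiag haff
end

section
/- Let k be a field of characteristic 0 and r ≥ 1. For each i ∈ {1, …, r} let V_i be a finite-dimensional k-vector space and s_i, t_i ∈ End_k(V_i) with s_i ∘ s_i = id, s_i ∘ t_i = t_i ∘ s_i, and s_i belonging to the k-subalgebra of End_k(V_i) generated by t_i (so each (s_i, t_i) is an essentially pure representation of 𝔅₂). Then there exists a nonzero polynomial p in r variables over k such that for every α = (α_1, …, α_r) ∈ k^r with α_i ≠ 0 for all i and p(α) ≠ 0, the endomorphism s_1 ⊗ ⋯ ⊗ s_r of V = V_1 ⊗ ⋯ ⊗ V_r belongs to the k-subalgebra of End_k(V) generated by the single endomorphism T_α = Σ_{i=1}^{r} α_i · (t_i)_{(i)}, where (t_i)_{(i)} denotes t_i acting on the i-th tensor factor and the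 identity on all other factors. (For generic α ∈ 𝔾_m(k)^r, the twisted tensor product of essentially pure representations is essentially pure.) -/
open scoped TensorProduct

/-!
Let `K` be an algebraic closure of `k` and let `B` be the commutative algebra generated by the
`τᵢ = (tᵢ)₍ᵢ₎`. A point `x : B →ₐ[k] K` is determined by the tuple `(x τᵢ)ᵢ`, and these tuples form
a finite subset of `K^r`. For generic `α` the linear form `v ↦ ∑ αᵢ vᵢ` is injective on this subset,
so `T = ∑ αᵢ τᵢ` separates the points of `B`. Given any `σ ∈ B`, Lagrange interpolation over `K`
yields a polynomial in `T` with the same value as `σ` at every point, hence differing from `σ` by a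
nilpotent. If `σ` is separable over `k`, Newton's method and the uniqueness of simple roots up to
nilpotents force `σ ∈ K[T]`, and linear algebra descends this to `σ ∈ k[T]`. Each `(sᵢ)₍ᵢ₎` is such
a `σ`, as a root of `X² - 1`, and their product is `s₁ ⊗ ⋯ ⊗ sᵣ`.
-/

section Generically

/-- `P α` holds for generic `α : σ → R`, that is, on the nonvanishing locus of some nonzero
polynomial. Over a finite field this locus may have no rational points. -/
def HoldsGenerically {R σ : Type*} [CommSemiring R] (P : (σ → R) → Prop) : Prop :=
  ∃ p : MvPolynomial σ R, p ≠ 0 ∧ ∀ α, MvPolynomial.eval α p ≠ 0 → P α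

theorem HoldsGenerically.mono {R σ : Type*} [CommSemiring R] {P Q : (σ → R) → Prop}
    (hP : HoldsGenerically P) (hPQ : ∀ α, P α → Q α) : HoldsGenerically Q :=
  let ⟨p, hp, h⟩ := hP
  ⟨p, hp, fun α hα => hPQ α (h α hα)⟩

theorem HoldsGenerically.forall_mem_finset {R σ κ : Type*} [CommRing R] [IsDomain R]
    {S : Finset κ} {P : κ → (σ → R) → Prop} (h : ∀ a ∈ S, HoldsGenerically (P a)) :
    HoldsGenerically fun α => ∀ a ∈ S, P a α := by
  choose! p hp hpP using h
  refine ⟨∏ a ∈ S, p a, Finset.prod_ne_zero_iff.2 hp, fun α hα a ha => hpP a ha α ?_⟩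
  rw [map_prod] at hα
  exact Finset.prod_ne_zero_iff.1 hα a ha

variable {k ι M : Type*} [Field k] [Fintype ι] [AddCommGroup M] [Module k M]

theorem holdsGenerically_sum_smul_ne_zero {v : ι → M} (hv : v ≠ 0) :
    HoldsGenerically fun α : ι → k => ∑ i, α i • v i ≠ 0 := by
  classical
  obtain ⟨i, hi⟩ := Function.ne_iff.1 hv
  obtain ⟨f, hf⟩ := Module.Projective.exists_dual_ne_zero k hi
  refine ⟨∑ j, f (v j) • MvPolynomial.X j, fun h => hf ?_, fun α hα hsum => hα ?_⟩
  · simpa [Pi.single_apply] using congrArg (MvPolynomial.eval (Pi.single i 1)) h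
  · simpa [mul_comm] using congrArg f hsum

theorem holdsGenerically_injOn_sum_smul {S : Set (ι → M)} (hS : S.Finite) :
    HoldsGenerically fun α : ι → k => S.InjOn fun v => ∑ i, α i • v i := by
  classical
  have hdiff : ∀ vw ∈ hS.toFinset.offDiag,
      HoldsGenerically fun α : ι → k => ∑ i, α i • (vw.1 - vw.2) i ≠ 0 := fun vw hvw =>
    holdsGenerically_sum_smul_ne_zero (sub_ne_zero.2 (Finset.mem_offDiag.1 hvw).2.2)
  refine (HoldsGenerically.forall_mem_finset hdiff).mono fun α hα v hv w hw hvw => ?_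
  by_contra hne
  refine hα (v, w) (by simp [hv, hw, hne]) ?_
  simpa [smul_sub, sub_eq_zero] using hvw

end Generically

section Separable

open Polynomial

theorem isSeparable_algHom_apply {k A B : Type*} [Field k] [Ring A] [Algebra k A] [Ring B]
    [Algebra k B] (f : A →ₐ[k] B) {a : A} (ha : IsSeparable k a) : IsSeparable k (f a) :=
  Separable.of_dvd ha <|
    minpoly.dvd k _ (by rw [aeval_algHom_apply, minpoly.aeval, map_zero])

theorem isSeparable_of_mul_self_eq_one {k A : Type*} [Field k] [NeZero (2 : k)] [Ring A]
    [Algebra k A] {a : A} (ha : a * a = 1) : IsSeparable k a :=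
  (separable_X_pow_sub_C (n := 2) 1 (by exact_mod_cast two_ne_zero) one_ne_zero).of_dvd <|
    minpoly.dvd k a (by simp [pow_two, ha])

-- Newton's method lifts `u` to a root of `P` in `A`; uniqueness of the lift in `B` makes it `σ`.
theorem mem_of_isNilpotent_sub_of_separable {R B : Type*} [CommRing R] [CommRing B] [Algebra R B]
    {A : Subalgebra R B} {σ u : B} (hu : u ∈ A) (hσu : IsNilpotent (σ - u))
    {P : R[X]} (hP : P.Separable) (hPσ : aeval σ P = 0) : σ ∈ A := by
  have hroot : IsNilpotent (aeval u P) := by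
    obtain ⟨c, hc⟩ := sub_dvd_eval_sub σ u (P.map (algebraMap R B))
    rw [eval_map_algebraMap, eval_map_algebraMap, hPσ, zero_sub] at hc
    rw [← isNilpotent_neg_iff, hc]
    exact (Commute.all _ _).isNilpotent_mul_right hσu
  have hrootA : IsNilpotent (aeval (⟨u, hu⟩ : A) P) := by
    rwa [← IsNilpotent.map_iff (f := A.val) Subtype.val_injective, ← aeval_algHom_apply]
  have hsimpleA : IsUnit (aeval (⟨u, hu⟩ : A) (derivative P)) := by
    obtain ⟨a, b, hab⟩ := hP
    have hbezout := congrArg (aeval (⟨u, hu⟩ : A)) hab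
    rw [map_add, map_mul, map_mul, map_one, ← eq_sub_iff_add_eq'] at hbezout
    refine isUnit_of_mul_isUnit_right (hbezout ▸ IsNilpotent.isUnit_one_sub ?_)
    exact (Commute.all _ _).isNilpotent_mul_left hrootA
  have hsimple : IsUnit (aeval u (derivative P)) := by
    simpa [← aeval_algHom_apply] using hsimpleA.map A.val
  obtain ⟨w, ⟨huw, hPw⟩, -⟩ := existsUnique_nilpotent_sub_and_aeval_eq_zero hrootA hsimpleA
  have hσw : σ = w := (existsUnique_nilpotent_sub_and_aeval_eq_zero hroot hsimple).unique
    ⟨by rwa [← neg_sub, isNilpotent_neg_iff], hPσ⟩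
    ⟨huw.map A.val, by simpa [← aeval_algHom_apply] using congrArg A.val hPw⟩
  exact hσw ▸ w.2

end Separable

section Points

open Polynomial

theorem isNilpotent_of_forall_algHom_apply_eq_zero {K B : Type*} [Field K] [IsAlgClosed K]
    [CommRing B] [Algebra K B] [Algebra.IsIntegral K B] {b : B} (h : ∀ x : B →ₐ[K] K, x b = 0) :
    IsNilpotent b := by
  refine nilpotent_iff_mem_prime.2 fun P hP => ?_
  let e : K ≃ₐ[K] B ⧸ P :=
    .ofBijective (Algebra.ofId K _) IsAlgClosed.algebraMap_bijective_of_isIntegral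
  simpa [Ideal.Quotient.eq_zero_iff_mem] using h (e.symm.toAlgHom.comp (Ideal.Quotient.mkₐ K P))

theorem exists_mem_adjoin_singleton_isNilpotent_sub {K B : Type*} [Field K] [IsAlgClosed K]
    [CommRing B] [Algebra K B] [Algebra.IsIntegral K B] {T σ : B}
    (h : Function.FactorsThrough (fun x : B →ₐ[K] K => x σ) fun x => x T) :
    ∃ u ∈ Algebra.adjoin K {T}, IsNilpotent (σ - u) := by
  classical
  let G : K[X] := Lagrange.interpolate (minpoly K T).roots.toFinset id
    (Function.extend (fun x : B →ₐ[K] K => x T) (fun x => x σ) 0)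
  have hG (x : B →ₐ[K] K) : G.eval (x T) = x σ := by
    have hxT : x T ∈ (minpoly K T).roots.toFinset := by
      rw [Multiset.mem_toFinset, mem_roots (minpoly.ne_zero (Algebra.IsIntegral.isIntegral T)),
        IsRoot, ← coe_aeval_eq_eval, aeval_algHom_apply, minpoly.aeval, map_zero]
    exact (Lagrange.eval_interpolate_at_node _ Function.injective_id.injOn hxT).trans
      (h.extend_apply 0 x)
  refine ⟨aeval T G, aeval_mem_adjoin_singleton K T,
    isNilpotent_of_forall_algHom_apply_eq_zero (K := K) fun x => ?_⟩
  rw [map_sub, ← aeval_algHom_apply, coe_aeval_eq_eval, hG, sub_self]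

theorem mem_of_one_tmul_mem_baseChange {k K B : Type*} [Field k] [CommSemiring K] [Nontrivial K]
    [Algebra k K] [Ring B] [Algebra k B] {C : Subalgebra k B} {b : B}
    (h : (1 : K) ⊗ₜ[k] b ∈ C.baseChange K) : b ∈ C := by
  by_contra hb
  obtain ⟨f, hfb, hCf⟩ := Submodule.exists_le_ker_of_notMem (p := C.toSubmodule) hb
  have hf : f.baseChange K ∘ₗ
      (Algebra.TensorProduct.map (AlgHom.id K K) C.val).toLinearMap = 0 := by
    ext c
    simpa using congrArg ((1 : K) ⊗ₜ[k] ·) (LinearMap.mem_ker.1 (hCf c.2))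
  obtain ⟨y, hy⟩ := h
  have hfb' : f.baseChange K ((1 : K) ⊗ₜ[k] b) = 0 := hy ▸ LinearMap.congr_fun hf y
  apply hfb
  simpa [← Algebra.algebraMap_eq_smul_one] using congrArg (TensorProduct.rid k K) hfb'

theorem mem_adjoin_singleton_of_isSeparable_of_factorsThrough {k : Type*} (K : Type*) {B : Type*}
    [Field k] [Field K] [IsAlgClosed K] [Algebra k K] [CommRing B] [Algebra k B]
    [Algebra.IsIntegral k B] {T σ : B} (hσ : IsSeparable k σ)
    (h : Function.FactorsThrough (fun x : B →ₐ[k] K => x σ) fun x => x T) :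
    σ ∈ Algebra.adjoin k {T} := by
  refine mem_of_one_tmul_mem_baseChange (K := K) ?_
  obtain ⟨u, hu, hσu⟩ := exists_mem_adjoin_singleton_isNilpotent_sub
    (K := K) (T := (1 : K) ⊗ₜ[k] T) (σ := (1 : K) ⊗ₜ[k] σ) fun x y hxy =>
      h (a := (x.restrictScalars k).comp Algebra.TensorProduct.includeRight)
        (b := (y.restrictScalars k).comp Algebra.TensorProduct.includeRight) hxy
  have hu' : u ∈ (Algebra.adjoin k {T}).baseChange K :=
    Algebra.adjoin_le (Set.singleton_subset_iff.2 <|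
      Subalgebra.tmul_mem_baseChange (Algebra.self_mem_adjoin_singleton k T) 1) hu
  have hroot : aeval ((1 : K) ⊗ₜ[k] σ) (minpoly k σ) = 0 := by
    rw [← Algebra.TensorProduct.includeRight_apply, aeval_algHom_apply, minpoly.aeval, map_zero]
  exact mem_of_isNilpotent_sub_of_separable
    (A := ((Algebra.adjoin k {T}).baseChange K).restrictScalars k) hu' hσu hσ hroot

end Points

section GenericGenerator

open Polynomial
open scoped IsMulCommutative

variable {k ι : Type*} [Field k] [Fintype ι]

theorem holdsGenerically_mem_adjoin_sum_smul_of_adjoin_eq_top {B : Type*} [CommRing B]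
    [Algebra k B] {τ : ι → B} (hτ : ∀ i, IsIntegral k (τ i))
    (htop : Algebra.adjoin k (Set.range τ) = ⊤) :
    HoldsGenerically fun α : ι → k =>
      ∀ σ : B, IsSeparable k σ → σ ∈ Algebra.adjoin k {∑ i, α i • τ i} := by
  have : Algebra.IsIntegral k B := by
    rw [← integralClosure_eq_top_iff, ← top_le_iff, ← htop]
    exact Algebra.adjoin_le (Set.range_subset_iff.2 hτ)
  let K := AlgebraicClosure k
  let Λ : Set (ι → K) := Set.univ.pi fun i => (minpoly k (τ i)).rootSet K
  have hΛ : Λ.Finite := Set.Finite.pi fun i => rootSet_finite _ _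
  have hmem (x : B →ₐ[k] K) : (fun i => x (τ i)) ∈ Λ := fun i _ =>
    mem_rootSet.2 ⟨minpoly.ne_zero (hτ i), by rw [aeval_algHom_apply, minpoly.aeval, map_zero]⟩
  refine (holdsGenerically_injOn_sum_smul hΛ).mono fun α hα σ hσ =>
    mem_adjoin_singleton_of_isSeparable_of_factorsThrough K hσ fun x y hxy => ?_
  have hτxy : (fun i => x (τ i)) = fun i => y (τ i) := hα (hmem x) (hmem y) (by simpa using hxy)
  have hxy' : x = y := AlgHom.ext_of_adjoin_eq_top htop (Set.eqOn_range.2 hτxy)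
  rw [hxy']

theorem holdsGenerically_mem_adjoin_sum_smul {E : Type*} [Ring E] [Algebra k E] {τ : ι → E}
    (hτ : ∀ i, IsIntegral k (τ i)) (hcomm : ∀ i j, Commute (τ i) (τ j)) :
    HoldsGenerically fun α : ι → k => ∀ σ ∈ Algebra.adjoin k (Set.range τ), IsSeparable k σ →
      σ ∈ Algebra.adjoin k {∑ i, α i • τ i} := by
  let B := Algebra.adjoin k (Set.range τ)
  have : IsMulCommutative B := Algebra.isMulCommutative_adjoin k <| by
    rintro _ ⟨i, rfl⟩ _ ⟨j, rfl⟩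
    exact hcomm i j
  let τB (i : ι) : B := ⟨τ i, Algebra.subset_adjoin ⟨i, rfl⟩⟩
  have hτB (i : ι) : IsIntegral k (τB i) :=
    (isIntegral_algHom_iff B.val Subtype.val_injective).1 (hτ i)
  have htop : Algebra.adjoin k (Set.range τB) = ⊤ := by
    rw [← Algebra.adjoin_adjoin_coe_preimage (s := Set.range τ)]
    congr 1
    ext b
    simp [τB, Subtype.ext_iff]
  refine (holdsGenerically_mem_adjoin_sum_smul_of_adjoin_eq_top hτB htop).mono
    fun α hα σ hσB hσ => ?_
  have hσT := hα ⟨σ, hσB⟩ ((isSeparable_map_iff B.val Subtype.val_injective).1 hσ)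
  have hval : B.val (∑ i, α i • τB i) = ∑ i, α i • τ i := by simp [τB]
  rw [← hval, ← AlgHom.map_adjoin_singleton]
  exact Subalgebra.mem_map.2 ⟨⟨σ, hσB⟩, hσT, rfl⟩

end GenericGenerator

section Slot

variable {R ι : Type*} [CommSemiring R] [DecidableEq ι] {V : ι → Type*}
  [∀ i, AddCommMonoid (V i)] [∀ i, Module R (V i)]

/-- The algebra homomorphism `f ↦ f₍ᵢ₎`, where `f₍ᵢ₎` acts as `f` on the `i`-th tensor factor and
as the identity on all others. -/
def slotAlgHom (i : ι) : Module.End R (V i) →ₐ[R] Module.End R (⨂[R] j, V j) :=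
  AlgHom.ofLinearMap
    { toFun f := PiTensorProduct.map (Function.update (fun _ => LinearMap.id) i f)
      map_add' _ _ := PiTensorProduct.map_update_add _ _ _ _
      map_smul' _ _ := PiTensorProduct.map_update_smul _ _ _ _ }
    (map_one (PiTensorProduct.mapMonoidHom.comp (MonoidHom.mulSingle _ i)))
    (map_mul (PiTensorProduct.mapMonoidHom.comp (MonoidHom.mulSingle _ i)))

theorem slotAlgHom_eq_mapMonoidHom_mulSingle (i : ι) (f : Module.End R (V i)) :
    slotAlgHom i f =
      PiTensorProduct.mapMonoidHom (Pi.mulSingle (M := fun j => Module.End R (V j)) i f) :=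
  rfl

theorem commute_slotAlgHom {i j : ι} (hij : i ≠ j) (f : Module.End R (V i))
    (g : Module.End R (V j)) : Commute (slotAlgHom i f) (slotAlgHom j g) := by
  simp only [slotAlgHom_eq_mapMonoidHom_mulSingle]
  exact (Pi.mulSingle_commute (f := fun i => Module.End R (V i)) hij f g).map _

theorem map_mem_of_forall_slotAlgHom_mem [Finite ι]
    {A : Subalgebra R (Module.End R (⨂[R] i, V i))} {f : ∀ i, Module.End R (V i)}
    (h : ∀ i, slotAlgHom i (f i) ∈ A) : PiTensorProduct.map f ∈ A := by
  simp only [slotAlgHom_eq_mapMonoidHom_mulSingle] at h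
  exact Submonoid.pi_mem_of_mulSingle_mem
    (H := A.toSubmonoid.comap PiTensorProduct.mapMonoidHom) f h

end Slot

theorem generic_tensor_product_essentially_pure_general {k ι : Type*} [Field k] [Fintype ι]
    [DecidableEq ι] {V : ι → Type*} [∀ i, AddCommGroup (V i)] [∀ i, Module k (V i)]
    {s t : ∀ i, Module.End k (V i)} (ht : ∀ i, IsIntegral k (t i))
    (hs : ∀ i, IsSeparable k (s i)) (hpure : ∀ i, s i ∈ Algebra.adjoin k {t i}) :
    HoldsGenerically fun α : ι → k =>
      PiTensorProduct.map s ∈ Algebra.adjoin k {∑ i, α i • slotAlgHom i (t i)} := by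
  have hcomm (i j : ι) : Commute (slotAlgHom i (t i)) (slotAlgHom j (t j)) := by
    obtain rfl | hij := eq_or_ne i j
    exacts [.refl _, commute_slotAlgHom hij _ _]
  refine (holdsGenerically_mem_adjoin_sum_smul (fun i => (ht i).map (slotAlgHom i)) hcomm).mono
    fun α hα => map_mem_of_forall_slotAlgHom_mem fun i =>
      hα _ ?_ (isSeparable_algHom_apply _ (hs i))
  have hsi : slotAlgHom i (s i) ∈ Algebra.adjoin k {slotAlgHom i (t i)} := by
    rw [← AlgHom.map_adjoin_singleton]
    exact Subalgebra.mem_map.2 ⟨s i, hpure i, rfl⟩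
  exact Algebra.adjoin_mono (Set.singleton_subset_iff.2 (Set.mem_range_self i)) hsi

/-- Generic essential purity of tensor products: if `(s_i, t_i)` are essentially
pure representations of `𝔅₂` on finite-dimensional spaces `V_i` (`s_i² = 1`,
`s_i t_i = t_i s_i`, and `s_i` a polynomial in `t_i`), then there is a nonzero
polynomial `p` in `r` variables such that for every `α ∈ 𝔾ₘ(k)^r` with `p(α) ≠ 0`,
the operator `s_1 ⊗ ⋯ ⊗ s_r` is a polynomial in the single operator
`T_α = Σᵢ αᵢ · (t_i)₍ᵢ₎` on `V_1 ⊗ ⋯ ⊗ V_r`. -/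
theorem generic_tensor_product_essentially_pure
    (k : Type*) [Field k] [CharZero k]
    (r : ℕ) (hr : 1 ≤ r)
    (V : Fin r → Type*) [∀ i, AddCommGroup (V i)] [∀ i, Module k (V i)]
    [∀ i, FiniteDimensional k (V i)]
    (s t : ∀ i, Module.End k (V i))
    (hs : ∀ i, s i * s i = 1)
    (hst : ∀ i, s i * t i = t i * s i)
    (hpure : ∀ i, s i ∈ Algebra.adjoin k ({t i} : Set (Module.End k (V i)))) :
    ∃ p : MvPolynomial (Fin r) k, p ≠ 0 ∧
      ∀ α : Fin r → k, (∀ i, α i ≠ 0) → MvPolynomial.eval α p ≠ 0 →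
        PiTensorProduct.map (fun i => (s i : V i →ₗ[k] V i))
          ∈ Algebra.adjoin k
            ({∑ i : Fin r, α i •
                PiTensorProduct.map
                  (Function.update (fun j => (LinearMap.id : V j →ₗ[k] V j)) i (t i))} :
              Set (Module.End k (⨂[k] i, V i))) :=
  have ⟨p, hp, h⟩ := generic_tensor_product_essentially_pure_general
    (fun i => Algebra.IsIntegral.isIntegral (t i))
    (fun i => isSeparable_of_mul_self_eq_one (hs i)) hpure
  ⟨p, hp, fun α _ => h α⟩
end

section
/- Let k be a field of characteristic 0, V a k-vector space, π : S_3 → GL_k(V) a group homomorphism where S_3 = Equiv.Perm (Fin 3), and t a family assigning to each pair (i, j) of distinct elements of Fin 3 an endomorphism t i j ∈ End_k(V) with t i j = t j i, satisfying the equivariance π(s) ∘ (t i j) ∘ π(s)⁻¹ = t (s i) (s j) for all s ∈ S_3 and the infinitesimal braid relations [t i j, t i k + t k j] = 0 for pairwise distinct i, j, k. Suppose t 0 1 is a nilpotent transvection: there exist a nonzero vector v ∈ V and a nonzero linear form φ : V → k with φ(v) = 0 such that t 0 1 (x) = φ(x) · v for all x ∈ V. Then [t 0 1, t 1 2] = 0,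 i.e. t 0 1 and t 1 2 commute. -/
theorem conjAct_eq_iff_semiconjBy {k M G : Type*} [CommSemiring k] [AddCommMonoid M] [Module k M]
    [Group G] (π : G →* (Module.End k M)ˣ) (s : G) (x y : Module.End k M) :
    conjAct π s x = y ↔ SemiconjBy (π s : Module.End k M) x y :=
  Units.mul_inv_eq_iff_eq_mul _

/-- An element `a` of a `k`-algebra `R` has rank at most one over `k` if `a R a ⊆ k a`. This is the
property of the endomorphisms `x ↦ φ x • v` that makes sense in any algebra; `a = 0` is allowed. -/
def IsRankLEOne (k : Type*) {R : Type*} [Mul R] [SMul k R] (a : R) : Prop :=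
  ∀ x : R, ∃ c : k, a * x * a = c • a

theorem isRankLEOne_smulRight {k V : Type*} [CommSemiring k] [AddCommMonoid V] [Module k V]
    (φ : V →ₗ[k] k) (v : V) : IsRankLEOne k (φ.smulRight v : Module.End k V) := fun x =>
  ⟨φ (x v), by ext; simp [smul_smul, mul_comm]⟩

theorem smulRight_mul_self_eq_zero {k V : Type*} [CommSemiring k] [AddCommMonoid V] [Module k V]
    {φ : V →ₗ[k] k} {v : V} (hφv : φ v = 0) :
    (φ.smulRight v * φ.smulRight v : Module.End k V) = 0 := by
  ext
  simp [hφv]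

namespace IsRankLEOne

theorem mul_mul_eq_of_semiconjBy {k R : Type*} [CommSemiring k] [Semiring R] [Algebra k R]
    {a x y : R} (ha : IsRankLEOne k a) {u : Rˣ} (hu : Commute (u : R) a)
    (hxy : SemiconjBy (u : R) x y) : a * x * a = a * y * a := by
  obtain ⟨c, hc⟩ := ha x
  have hconj : SemiconjBy (u : R) (a * x * a) (a * y * a) :=
    (hu.semiconjBy.mul_right hxy).mul_right hu
  have hfix : Commute (u : R) (a * x * a) := hc ▸ hu.smul_right c
  exact u.mul_left_inj.mp (hfix.eq.symm.trans hconj.eq)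

section Domain

variable {k : Type*} [CommSemiring k] [IsDomain k]

theorem mul_mul_eq_zero_of_lie_add_eq_zero {R : Type*} [NeZero (2 : k)] [Ring R] [Algebra k R]
    [Module.IsTorsionFree k R] {a b b' : R} (ha : IsRankLEOne k a) (ha_sq : a * a = 0) {u : Rˣ}
    (hu : Commute (u : R) a) (hbb' : SemiconjBy (u : R) b b') (hlie : ⁅a, b + b'⁆ = 0) :
    a * b * a = 0 := by
  have hcomm : a * (b + b') = (b + b') * a := sub_eq_zero.mp hlie
  have htwo : (2 : k) • (a * b * a) = 0 :=
    calc (2 : k) • (a * b * a) = a * b * a + a * b' * a := by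
          rw [two_smul, ← ha.mul_mul_eq_of_semiconjBy hu hbb']
      _ = a * ((b + b') * a) := by noncomm_ring
      _ = 0 := by rw [← hcomm, ← mul_assoc, ha_sq, zero_mul]
  exact (smul_eq_zero.mp htwo).resolve_left two_ne_zero

variable {R : Type*} [Semiring R] [Algebra k R] [Module.IsTorsionFree k R] {a b : R}

theorem mul_mul_eq_zero_of_semiconjBy (ha : IsRankLEOne k a) {u : R} (hab : SemiconjBy u a b)
    (hba : SemiconjBy u b a) (h : a * b * a = 0) : a * u * a = 0 := by
  obtain ⟨c, hc⟩ := ha u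
  have hsq : c • c • a = 0 :=
    calc c • c • a = a * u * a * u * a := by rw [hc, smul_mul_assoc, smul_mul_assoc, hc]
      _ = a * (u * a) * (u * a) := by simp only [mul_assoc]
      _ = a * b * (u * b) * u := by simp only [hab.eq, mul_assoc]
      _ = a * b * a * u * u := by simp only [hba.eq, mul_assoc]
      _ = 0 := by rw [h, zero_mul, zero_mul]
  rw [hc]
  exact (smul_eq_zero.mp hsq).elim (fun hc₀ => by rw [hc₀, zero_smul]) id

theorem mul_eq_zero_and_mul_eq_zero_of_semiconjBy (ha : IsRankLEOne k a) {u : Rˣ}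
    (hab : SemiconjBy (u : R) a b) (hba : SemiconjBy (u : R) b a) (h : a * b * a = 0) :
    a * b = 0 ∧ b * a = 0 := by
  have haua : a * u * a = 0 := ha.mul_mul_eq_zero_of_semiconjBy hab hba h
  constructor
  · rwa [mul_assoc, hab.eq, ← mul_assoc, u.mul_left_eq_zero] at haua
  · rwa [← hba.eq, mul_assoc, u.mul_right_eq_zero] at haua

end Domain

end IsRankLEOne

theorem nilpotent_transvection_commutes_general {k R ι : Type*} [CommSemiring k] [IsDomain k]
    [NeZero (2 : k)] [Ring R] [Algebra k R] [Module.IsTorsionFree k R]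
    (π : Equiv.Perm ι →* Rˣ) (t : ι → ι → R)
    (hsymm : ∀ i j : ι, i ≠ j → t i j = t j i)
    (hequiv : ∀ (s : Equiv.Perm ι) (i j : ι), i ≠ j →
      SemiconjBy (π s : R) (t i j) (t (s i) (s j)))
    (hrel : ∀ i j l : ι, i ≠ j → i ≠ l → j ≠ l → ⁅t i j, t i l + t l j⁆ = 0)
    {i j l : ι} (hij : i ≠ j) (hil : i ≠ l) (hjl : j ≠ l)
    (hrank : IsRankLEOne k (t i j)) (hsq : t i j * t i j = 0) :
    ⁅t i j, t j l⁆ = 0 := by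
  classical
  have hcomm : Commute (π (.swap i j) : R) (t i j) := by
    simpa [← hsymm i j hij, commute_iff_eq, SemiconjBy] using hequiv (.swap i j) i j hij
  have hjl_il : SemiconjBy (π (.swap i j) : R) (t j l) (t i l) := by
    simpa [Equiv.swap_apply_of_ne_of_ne hil.symm hjl.symm] using hequiv (.swap i j) j l hjl
  have hij_jl : SemiconjBy (π (.swap i l) : R) (t i j) (t j l) := by
    simpa [Equiv.swap_apply_of_ne_of_ne hij.symm hjl, hsymm j l hjl] using
      hequiv (.swap i l) i j hij
  have hjl_ij : SemiconjBy (π (.swap i l) : R) (t j l) (t i j) := by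
    simpa [Equiv.swap_apply_of_ne_of_ne hij.symm hjl, hsymm i j hij] using
      hequiv (.swap i l) j l hjl
  have hlie : ⁅t i j, t j l + t i l⁆ = 0 := by
    rw [add_comm, hsymm j l hjl]
    exact hrel i j l hij hil hjl
  have hmul : t i j * t j l * t i j = 0 :=
    hrank.mul_mul_eq_zero_of_lie_add_eq_zero hsq hcomm hjl_il hlie
  obtain ⟨hab, hba⟩ := hrank.mul_eq_zero_and_mul_eq_zero_of_semiconjBy hij_jl hjl_ij hmul
  rw [Ring.lie_def, hab, hba, sub_zero]

/-- Lemma on nilpotent transvections: if, in a representation of the infinitesimal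
braid algebra `𝔅₃`, the image of `t₁₂` is a nilpotent transvection
`x ↦ φ(x)·v` with `φ(v) = 0`, then `[t₁₂, t₂₃] = 0` (i.e. the representation of the
infinitesimal pure braid Lie algebra `𝒯₃` is commutative). -/
theorem nilpotent_transvection_commutes
    (k : Type*) [Field k] [CharZero k]
    (V : Type*) [AddCommGroup V] [Module k V]
    (π : Equiv.Perm (Fin 3) →* (Module.End k V)ˣ)
    (t : Fin 3 → Fin 3 → Module.End k V)
    (hsymm : ∀ i j : Fin 3, i ≠ j → t i j = t j i)
    (hequiv : ∀ (s : Equiv.Perm (Fin 3)) (i j : Fin 3), i ≠ j →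
      conjAct π s (t i j) = t (s i) (s j))
    (hrel : ∀ i j l : Fin 3, i ≠ j → i ≠ l → j ≠ l → ⁅t i j, t i l + t l j⁆ = 0)
    (v : V) (hv : v ≠ 0)
    (φ : V →ₗ[k] k) (hφ : φ ≠ 0) (hφv : φ v = 0)
    (ht : ∀ x : V, t 0 1 x = φ x • v) :
    ⁅t 0 1, t 1 2⁆ = 0 := by
  have ht01 : t 0 1 = φ.smulRight v := LinearMap.ext ht
  exact nilpotent_transvection_commutes_general (k := k) π t hsymm
    (fun s i j hij => (conjAct_eq_iff_semiconjBy π s _ _).mp (hequiv s i j hij)) hrel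
    (by decide) (by decide) (by decide)
    (ht01 ▸ isRankLEOne_smulRight φ v) (ht01 ▸ smulRight_mul_self_eq_zero hφv)
end

section
/- Let ℝ((h)) denote the field of formal Laurent series over ℝ (Mathlib: LaurentSeries ℝ), which contains ℝ as constant series and the element h (the series X). Call a Laurent series f convergent if there exists a real number r > 0 such that the family (|coeff_n f| · rⁿ)_{n ∈ ℤ} is summable. Let L be a subfield of ℝ((h)) which contains every real constant and contains h, and which is finitely generated over ℝ: L is the smallest subfield of ℝ((h)) containing all constants together with some finite subset. Then for every finite family a_1, …, a_t of elements of L and every m ∈ ℕ, there exists a ring homomorphism φ : L → ℝ((h)) (automatically an injective field embedding) such that: φ fixes every real constant and φ(h) = h (so φ is an isomorphism over ℝ(h) onto its image); every element of the image of φ is convergent; and for each i, the series φ(a_i) − a_i has vanishing n-th coefficient for every integer n < m (i.e. a_i is congruent to φ(a_i) modulo h^m). -/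
/-- A Laurent series over `ℝ` is convergent if, for some radius `r > 0`, the family
of absolute values of its coefficients rescaled by `rⁿ` is summable. -/
def IsConvergent (f : LaurentSeries ℝ) : Prop :=
  ∃ r : ℝ, 0 < r ∧ Summable fun n : ℤ => |f.coeff n| * r ^ n

/-!
Embeddings of `L` into convergent series are built by adjoining generators one at a time, keeping
them arbitrarily close to the inclusion. The image of an algebraic generator is the root, near it,
of its transported minimal polynomial: the field of convergent series is henselian, because small
roots are fixed points of maps `u ↦ X * Q(u)`, whose truncations have `ℓ¹` norm at most `1` at every
small radius. A transcendental generator may go to any convergent series transcendental over the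
image so far. Such a series exists since the `exp (c * X)`, for `c` in a basis of `ℝ` over `ℚ`, are
algebraically independent, and it can be moved close to the generator by a rational function, as
these are dense.
-/

open Filter Topology Polynomial IntermediateField
open LaurentSeries hiding hasseDeriv hasseDeriv_coeff
open scoped LaurentSeries RatFunc WithZero

/-! ### Convergent power series -/

section TruncNorm

variable {R : Type*} [NormedCommRing R]

/-- The `ℓ¹` norm, at radius `r`, of the truncation of `f` to degrees `< n`; the majorants of
the theory of convergent power series are bounds on it that are uniform in `n`. -/
noncomputable def truncNorm (r : ℝ) (n : ℕ) (f : PowerSeries R) : ℝ :=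
  ∑ i ∈ Finset.range n, ‖PowerSeries.coeff i f‖ * r ^ i

lemma truncNorm_nonneg {r : ℝ} (hr : 0 ≤ r) (n : ℕ) (f : PowerSeries R) :
    0 ≤ truncNorm r n f :=
  Finset.sum_nonneg fun _ _ => by positivity

lemma truncNorm_mono_radius {r s : ℝ} (hr : 0 ≤ r) (hrs : r ≤ s) (n : ℕ) (f : PowerSeries R) :
    truncNorm r n f ≤ truncNorm s n f :=
  Finset.sum_le_sum fun _ _ => by gcongr

lemma truncNorm_add_le {r : ℝ} (hr : 0 ≤ r) (n : ℕ) (f g : PowerSeries R) :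
    truncNorm r n (f + g) ≤ truncNorm r n f + truncNorm r n g := by
  rw [truncNorm, truncNorm, truncNorm, ← Finset.sum_add_distrib]
  refine Finset.sum_le_sum fun i _ => ?_
  rw [map_add, ← add_mul]
  gcongr
  exact norm_add_le _ _

lemma truncNorm_neg (r : ℝ) (n : ℕ) (f : PowerSeries R) :
    truncNorm r n (-f) = truncNorm r n f := by
  simp [truncNorm]

lemma truncNorm_mul_le {r : ℝ} (hr : 0 ≤ r) (n : ℕ) (f g : PowerSeries R) :
    truncNorm r n (f * g) ≤ truncNorm r n f * truncNorm r n g := by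
  set a : ℕ → ℝ := fun i => ‖PowerSeries.coeff i f‖ * r ^ i
  set b : ℕ → ℝ := fun i => ‖PowerSeries.coeff i g‖ * r ^ i
  have ha i : 0 ≤ a i := by positivity
  have hb i : 0 ≤ b i := by positivity
  calc truncNorm r n (f * g)
      ≤ ∑ i ∈ Finset.range n, ∑ j ∈ Finset.range (i + 1), a j * b (i - j) := by
        refine Finset.sum_le_sum fun i _ => ?_
        rw [PowerSeries.coeff_mul, ← Finset.Nat.sum_antidiagonal_eq_sum_range_succ
          (fun j k => a j * b k)]
        grw [norm_sum_le, Finset.sum_mul]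
        refine Finset.sum_le_sum fun p hp => ?_
        have hp : p.1 + p.2 = i := Finset.HasAntidiagonal.mem_antidiagonal.1 hp
        grw [norm_mul_le, ← hp, pow_add, mul_mul_mul_comm]
    _ = ∑ i ∈ Finset.range n, ∑ j ∈ Finset.range (n - i), a i * b j :=
        Finset.sum_range_diag_flip n fun j k => a j * b k
    _ ≤ ∑ i ∈ Finset.range n, ∑ j ∈ Finset.range n, a i * b j := by
        refine Finset.sum_le_sum fun i _ => ?_
        refine Finset.sum_le_sum_of_subset_of_nonneg ?_ fun j _ _ => mul_nonneg (ha i) (hb j)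
        exact Finset.range_subset_range.2 (Nat.sub_le n i)
    _ = truncNorm r n f * truncNorm r n g := (Finset.sum_mul_sum _ _ _ _).symm

lemma truncNorm_mul_pow_le {r : ℝ} (hr : 0 ≤ r) (n : ℕ) (f g : PowerSeries R) (k : ℕ) :
    truncNorm r n (f * g ^ k) ≤ truncNorm r n f * truncNorm r n g ^ k := by
  induction k with
  | zero => simp
  | succ k ih =>
    rw [pow_succ, ← mul_assoc, pow_succ, ← mul_assoc]
    exact (truncNorm_mul_le hr n _ g).trans
      (mul_le_mul_of_nonneg_right ih (truncNorm_nonneg hr n g))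

lemma truncNorm_sum_le {r : ℝ} (hr : 0 ≤ r) (n : ℕ) {ι : Type*} (s : Finset ι)
    (f : ι → PowerSeries R) :
    truncNorm r n (∑ i ∈ s, f i) ≤ ∑ i ∈ s, truncNorm r n (f i) :=
  s.le_sum_of_subadditive _ (by simp [truncNorm]) (truncNorm_add_le hr n) f

lemma truncNorm_succ_X_mul (r : ℝ) (n : ℕ) (f : PowerSeries R) :
    truncNorm r (n + 1) (PowerSeries.X * f) = r * truncNorm r n f := by
  rw [truncNorm, Finset.sum_range_succ']
  simp [truncNorm, Finset.mul_sum, pow_succ', mul_left_comm]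

variable (R) in
/-- The ring of convergent power series, i.e. those with positive radius of convergence. The
condition is phrased as a bound valid at all small radii, so that finitely many convergent
series have a common radius by intersecting filters; see `mem_convergentSubring`. -/
noncomputable def convergentSubring : Subring (PowerSeries R) where
  carrier := {f | ∃ M : ℝ, ∀ᶠ r in 𝓝[>] (0 : ℝ), ∀ n, truncNorm r n f ≤ M}
  zero_mem' := ⟨0, by simp [truncNorm]⟩
  one_mem' := by
    refine ⟨‖(1 : R)‖, .of_forall fun r n => ?_⟩
    cases n <;> simp [truncNorm, Finset.sum_range_succ', PowerSeries.coeff_one]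
  add_mem' := by
    rintro f g ⟨M, hf⟩ ⟨N, hg⟩
    refine ⟨M + N, ?_⟩
    filter_upwards [hf, hg, self_mem_nhdsWithin] with r hf hg (hr : 0 < r) n
    exact (truncNorm_add_le hr.le n f g).trans (add_le_add (hf n) (hg n))
  neg_mem' := by
    rintro f ⟨M, hf⟩
    exact ⟨M, by simpa only [truncNorm_neg] using hf⟩
  mul_mem' := by
    rintro f g ⟨M, hf⟩ ⟨N, hg⟩
    refine ⟨M * N, ?_⟩
    filter_upwards [hf, hg, self_mem_nhdsWithin] with r hf hg (hr : 0 < r) n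
    refine (truncNorm_mul_le hr.le n f g).trans (mul_le_mul (hf n) (hg n) ?_ ?_)
    · exact truncNorm_nonneg hr.le n g
    · exact (truncNorm_nonneg hr.le n f).trans (hf n)

lemma mem_convergentSubring {f : PowerSeries R} :
    f ∈ convergentSubring R ↔
      ∃ r : ℝ, 0 < r ∧ Summable fun n => ‖PowerSeries.coeff n f‖ * r ^ n := by
  constructor
  · rintro ⟨M, hM⟩
    obtain ⟨r, hM, hr : 0 < r⟩ := (hM.and self_mem_nhdsWithin).exists
    exact ⟨r, hr, summable_of_sum_range_le (fun _ => by positivity) hM⟩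
  · rintro ⟨r, hr, hf⟩
    refine ⟨∑' n, ‖PowerSeries.coeff n f‖ * r ^ n, ?_⟩
    filter_upwards [Ioo_mem_nhdsGT hr] with s hs n
    exact (truncNorm_mono_radius hs.1.le hs.2.le n f).trans
      (hf.sum_le_tsum _ fun _ _ => by positivity)

lemma coe_polynomial_mem_convergentSubring (p : Polynomial R) :
    (p : PowerSeries R) ∈ convergentSubring R :=
  mem_convergentSubring.2 ⟨1, one_pos, summable_of_ne_finset_zero (s := p.support) fun n hn => by
    simp [Polynomial.notMem_support_iff.1 hn]⟩

lemma C_mem_convergentSubring (c : R) : PowerSeries.C c ∈ convergentSubring R := by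
  simpa using coe_polynomial_mem_convergentSubring (Polynomial.C c)

lemma X_mem_convergentSubring : PowerSeries.X ∈ convergentSubring R := by
  simpa using coe_polynomial_mem_convergentSubring (Polynomial.X (R := R))

end TruncNorm

/-! ### The equation `u = X * Q(u)` -/

lemma exists_fixedPoint_of_adic_contraction {R : Type*} [CommRing R] (I : Ideal R)
    [IsAdicComplete I R] {Φ : R → R}
    (hΦ : ∀ n : ℕ, ∀ u v : R, u - v ∈ I ^ n → Φ u - Φ v ∈ I ^ (n + 1)) :
    ∃ u, Φ u = u := by
  have step (n : ℕ) : Φ^[n] 0 - Φ^[n + 1] 0 ∈ I ^ n := by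
    induction n with
    | zero => simp
    | succ n ih => simpa only [Function.iterate_succ_apply'] using hΦ n _ _ ih
  have cauchy {m n : ℕ} (hmn : m ≤ n) : Φ^[m] 0 - Φ^[n] 0 ∈ I ^ m := by
    induction n, hmn using Nat.le_induction with
    | base => simp
    | succ n hmn ih =>
      rw [← sub_add_sub_cancel]
      exact add_mem ih (Ideal.pow_le_pow_right hmn (step n))
  obtain ⟨u, hu⟩ := IsPrecomplete.prec (I := I) (M := R) inferInstance (f := fun n => Φ^[n] 0)
    fun hmn => by simpa [SModEq.sub_mem] using cauchy hmn
  replace hu (n : ℕ) : Φ^[n] 0 - u ∈ I ^ n := by simpa [SModEq.sub_mem] using hu n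
  refine ⟨u, eq_of_sub_eq_zero (IsHausdorff.haus (I := I) inferInstance _ fun n => ?_)⟩
  suffices Φ u - u ∈ I ^ n by simpa [SModEq.zero] using this
  have h := hΦ n _ _ (hu n)
  rw [← Function.iterate_succ_apply' Φ n] at h
  rw [← neg_sub, ← sub_sub_sub_cancel_left _ _ (Φ^[n + 1] 0), neg_sub]
  exact Ideal.pow_le_pow_right n.le_succ (sub_mem (hu (n + 1)) h)

lemma exists_powerSeries_eq_X_mul_eval {R : Type*} [CommRing R] (Q : (PowerSeries R)[X]) :
    ∃ u : PowerSeries R, u = PowerSeries.X * Q.eval u := by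
  obtain ⟨u, hu⟩ := exists_fixedPoint_of_adic_contraction
    (Ideal.span {(PowerSeries.X : PowerSeries R)}) (Φ := fun u => PowerSeries.X * Q.eval u)
    fun n u v huv => by
      rw [← mul_sub, pow_succ']
      exact Ideal.mul_mem_mul (Ideal.mem_span_singleton_self _)
        (Ideal.mem_of_dvd _ (Q.sub_dvd_eval_sub u v) huv)
  exact ⟨u, hu.symm⟩

section FixedPoint

variable {R : Type*} [NormedCommRing R]

lemma truncNorm_eval_le {r : ℝ} (hr : 0 ≤ r) {n : ℕ} {Q : (PowerSeries R)[X]} {M : ℕ → ℝ}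
    (hQ : ∀ k ∈ Q.support, truncNorm r n (Q.coeff k) ≤ M k) {u : PowerSeries R}
    (hu : truncNorm r n u ≤ 1) :
    truncNorm r n (Q.eval u) ≤ ∑ k ∈ Q.support, M k := by
  rw [Polynomial.eval_eq_sum, Polynomial.sum]
  refine (truncNorm_sum_le hr n _ _).trans (Finset.sum_le_sum fun k hk => ?_)
  calc truncNorm r n (Q.coeff k * u ^ k)
      ≤ truncNorm r n (Q.coeff k) * truncNorm r n u ^ k := truncNorm_mul_pow_le hr n _ u k
    _ ≤ truncNorm r n (Q.coeff k) := mul_le_of_le_one_right (truncNorm_nonneg hr n _)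
        (pow_le_one₀ (truncNorm_nonneg hr n u) hu)
    _ ≤ M k := hQ k hk

lemma mem_convergentSubring_of_eq_X_mul_eval {Q : (PowerSeries R)[X]}
    (hQ : ∀ k, Q.coeff k ∈ convergentSubring R) {u : PowerSeries R}
    (hu : u = PowerSeries.X * Q.eval u) : u ∈ convergentSubring R := by
  choose M hM using hQ
  have hcoeff : ∀ᶠ r in 𝓝[>] (0 : ℝ), ∀ k ∈ Q.support, ∀ n, truncNorm r n (Q.coeff k) ≤ M k :=
    (Filter.eventually_all_finset _).2 fun k _ => hM k
  have hsmall : ∀ᶠ r in 𝓝[>] (0 : ℝ), r * ∑ k ∈ Q.support, M k ≤ 1 := by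
    have : Tendsto (fun r => r * ∑ k ∈ Q.support, M k) (𝓝 0) (𝓝 0) :=
      Continuous.tendsto' (by fun_prop) _ _ (zero_mul _)
    exact nhdsWithin_le_nhds (this.eventually_le_const one_pos)
  refine ⟨1, ?_⟩
  filter_upwards [hcoeff, hsmall, self_mem_nhdsWithin] with r hcoeff hsmall (hr : 0 < r) n
  induction n with
  | zero => simp [truncNorm]
  | succ n ih =>
    calc truncNorm r (n + 1) u = r * truncNorm r n (Q.eval u) := by
          conv_lhs => rw [hu, truncNorm_succ_X_mul]
      _ ≤ r * ∑ k ∈ Q.support, M k := by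
          gcongr
          exact truncNorm_eval_le hr.le (fun k hk => hcoeff k hk n) ih
      _ ≤ 1 := hsmall

lemma exists_convergent_eq_X_mul_eval (Q : (convergentSubring R)[X]) :
    ∃ u : convergentSubring R, u = ⟨PowerSeries.X, X_mem_convergentSubring⟩ * Q.eval u := by
  obtain ⟨u, hu⟩ := exists_powerSeries_eq_X_mul_eval (Q.map (convergentSubring R).subtype)
  have hmem : u ∈ convergentSubring R :=
    mem_convergentSubring_of_eq_X_mul_eval (fun k => by simp) hu
  lift u to convergentSubring R using hmem
  exact ⟨u, Subtype.ext (hu.trans (congrArg _ (Q.eval_map_apply (convergentSubring R).subtype u)))⟩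

lemma mem_convergentSubring_of_X_mul_mem {f : PowerSeries R}
    (hf : PowerSeries.X * f ∈ convergentSubring R) : f ∈ convergentSubring R := by
  obtain ⟨r, hr, hsum⟩ := mem_convergentSubring.1 hf
  refine mem_convergentSubring.2 ⟨r, hr, ?_⟩
  have := ((summable_nat_add_iff 1).2 hsum).mul_right r⁻¹
  simpa [pow_succ, mul_assoc, hr.ne'] using this

lemma inv_mem_convergentSubring {𝕜 : Type*} [NormedField 𝕜] {f : PowerSeries 𝕜}
    (hf : f ∈ convergentSubring 𝕜) (h0 : PowerSeries.constantCoeff f ≠ 0) :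
    f⁻¹ ∈ convergentSubring 𝕜 := by
  set a := PowerSeries.constantCoeff f
  obtain ⟨g, hg⟩ : PowerSeries.X ∣ f - PowerSeries.C a := by
    simp [PowerSeries.X_dvd_iff, a]
  have hg_mem : -(PowerSeries.C a⁻¹ * g) ∈ convergentSubring 𝕜 :=
    neg_mem <| mul_mem (C_mem_convergentSubring _) <|
      mem_convergentSubring_of_X_mul_mem (hg ▸ sub_mem hf (C_mem_convergentSubring a))
  obtain ⟨⟨u, hu_mem⟩, hu⟩ := exists_convergent_eq_X_mul_eval
    (Polynomial.C ⟨_, hg_mem⟩ * (1 + Polynomial.X))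
  have hinv : f⁻¹ = PowerSeries.C a⁻¹ * (1 + u) := by
    have ha : PowerSeries.C a⁻¹ * PowerSeries.C a = 1 := by
      rw [← map_mul, inv_mul_cancel₀ h0, map_one]
    replace hu : u = -(PowerSeries.X * (PowerSeries.C a⁻¹ * g * (1 + u))) := by
      simpa using congrArg Subtype.val hu
    rw [PowerSeries.inv_eq_iff_mul_eq_one h0, eq_add_of_sub_eq hg]
    linear_combination (1 + u) * ha + hu
  rw [hinv]
  exact mul_mem (C_mem_convergentSubring _) (add_mem (one_mem _) hu_mem)

end FixedPoint

/-! ### The field of convergent Laurent series -/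

lemma isConvergent_coe {f : PowerSeries ℝ} :
    IsConvergent (f : ℝ⸨X⸩) ↔ f ∈ convergentSubring ℝ := by
  rw [mem_convergentSubring]
  refine exists_congr fun r => and_congr_right fun _ => ?_
  rw [← (Nat.cast_injective (R := ℤ)).summable_iff]
  · simp [Function.comp_def]
  · intro n hn
    have : n < 0 := by
      by_contra! h
      exact hn ⟨n.toNat, Int.toNat_of_nonneg h⟩
    simp [PowerSeries.coeff_coe, this]

lemma IsConvergent.single_mul {f : ℝ⸨X⸩} (hf : IsConvergent f) (k : ℤ) :
    IsConvergent (HahnSeries.single k 1 * f) := by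
  obtain ⟨r, hr, hsum⟩ := hf
  refine ⟨r, hr, (Equiv.addRight k).summable_iff.1 ((hsum.mul_right (r ^ k)).congr fun n => ?_)⟩
  simp [HahnSeries.coeff_single_mul_add, zpow_add₀ hr.ne', mul_assoc]

lemma isConvergent_iff_eq_single_mul {f : ℝ⸨X⸩} : IsConvergent f ↔
    ∃ k : ℤ, ∃ g ∈ convergentSubring ℝ, f = HahnSeries.single k 1 * (g : ℝ⸨X⸩) := by
  constructor
  · intro hf
    refine ⟨f.order, f.powerSeriesPart, ?_, (single_order_mul_powerSeriesPart f).symm⟩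
    rw [← isConvergent_coe, ofPowerSeries_powerSeriesPart]
    exact hf.single_mul _
  · rintro ⟨k, g, hg, rfl⟩
    exact (isConvergent_coe.2 hg).single_mul k

lemma IsConvergent.mul {f g : ℝ⸨X⸩} (hf : IsConvergent f) (hg : IsConvergent g) :
    IsConvergent (f * g) := by
  obtain ⟨k, p, hp, rfl⟩ := isConvergent_iff_eq_single_mul.1 hf
  obtain ⟨l, q, hq, rfl⟩ := isConvergent_iff_eq_single_mul.1 hg
  rw [mul_mul_mul_comm, HahnSeries.single_mul_single, one_mul, ← PowerSeries.coe_mul]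
  exact (isConvergent_coe.2 (mul_mem hp hq)).single_mul _

lemma IsConvergent.add {f g : ℝ⸨X⸩} (hf : IsConvergent f) (hg : IsConvergent g) :
    IsConvergent (f + g) := by
  obtain ⟨k, p, hp, rfl⟩ := isConvergent_iff_eq_single_mul.1 hf
  obtain ⟨l, q, hq, rfl⟩ := isConvergent_iff_eq_single_mul.1 hg
  wlog hkl : k ≤ l generalizing k l p q
  · rw [add_comm]
    exact this l q hq hg k p hp hf (le_of_not_ge hkl)
  obtain ⟨n, rfl⟩ := Int.le.dest hkl
  have : HahnSeries.single k 1 * (p : ℝ⸨X⸩) +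
        HahnSeries.single (k + n : ℤ) 1 * (q : ℝ⸨X⸩) =
      HahnSeries.single k 1 * ((p + PowerSeries.X ^ n * q : PowerSeries ℝ) : ℝ⸨X⸩) := by
    rw [PowerSeries.coe_add, PowerSeries.coe_mul, HahnSeries.ofPowerSeries_X_pow, mul_add,
      ← mul_assoc, HahnSeries.single_mul_single, one_mul]
  rw [this]
  exact (isConvergent_coe.2
    (add_mem hp (mul_mem (pow_mem X_mem_convergentSubring n) hq))).single_mul k

lemma IsConvergent.inv {f : ℝ⸨X⸩} (hf : IsConvergent f) : IsConvergent f⁻¹ := by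
  rcases eq_or_ne f 0 with rfl | h0
  · simpa using hf
  have hunit : PowerSeries.constantCoeff f.powerSeriesPart ≠ 0 := by
    rw [← PowerSeries.coeff_zero_eq_constantCoeff_apply, powerSeriesPart_coeff]
    simpa using HahnSeries.coeff_order_eq_zero.not.2 h0
  have hmem : f.powerSeriesPart ∈ convergentSubring ℝ := by
    rw [← isConvergent_coe, ofPowerSeries_powerSeriesPart]
    exact hf.single_mul _
  have hinv : f⁻¹ = HahnSeries.single (-f.order) 1 *
      ((f.powerSeriesPart⁻¹ : PowerSeries ℝ) : ℝ⸨X⸩) := by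
    refine inv_eq_of_mul_eq_one_right ?_
    conv_lhs => enter [1]; rw [← single_order_mul_powerSeriesPart f]
    rw [mul_mul_mul_comm, HahnSeries.single_mul_single, ← PowerSeries.coe_mul,
      PowerSeries.mul_inv_cancel _ hunit]
    simp
  rw [hinv]
  exact (isConvergent_coe.2 (inv_mem_convergentSubring hmem hunit)).single_mul _

lemma isConvergent_coe_polynomial (p : Polynomial ℝ) :
    IsConvergent ((p : PowerSeries ℝ) : ℝ⸨X⸩) :=
  isConvergent_coe.2 (coe_polynomial_mem_convergentSubring p)

/-- The convergent Laurent series, as a field extension of `ℝ(h)`. -/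
noncomputable def convergentField : IntermediateField ℝ⟮X⟯ ℝ⸨X⸩ where
  carrier := {f | IsConvergent f}
  add_mem' := IsConvergent.add
  mul_mem' := IsConvergent.mul
  inv_mem' _ := IsConvergent.inv
  algebraMap_mem' x := by
    induction x using RatFunc.induction_on with
    | f p q _ =>
      rw [RatFunc.algebraMap_apply_div, div_eq_mul_inv]
      exact (isConvergent_coe_polynomial p).mul (isConvergent_coe_polynomial q).inv

/-! ### Henselian valuations and perturbation of simple roots -/

section Hensel

lemma tendsto_eval₂ {ι A B : Type*} [Semiring A] [Semiring B] [TopologicalSpace B]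
    [IsTopologicalSemiring B] {l : Filter ι} {f : ι → A →+* B} {g : A →+* B} {x : ι → B} {s : B}
    (hf : ∀ a, Tendsto (fun i => f i a) l (𝓝 (g a))) (hx : Tendsto x l (𝓝 s)) (P : A[X]) :
    Tendsto (fun i => P.eval₂ (f i) (x i)) l (𝓝 (P.eval₂ g s)) := by
  simp only [eval₂_eq_sum, Polynomial.sum]
  exact tendsto_finsetSum _ fun k _ => (hf _).mul (hx.pow k)

lemma map_hasseDeriv {A B : Type*} [Semiring A] [Semiring B] (f : A →+* B) (k : ℕ) (P : A[X]) :
    (hasseDeriv k P).map f = hasseDeriv k (P.map f) := by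
  ext n
  simp [hasseDeriv_coeff]

lemma tendsto_coeff_taylor_map {ι A B : Type*} [Semiring A] [Semiring B] [TopologicalSpace B]
    [IsTopologicalSemiring B] {l : Filter ι} {f : ι → A →+* B} {g : A →+* B} {x : ι → B} {s : B}
    (hf : ∀ a, Tendsto (fun i => f i a) l (𝓝 (g a))) (hx : Tendsto x l (𝓝 s)) (P : A[X]) (k : ℕ) :
    Tendsto (fun i => (taylor (x i) (P.map (f i))).coeff k) l
      (𝓝 ((taylor s (P.map g)).coeff k)) := by
  simpa only [taylor_coeff, ← map_hasseDeriv, eval_map] using tendsto_eval₂ hf hx (hasseDeriv k P)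

/-- The linear coefficient of `P` is strictly larger than all the other ones. This is the
situation in which Hensel's lemma yields a root in the maximal ideal. -/
def LinearTermDominates {K Γ₀ : Type*} [Ring K] [LinearOrderedCommMonoidWithZero Γ₀]
    (v : Valuation K Γ₀) (P : K[X]) : Prop :=
  ∀ k ≠ 1, v (P.coeff k) < v (P.coeff 1)

lemma linearTermDominates_comap {K L Γ₀ : Type*} [Ring K] [Ring L]
    [LinearOrderedCommMonoidWithZero Γ₀] {v : Valuation L Γ₀} {f : K →+* L} {P : K[X]} :
    LinearTermDominates (v.comap f) P ↔ LinearTermDominates v (P.map f) := by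
  simp [LinearTermDominates]

/-- Hensel's lemma for `v`, without any monicity or integrality requirement: a polynomial with a
dominant linear term has a root in the maximal ideal. -/
def IsHenselianValuation {K Γ₀ : Type*} [Ring K] [LinearOrderedCommMonoidWithZero Γ₀]
    (v : Valuation K Γ₀) : Prop :=
  ∀ P : K[X], LinearTermDominates v P → ∃ w, v w < 1 ∧ P.IsRoot w

lemma IsHenselianValuation.exists_isRoot_near {K Γ₀ : Type*} [Field K]
    [LinearOrderedCommGroupWithZero Γ₀] {v : Valuation K Γ₀} (hv : IsHenselianValuation v)
    {P : K[X]} {q c : K} (hP : LinearTermDominates v ((taylor q P).comp (C c * X))) :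
    ∃ y, v (y - q) < v c ∧ P.IsRoot y := by
  obtain ⟨w, hw, hroot⟩ := hv _ hP
  have hc : v c ≠ 0 := by
    rintro hc
    simpa [comp_C_mul_X_coeff, hc] using hP 0 zero_ne_one
  refine ⟨c * w + q, ?_, ?_⟩
  · simpa using mul_lt_of_lt_one_right (zero_lt_iff.2 hc) hw
  · simpa [taylor_eval] using hroot

variable {K Γ₀ : Type*} [Field K] [LinearOrderedCommGroupWithZero Γ₀] [Valued K Γ₀]

lemma eventually_valued_lt {ι : Type*} {l : Filter ι} {a b : ι → K} {a' b' : K}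
    (ha : Tendsto a l (𝓝 a')) (hb : Tendsto b l (𝓝 b'))
    (h : Valued.v a' < (Valued.v b' : Γ₀)) :
    ∀ᶠ i in l, Valued.v (a i) < (Valued.v (b i) : Γ₀) := by
  have hball : ∀ᶠ y in 𝓝 a', Valued.v y < (Valued.v b' : Γ₀) := by
    have := Valued.isOpen_ball K (Valued.v.restrict b')
    simp only [Valuation.restrict_lt_iff] at this
    exact this.eventually_mem h
  filter_upwards [ha.eventually hball,
    hb.eventually (Valued.locally_const (zero_le.trans_lt h).ne')] with i hai hbi
  rwa [hbi]

lemma eventually_valued_ball_subset {U : Set K} {s : K} (hU : U ∈ 𝓝 s) :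
    ∀ᶠ c in 𝓝 (0 : K), {y | Valued.v (y - s) < (Valued.v c : Γ₀)} ⊆ U := by
  obtain ⟨γ, hγ⟩ := Valued.mem_nhds.1 hU
  filter_upwards [Valued.mem_nhds_zero.2 ⟨γ, subset_rfl⟩] with c hc y hy
  exact hγ ((Valued.v.restrict_lt_iff.2 hy).trans hc)

lemma eventually_linearTermDominates {ι : Type*} {l : Filter ι} {P : ι → K[X]} {Q : K[X]} {d : ℕ}
    (hdeg : ∀ i, (P i).natDegree ≤ d)
    (hP : ∀ k, Tendsto (fun i => (P i).coeff k) l (𝓝 (Q.coeff k)))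
    (hQ : LinearTermDominates (Valued.v : Valuation K Γ₀) Q) :
    ∀ᶠ i in l, LinearTermDominates (Valued.v : Valuation K Γ₀) (P i) := by
  have hlow : ∀ᶠ i in l, ∀ k ∈ Finset.range (d + 1), k ≠ 1 →
      Valued.v ((P i).coeff k) < (Valued.v ((P i).coeff 1) : Γ₀) :=
    (Filter.eventually_all_finset _).2 fun k _ => eventually_imp_distrib_left.2 fun hk =>
      eventually_valued_lt (hP k) (hP 1) (hQ k hk)
  filter_upwards [hlow, eventually_valued_lt tendsto_const_nhds (hP 1) (hQ 0 zero_ne_one)]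
    with i hlow hpos k hk
  by_cases hkd : k ∈ Finset.range (d + 1)
  · exact hlow k hkd hk
  · rw [coeff_eq_zero_of_natDegree_lt ((hdeg i).trans_lt (by simpa using hkd)), map_zero]
    exact zero_le.trans_lt hpos

lemma eventually_linearTermDominates_taylor {P : K[X]} {s : K} (hroot : P.IsRoot s)
    (hsimple : P.derivative.eval s ≠ 0) :
    ∀ᶠ c in 𝓝[≠] (0 : K),
      LinearTermDominates (Valued.v : Valuation K Γ₀) ((taylor s P).comp (C c * X)) := by
  have hsmall : ∀ᶠ c in 𝓝 (0 : K), ∀ k ∈ Finset.range (P.natDegree + 1), 2 ≤ k →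
      Valued.v ((taylor s P).coeff k * c ^ (k - 1)) < (Valued.v (P.derivative.eval s) : Γ₀) := by
    refine (Filter.eventually_all_finset _).2 fun k _ => eventually_imp_distrib_left.2 fun hk =>
      eventually_valued_lt (a' := 0) (Continuous.tendsto' (by fun_prop) _ _ ?_)
        tendsto_const_nhds ?_
    · simp [show k - 1 ≠ 0 by lia]
    · simpa [zero_lt_iff] using hsimple
  filter_upwards [hsmall.filter_mono nhdsWithin_le_nhds, self_mem_nhdsWithin]
    with c hc (hc0 : c ≠ 0) k hk
  have hvc : (0 : Γ₀) < Valued.v c := by simpa [zero_lt_iff] using hc0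
  have hvd : (0 : Γ₀) < Valued.v (P.derivative.eval s) := by simpa [zero_lt_iff] using hsimple
  simp only [comp_C_mul_X_coeff, taylor_coeff_one, pow_one, map_mul _ (eval _ _)]
  by_cases hkd : k ∈ Finset.range (P.natDegree + 1)
  · obtain rfl | hk2 : k = 0 ∨ 2 ≤ k := by lia
    · simpa [taylor_coeff_zero, hroot.eq_zero] using mul_pos hvd hvc
    · obtain ⟨j, rfl⟩ := Nat.exists_eq_add_of_le' (one_le_two.trans hk2)
      rw [pow_succ, ← mul_assoc, map_mul _ (_ * _)]
      exact mul_lt_mul_of_pos_right (hc _ hkd hk2) hvc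
  · rw [coeff_eq_zero_of_natDegree_lt (by simpa using hkd)]
    simpa using mul_pos hvd hvc

variable {k : Type*} [Field k] [Algebra k K]

lemma eventually_exists_root_mem [(𝓝[≠] (0 : K)).NeBot] (hdense : DenseRange (algebraMap k K))
    (hv : IsHenselianValuation ((Valued.v : Valuation K Γ₀).comap (algebraMap k K)))
    {ι A : Type*} [CommRing A] {l : Filter ι} {f : ι → A →+* k} {g : A →+* K}
    (hf : ∀ a, Tendsto (fun i => algebraMap k K (f i a)) l (𝓝 (g a))) {P : A[X]} {s : K}
    (hroot : P.eval₂ g s = 0) (hsimple : P.derivative.eval₂ g s ≠ 0) {U : Set K} (hU : U ∈ 𝓝 s) :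
    ∀ᶠ i in l, ∃ y : k, algebraMap k K y ∈ U ∧ P.eval₂ (f i) y = 0 := by
  obtain ⟨_, ⟨⟨c, rfl⟩, hc0⟩, hball, hc⟩ := (hdense.sdiff_singleton 0).inter_nhds_nonempty <|
    (eventually_valued_ball_subset hU).and <| eventually_nhdsWithin_iff.1 <|
      eventually_linearTermDominates_taylor (P := P.map g) (s := s)
        (by rwa [IsRoot, eval_map]) (by rwa [derivative_map, eval_map])
  have hnear : ∀ᶠ p in l ×ˢ 𝓝 s, LinearTermDominates (Valued.v : Valuation K Γ₀)
      ((taylor p.2 (P.map ((algebraMap k K).comp (f p.1)))).comp (C (algebraMap k K c) * X)) := by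
    refine eventually_linearTermDominates (d := P.natDegree) (fun p => ?_) (fun k => ?_) (hc hc0)
    · grw [natDegree_comp_le, natDegree_C_mul_le, natDegree_X_le, natDegree_taylor,
        natDegree_map_le, mul_one]
    · simp only [comp_C_mul_X_coeff]
      exact (tendsto_coeff_taylor_map (fun a => (hf a).comp tendsto_fst) tendsto_snd P
        k).mul_const _
  filter_upwards [hnear.curry] with i hi
  obtain ⟨_, ⟨q, rfl⟩, hq, hqs⟩ := hdense.inter_nhds_nonempty <| hi.and <|
    eventually_valued_lt (Γ₀ := Γ₀) (b := fun _ => algebraMap k K c) (b' := algebraMap k K c)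
      (tendsto_id.sub_const s) tendsto_const_nhds (by simpa [zero_lt_iff] using hc0)
  obtain ⟨y, hy, hroot⟩ := hv.exists_isRoot_near (P := P.map (f i)) (q := q) (c := c) <| by
    rw [linearTermDominates_comap]
    simpa only [Polynomial.map_comp, map_taylor, Polynomial.map_map, Polynomial.map_mul, map_C,
      map_X] using hq
  refine ⟨y, hball (?_ : Valued.v (_ - s) < _), by rwa [← eval_map]⟩
  rw [← sub_add_sub_cancel _ (algebraMap k K q)]
  exact Valued.v.map_add_lt (by simpa using hy) hqs

end Hensel

/-! ### Approximating a finitely generated extension -/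

section Approximation

variable {F k K : Type*} [Field F] [Field k] [Field K] [Algebra F k] [Algebra F K]

lemma exists_algHom_adjoin_simple_of_isIntegral {E : IntermediateField F K} {s : K}
    (hs : IsIntegral E s) (φ : E →ₐ[F] k) {y : k} (hy : (minpoly E s).eval₂ (φ : E →+* k) y = 0) :
    ∃ ψ : E⟮s⟯ →ₐ[F] k, ψ.comp (IsScalarTower.toAlgHom F E E⟮s⟯) = φ ∧
      ψ (AdjoinSimple.gen E s) = y := by
  let : Algebra E k := φ.toRingHom.toAlgebra
  have : IsScalarTower F E k := .of_algebraMap_eq fun r => (φ.commutes r).symm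
  have hmem : y ∈ (minpoly E s).aroots k := mem_aroots.2 ⟨minpoly.ne_zero hs, hy⟩
  let χ : E⟮s⟯ →ₐ[E] k := (algHomAdjoinIntegralEquiv E hs).symm ⟨y, hmem⟩
  exact ⟨χ.restrictScalars F, AlgHom.ext χ.commutes,
    algHomAdjoinIntegralEquiv_symm_apply_gen E hs ⟨y, hmem⟩⟩

lemma exists_algHom_adjoin_simple_of_transcendental {E : IntermediateField F K} {s : K}
    (hs : Transcendental E s) (φ : E →ₐ[F] k) {y : k}
    (hy : letI := φ.toRingHom.toAlgebra; Transcendental E y) :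
    ∃ ψ : E⟮s⟯ →ₐ[F] k, ψ.comp (IsScalarTower.toAlgHom F E E⟮s⟯) = φ ∧
      ψ (AdjoinSimple.gen E s) = y := by
  let : Algebra E k := φ.toRingHom.toAlgebra
  have : IsScalarTower F E k := .of_algebraMap_eq fun r => (φ.commutes r).symm
  let e := RatFunc.algEquivOfTranscendental s hs
  let χ : E⟮s⟯ →ₐ[E] k :=
    E⟮y⟯.val.comp ((RatFunc.algEquivOfTranscendental y hy).toAlgHom.comp e.symm.toAlgHom)
  refine ⟨χ.restrictScalars F, AlgHom.ext χ.commutes, ?_⟩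
  have hgen : e.symm (AdjoinSimple.gen E s) = RatFunc.X :=
    e.symm_apply_eq.2 (Subtype.ext (RatFunc.algEquivOfTranscendental_X s hs).symm)
  change (RatFunc.algEquivOfTranscendental y hy (e.symm (AdjoinSimple.gen E s)) : k) = y
  rw [hgen, RatFunc.algEquivOfTranscendental_X]

variable [Algebra k K] [TopologicalSpace K]

/-- The inclusion of `E` into `K` is a pointwise limit, along some nontrivial filter, of
`F`-embeddings of `E` into `k`. -/
def IsApproximable (k : Type*) [Field k] [Algebra F k] [Algebra k K] (E : IntermediateField F K) :
    Prop :=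
  ∃ l : Filter (E →ₐ[F] k), l.NeBot ∧
    ∀ a : E, Tendsto (fun φ => algebraMap k K (φ a)) l (𝓝 (a : K))

lemma isApproximable_bot [IsScalarTower F k K] :
    IsApproximable k (⊥ : IntermediateField F K) := by
  refine ⟨pure ((Algebra.ofId F k).comp (botEquiv F K).toAlgHom), inferInstance, fun a => ?_⟩
  obtain ⟨a, rfl⟩ := (botEquiv F K).symm.surjective a
  refine (tendsto_pure_nhds _ _).mono_right (congrArg 𝓝 ?_).le
  simp [← IsScalarTower.algebraMap_apply]

lemma tendsto_algHom_adjoin_simple [IsTopologicalDivisionRing K] {E : IntermediateField F K}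
    {s : K} {ι : Type*} {l : Filter ι} {ψ : ι → E⟮s⟯ →ₐ[F] k}
    (hE : ∀ a : E, Tendsto (fun i => algebraMap k K (ψ i (algebraMap E E⟮s⟯ a))) l (𝓝 (a : K)))
    (hs : Tendsto (fun i => algebraMap k K (ψ i (AdjoinSimple.gen E s))) l (𝓝 s)) (x : E⟮s⟯) :
    Tendsto (fun i => algebraMap k K (ψ i x)) l (𝓝 (x : K)) := by
  have hpoly (p : E[X]) : Tendsto
      (fun i => algebraMap k K (ψ i (aeval (AdjoinSimple.gen E s) p))) l (𝓝 (aeval s p)) := by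
    refine (tendsto_eval₂ (g := algebraMap E K) (f := fun i =>
      ((algebraMap k K).comp (ψ i : E⟮s⟯ →+* k)).comp (algebraMap E E⟮s⟯)) hE hs p).congr
      fun i => ?_
    exact (hom_eval₂ p (algebraMap E E⟮s⟯) ((algebraMap k K).comp (ψ i : E⟮s⟯ →+* k)) _).symm
  obtain ⟨p, q, hpq⟩ := (mem_adjoin_simple_iff E (x : K)).1 x.2
  have hx : x = aeval (AdjoinSimple.gen E s) p / aeval (AdjoinSimple.gen E s) q :=
    Subtype.ext <| by rw [hpq]; simp [AdjoinSimple.coe_aeval_gen_apply]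
  by_cases hq : aeval s q = 0
  · obtain rfl : x = 0 := Subtype.ext (by simp [hpq, hq])
    simpa using tendsto_const_nhds
  · rw [hpq]
    exact ((hpoly p).div (hpoly q) hq).congr fun i => by simp [hx]

lemma isApproximable_adjoin_simple [IsTopologicalDivisionRing K] {E : IntermediateField F K}
    {s : K} {l : Filter (E →ₐ[F] k)} [l.NeBot]
    (hl : ∀ a : E, Tendsto (fun φ => algebraMap k K (φ a)) l (𝓝 (a : K)))
    (hext : ∀ U ∈ 𝓝 s, ∀ᶠ φ in l, ∃ ψ : E⟮s⟯ →ₐ[F] k,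
      ψ.comp (IsScalarTower.toAlgHom F E E⟮s⟯) = φ ∧
        algebraMap k K (ψ (AdjoinSimple.gen E s)) ∈ U) :
    IsApproximable k (restrictScalars F E⟮s⟯) := by
  let restrict : (E⟮s⟯ →ₐ[F] k) → (E →ₐ[F] k) × K := fun ψ =>
    (ψ.comp (IsScalarTower.toAlgHom F E E⟮s⟯), algebraMap k K (ψ (AdjoinSimple.gen E s)))
  have hrestrict : Tendsto restrict (comap restrict (l ×ˢ 𝓝 s)) (l ×ˢ 𝓝 s) := tendsto_comap
  refine ⟨comap restrict (l ×ˢ 𝓝 s), comap_neBot_iff.2 fun t ht => ?_,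
    tendsto_algHom_adjoin_simple (fun a => (hl a).comp (tendsto_fst.comp hrestrict))
      (tendsto_snd.comp hrestrict)⟩
  obtain ⟨V, hV, U, hU, hVU⟩ := mem_prod_iff.1 ht
  obtain ⟨φ, hφV, ψ, rfl, hψ⟩ := l.nonempty_of_mem (inter_mem hV (hext U hU))
  exact ⟨ψ, hVU ⟨hφV, hψ⟩⟩

end Approximation

section FiniteGeneration

lemma finTrdeg_adjoin_simple (F : Type*) {L : Type*} [Field F] [Field L] [Algebra F L] (x : L) :
    FinTrdeg F F⟮x⟯ := by
  have : Algebra.EssFiniteType F F⟮x⟯ := essFiniteType_iff.2 ⟨{x}, by simp⟩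
  infer_instance

lemma exists_transcendental {F E k : Type*} [Field F] [Field E] [Field k] [Algebra F E]
    [Algebra E k] [Algebra F k] [IsScalarTower F E k] [FinTrdeg F E] (hk : ¬ FinTrdeg F k) :
    ∃ z : k, Transcendental E z := by
  by_contra! h
  have : Algebra.IsAlgebraic E k := ⟨fun z => not_not.1 (h z)⟩
  exact hk (FinTrdeg.trans F E k)

variable {F k K : Type*} [Field F] [Field k] [Field K] [Algebra F k] [Algebra F K] [Algebra k K]
  [IsScalarTower F k K]

lemma exists_algHom_adjoin_simple_mem_of_transcendental [TopologicalSpace K] [ContinuousAdd K]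
    (hdense : DenseRange (algebraMap F K)) (hk : ¬ FinTrdeg F k) {E : IntermediateField F K}
    [FinTrdeg F E] {s : K} (hs : Transcendental E s) (φ : E →ₐ[F] k) {U : Set K} (hU : U ∈ 𝓝 s) :
    ∃ ψ : E⟮s⟯ →ₐ[F] k, ψ.comp (IsScalarTower.toAlgHom F E E⟮s⟯) = φ ∧
      algebraMap k K (ψ (AdjoinSimple.gen E s)) ∈ U := by
  let : Algebra E k := φ.toRingHom.toAlgebra
  have : IsScalarTower F E k := .of_algebraMap_eq fun r => (φ.commutes r).symm
  obtain ⟨z, hz⟩ := exists_transcendental (E := E) hk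
  have hshift : ∀ᶠ q in 𝓝 (s - algebraMap k K z), q + algebraMap k K z ∈ U :=
    (continuous_add_const _).tendsto' _ _ (sub_add_cancel s _) hU
  obtain ⟨_, ⟨q, rfl⟩, hq⟩ := hdense.inter_nhds_nonempty hshift
  have hy : Transcendental E (algebraMap F k q + z) := fun h => hz <| by
    have hqE : IsAlgebraic E (algebraMap F k q) := by
      rw [IsScalarTower.algebraMap_apply F E k]
      exact isAlgebraic_algebraMap _
    simpa using h.sub hqE
  obtain ⟨ψ, hψφ, hψs⟩ := exists_algHom_adjoin_simple_of_transcendental hs φ hy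
  refine ⟨ψ, hψφ, ?_⟩
  rw [hψs, map_add, ← IsScalarTower.algebraMap_apply]
  exact hq

variable {Γ₀ : Type*} [LinearOrderedCommGroupWithZero Γ₀] [Valued K Γ₀]
  [(𝓝[≠] (0 : K)).NeBot] [CharZero F]

lemma eventually_exists_algHom_adjoin_simple_mem_of_isIntegral
    (hdense : DenseRange (algebraMap F K))
    (hv : IsHenselianValuation ((Valued.v : Valuation K Γ₀).comap (algebraMap k K)))
    {E : IntermediateField F K} {s : K} (hs : IsIntegral E s) {l : Filter (E →ₐ[F] k)}
    (hl : ∀ a : E, Tendsto (fun φ => algebraMap k K (φ a)) l (𝓝 (a : K))) {U : Set K}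
    (hU : U ∈ 𝓝 s) :
    ∀ᶠ φ in l, ∃ ψ : E⟮s⟯ →ₐ[F] k, ψ.comp (IsScalarTower.toAlgHom F E E⟮s⟯) = φ ∧
      algebraMap k K (ψ (AdjoinSimple.gen E s)) ∈ U := by
  have hdense' : DenseRange (algebraMap k K) := hdense.mono <| by
    rintro _ ⟨q, rfl⟩
    exact ⟨algebraMap F k q, (IsScalarTower.algebraMap_apply F k K q).symm⟩
  filter_upwards [eventually_exists_root_mem (g := algebraMap E K)
    (f := fun φ : E →ₐ[F] k => (φ : E →+* k)) hdense' hv hl (minpoly.aeval E s)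
    ((minpoly.irreducible hs).separable.aeval_derivative_ne_zero (minpoly.aeval E s)) hU]
    with φ ⟨y, hyU, hy⟩
  obtain ⟨ψ, hψφ, rfl⟩ := exists_algHom_adjoin_simple_of_isIntegral hs φ hy
  exact ⟨ψ, hψφ, hyU⟩

theorem isApproximable_of_fg (hdense : DenseRange (algebraMap F K)) (hk : ¬ FinTrdeg F k)
    (hv : IsHenselianValuation ((Valued.v : Valuation K Γ₀).comap (algebraMap k K)))
    {E : IntermediateField F K} (hE : E.FG) : IsApproximable k E := by
  suffices FinTrdeg F E ∧ IsApproximable k E from this.2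
  refine induction_on_adjoin_fg (P := fun E => FinTrdeg F E ∧ IsApproximable k E)
    ⟨inferInstance, isApproximable_bot⟩ ?_ _ hE
  rintro E s ⟨_, l, _, hl⟩
  have : FinTrdeg E E⟮s⟯ := finTrdeg_adjoin_simple E s
  refine ⟨FinTrdeg.trans F E E⟮s⟯, isApproximable_adjoin_simple hl fun U hU => ?_⟩
  by_cases hs : IsAlgebraic E s
  · exact eventually_exists_algHom_adjoin_simple_mem_of_isIntegral hdense hv hs.isIntegral hl hU
  · exact .of_forall fun φ =>
      exists_algHom_adjoin_simple_mem_of_transcendental hdense hk hs φ hU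

end FiniteGeneration

/-! ### Hensel's lemma for convergent Laurent series -/

/-- Convergent power series as convergent Laurent series. -/
noncomputable def convergentCoe : convergentSubring ℝ →+* convergentField :=
  ((HahnSeries.ofPowerSeries ℤ ℝ).comp (convergentSubring ℝ).subtype).codRestrict convergentField
    fun f => isConvergent_coe.2 f.2

lemma valuation_coe_X : (Valued.v ((PowerSeries.X : PowerSeries ℝ) : ℝ⸨X⸩) : ℤᵐ⁰) = .exp (-1) := by
  simpa using valuation_X_pow ℝ 1

lemma valuation_div_mul_X_le_one {f g : ℝ⸨X⸩} (hfg : (Valued.v f : ℤᵐ⁰) < Valued.v g) :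
    (Valued.v (f / (g * (PowerSeries.X : PowerSeries ℝ))) : ℤᵐ⁰) ≤ 1 := by
  have hg : (Valued.v g : ℤᵐ⁰) ≠ 0 := (zero_le.trans_lt hfg).ne'
  rw [map_div₀, map_mul, valuation_coe_X]
  refine div_le_one_of_le₀ ?_ zero_le
  rwa [← WithZero.lt_mul_exp_iff_le (by simp [hg]), mul_assoc, ← WithZero.exp_add,
    neg_add_cancel, WithZero.exp_zero, mul_one]

lemma mem_range_convergentCoe {f : convergentField}
    (hf : (Valued.v (f : ℝ⸨X⸩) : ℤᵐ⁰) ≤ 1) : f ∈ Set.range convergentCoe := by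
  obtain ⟨g, hg⟩ := (val_le_one_iff_eq_coe ℝ _).1 hf
  exact ⟨⟨g, isConvergent_coe.1 (hg ▸ f.2)⟩, Subtype.ext hg⟩

theorem isHenselianValuation_convergentField : IsHenselianValuation
    ((Valued.v : Valuation ℝ⸨X⸩ ℤᵐ⁰).comap (algebraMap convergentField ℝ⸨X⸩)) := by
  intro P hP
  have ha : P.coeff 1 ≠ 0 := fun h => by simpa [h] using hP 0 zero_ne_one
  let x : convergentField := convergentCoe ⟨PowerSeries.X, X_mem_convergentSubring⟩
  have hx : (Valued.v (x : ℝ⸨X⸩) : ℤᵐ⁰) = .exp (-1) := valuation_coe_X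
  have hx0 : x ≠ 0 := fun h => by simpa [h] using hx.symm
  -- Divided by `P.coeff 1 * x`, the equation `P(w) = 0` becomes `w = -x * Q(w)` with `Q` integral.
  obtain ⟨Q, hQ⟩ : ∃ Q : (convergentSubring ℝ)[X],
      Q.map convergentCoe = C (P.coeff 1 * x)⁻¹ * P.erase 1 := by
    refine (mem_lifts _).1 ((lifts_iff_coeff_lifts _).2 fun n => mem_range_convergentCoe ?_)
    have hcoeff : (Valued.v ((P.erase 1).coeff n : ℝ⸨X⸩) : ℤᵐ⁰) < Valued.v (P.coeff 1 : ℝ⸨X⸩) := by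
      obtain rfl | hn := eq_or_ne n 1
      · simpa [zero_lt_iff] using ha
      · simpa [erase_ne P hn] using hP n hn
    rw [coeff_C_mul, ← div_eq_inv_mul]
    exact valuation_div_mul_X_le_one hcoeff
  obtain ⟨u, hu⟩ := exists_convergent_eq_X_mul_eval (-Q)
  have hw : convergentCoe u = -(x * convergentCoe (Q.eval u)) := by
    conv_lhs => rw [hu]
    simp [x]
  refine ⟨convergentCoe u, ?_, ?_⟩
  · have : (Valued.v (convergentCoe (Q.eval u) : ℝ⸨X⸩) : ℤᵐ⁰) ≤ 1 :=
      (val_le_one_iff_eq_coe ℝ _).2 ⟨_, rfl⟩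
    calc (Valued.v (convergentCoe u : ℝ⸨X⸩) : ℤᵐ⁰)
        = .exp (-1) * Valued.v (convergentCoe (Q.eval u) : ℝ⸨X⸩) := by simp [hw, hx]
      _ ≤ .exp (-1) * 1 := by gcongr
      _ < 1 := by decide
  · have herase : (P.erase 1).eval (convergentCoe u) =
        P.coeff 1 * x * convergentCoe (Q.eval u) := by
      rw [← eval_map_apply, hQ, eval_mul, eval_C, mul_inv_cancel_left₀ (mul_ne_zero ha hx0)]
    rw [IsRoot, ← P.monomial_add_erase 1, eval_add, eval_monomial, herase, hw]
    ring

/-! ### The transcendence degree of the field of convergent Laurent series -/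

lemma algebraicIndependent_of_linearIndependent_monomials {ι R A : Type*} [CommRing R]
    [CommRing A] [Algebra R A] {x : ι → A}
    (h : LinearIndependent R fun d : ι →₀ ℕ => d.prod fun i n => x i ^ n) :
    AlgebraicIndependent R x := by
  have haeval : (MvPolynomial.aeval x).toLinearMap = (MvPolynomial.basisMonomials ι R).constr R
      (fun d : ι →₀ ℕ => d.prod fun i n => x i ^ n) :=
    (MvPolynomial.basisMonomials ι R).ext fun d => by
      rw [Module.Basis.constr_basis]
      simp [MvPolynomial.aeval_monomial]
  rw [AlgebraicIndependent, ← AlgHom.coe_toLinearMap, haeval]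
  exact Module.Basis.injective_constr_of_linearIndependent _ h

section Exponential

open PowerSeries

lemma derivative_rescale {A : Type*} [CommRing A] (a : A) (f : PowerSeries A) :
    d⁄dX A (rescale a f) = a • rescale a (d⁄dX A f) := by
  ext n
  simp [PowerSeries.coeff_derivative, coeff_rescale, pow_succ']
  ring

lemma linearIndependent_rescale_exp (A : Type*) [Field A] [Algebra ℚ A] :
    LinearIndependent A fun a : A => rescale a (exp A) := by
  refine Module.End.eigenvectors_linearIndependent' (derivative A).toLinearMap id
    Function.injective_id _ fun a => Module.End.hasEigenvector_iff.2 ⟨?_, fun h => ?_⟩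
  · simp [derivative_rescale, derivative_exp]
  · simpa [coeff_rescale] using congrArg (PowerSeries.coeff 0) h

lemma finsuppProd_rescale_exp_pow {ι A : Type*} [CommRing A] [Algebra ℚ A] (c : ι → A)
    (d : ι →₀ ℕ) :
    (d.prod fun i n => rescale (c i) (exp A) ^ n) =
      rescale (Finsupp.linearCombination ℕ c d) (exp A) := by
  induction d using Finsupp.induction_linear with
  | zero => simp
  | add d e hd he =>
    rw [Finsupp.prod_add_index' (fun _ => pow_zero _) (fun _ _ _ => pow_add _ _ _), hd, he,
      exp_mul_exp_eq_exp_add, map_add]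
  | single i n =>
    rw [Finsupp.prod_single_index (h := fun i n => rescale (c i) (exp A) ^ n) (pow_zero _),
      ← map_pow, exp_pow_eq_rescale_exp, rescale_rescale, Finsupp.linearCombination_single,
      nsmul_eq_mul]

lemma algebraicIndependent_rescale_exp {ι A : Type*} [Field A] [Algebra ℚ A]
    {c : ι → A} (hc : LinearIndependent ℕ c) :
    AlgebraicIndependent A fun i => rescale (c i) (exp A) := by
  refine algebraicIndependent_of_linearIndependent_monomials ?_
  simp only [finsuppProd_rescale_exp_pow]
  exact (linearIndependent_rescale_exp A).comp _ hc

end Exponential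

lemma algebraicIndependent_coe_rescale_exp {ι A : Type*} [Field A] [Algebra ℚ A] {c : ι → A}
    (hc : LinearIndependent ℕ c) : AlgebraicIndependent A fun i =>
      ((PowerSeries.rescale (c i) (PowerSeries.exp A) : PowerSeries A) : A⸨X⸩) :=
  (algebraicIndependent_rescale_exp hc).map' (f := { HahnSeries.ofPowerSeries ℤ A with
    commutes' := fun a => by simp [LaurentSeries.algebraMap_apply] })
    HahnSeries.ofPowerSeries_injective

lemma rescale_exp_mem_convergentSubring (a : ℝ) :
    PowerSeries.rescale a (PowerSeries.exp ℝ) ∈ convergentSubring ℝ := by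
  refine mem_convergentSubring.2 ⟨1, one_pos, ?_⟩
  simpa [PowerSeries.coeff_rescale, div_eq_mul_inv] using Real.summable_pow_div_factorial |a|

lemma coe_ratFuncC {F : Type*} [Field F] (c : F) :
    ((RatFunc.C c : F⟮X⟯) : F⸨X⸩) = HahnSeries.C c := by
  rw [← RatFunc.algebraMap_C, ← IsScalarTower.algebraMap_apply F[X] F⟮X⟯ F⸨X⸩]
  simp

lemma finTrdeg_ratFunc (F : Type*) [Field F] : FinTrdeg F F⟮X⟯ := by
  have := Algebra.EssFiniteType.of_isLocalization F⟮X⟯ (nonZeroDivisors F[X])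
  have := Algebra.EssFiniteType.comp F F[X] F⟮X⟯
  infer_instance

lemma not_finTrdeg_convergentField : ¬ FinTrdeg ℝ⟮X⟯ convergentField := by
  intro h
  let : Algebra ℝ convergentField := ((algebraMap ℝ⟮X⟯ convergentField).comp RatFunc.C).toAlgebra
  have : IsScalarTower ℝ ℝ⟮X⟯ convergentField := .of_algebraMap_eq fun _ => rfl
  have : FinTrdeg ℝ ℝ⟮X⟯ := finTrdeg_ratFunc ℝ
  have : FinTrdeg ℝ convergentField := .trans ℝ ℝ⟮X⟯ convergentField
  let b := Module.Basis.ofVectorSpace ℚ ℝ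
  let incl : convergentField →ₐ[ℝ] ℝ⸨X⸩ :=
    { convergentField.val with
      commutes' := fun r => (coe_ratFuncC r).trans (LaurentSeries.algebraMap_apply ℝ r).symm }
  have hb : LinearIndependent ℕ b :=
    b.linearIndependent.restrict_scalars fun m n h => by simpa using h
  have hindep : AlgebraicIndependent ℝ
      fun i => convergentCoe ⟨_, rescale_exp_mem_convergentSubring (b i)⟩ :=
    .of_comp incl (algebraicIndependent_coe_rescale_exp hb)
  have := finite_of_algebraicIndependent hindep
  have : Module.Finite ℚ ℝ := .of_basis b
  have hlt := Module.rank_lt_aleph0 ℚ ℝ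
  rw [Real.rank_rat_real] at hlt
  exact hlt.not_ge Cardinal.aleph0_le_continuum

/-! ### The `X`-adic topology on Laurent series -/

lemma eventually_coeff_sub_eq_zero {K : Type*} [Field K] (f : K⸨X⸩) (m : ℤ) :
    ∀ᶠ g in 𝓝 f, ∀ n < m, (g - f).coeff n = 0 := by
  filter_upwards [eventually_valued_lt (Γ₀ := ℤᵐ⁰) (tendsto_id.sub_const f)
    (tendsto_const_nhds (x := HahnSeries.single m (1 : K))) (by simp [zero_lt_iff])]
    with g hg
  exact (valuation_le_iff_coeff_lt_eq_zero K).1 (hg.le.trans_eq (valuation_single_zpow K m))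

lemma nhdsNE_zero_neBot (K : Type*) [Field K] : (𝓝[≠] (0 : K⸨X⸩)).NeBot := by
  have hpow := Valued.tendsto_zero_pow_of_le_exp_neg_one (valuation_single_zpow K 1).le
  exact (tendsto_nhdsWithin_iff.2 ⟨hpow, .of_forall fun n => by simp⟩).neBot

lemma closure_range_C_union_le_adjoin {F : Type*} [Field F] (S : Set F⸨X⸩) :
    Subfield.closure (Set.range (fun c : F => (HahnSeries.C c : F⸨X⸩)) ∪ S) ≤
      (adjoin F⟮X⟯ S).toSubfield := by
  rw [Subfield.closure_le]
  rintro _ (⟨c, rfl⟩ | hx)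
  · simp only [← coe_ratFuncC]
    exact (adjoin F⟮X⟯ S).algebraMap_mem _
  · exact subset_adjoin F⟮X⟯ S hx

/-- Approximation theorem: every finitely generated subfield `L` of `ℝ((h))`
containing `ℝ(h)` is isomorphic, over `ℝ(h)`, to a subfield of the field of
convergent Laurent series; moreover the embedding can be chosen to agree with the
identity modulo `h^m` on any prescribed finite family of elements of `L`. -/
theorem exists_convergent_embedding
    (L : Subfield (LaurentSeries ℝ))
    (hC : ∀ c : ℝ, (HahnSeries.C c : LaurentSeries ℝ) ∈ L)
    (hX : (HahnSeries.single (1 : ℤ) (1 : ℝ) : LaurentSeries ℝ) ∈ L)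
    (hfg : ∃ S : Finset (LaurentSeries ℝ),
      L = Subfield.closure
        (Set.range (fun c : ℝ => (HahnSeries.C c : LaurentSeries ℝ)) ∪ ↑S))
    (t : ℕ) (a : Fin t → L) (m : ℕ) :
    ∃ φ : L →+* LaurentSeries ℝ,
      (∀ c : ℝ, φ ⟨HahnSeries.C c, hC c⟩ = HahnSeries.C c) ∧
      φ ⟨HahnSeries.single (1 : ℤ) (1 : ℝ), hX⟩ = HahnSeries.single (1 : ℤ) (1 : ℝ) ∧
      (∀ x : L, IsConvergent (φ x)) ∧
      (∀ i : Fin t, ∀ n : ℤ, n < (m : ℤ) →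
        (φ (a i) - ((a i : LaurentSeries ℝ))).coeff n = 0) := by
  obtain ⟨S, hS⟩ := hfg
  let E : IntermediateField ℝ⟮X⟯ ℝ⸨X⸩ := adjoin ℝ⟮X⟯ S
  have hLE : L ≤ E.toSubfield := hS.trans_le (closure_range_C_union_le_adjoin _)
  have := nhdsNE_zero_neBot ℝ
  obtain ⟨l, _, hl⟩ : IsApproximable convergentField E := isApproximable_of_fg coe_range_dense
    not_finTrdeg_convergentField isHenselianValuation_convergentField (fg_adjoin_finset S)
  obtain ⟨φ, hφ⟩ := (eventually_all.2 fun i =>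
    (hl ⟨a i, hLE (a i).2⟩).eventually (eventually_coeff_sub_eq_zero _ (m : ℤ))).exists
  have hfix {f : ℝ⸨X⸩} (hf : f ∈ L) {q : ℝ⟮X⟯} (hq : (q : ℝ⸨X⸩) = f) :
      (φ ⟨f, hLE hf⟩ : ℝ⸨X⸩) = f := by
    subst hq
    exact congrArg Subtype.val (φ.commutes q)
  exact ⟨convergentField.val.toRingHom.comp (φ.toRingHom.comp (Subfield.inclusion hLE)),
    fun c => hfix (hC c) (coe_ratFuncC c), hfix hX RatFunc.coe_X, fun x => (φ _).2, hφ⟩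
end
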